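/- Let n ≥ 2 and let W be a normalized double-well potential, and set κ₀ = ∫_ℝ ( V'(η(s)) η'(s) + W(η(s)) ) s ds, where η is the optimal transition profile. There exist universal constants ε₀ > 0 and C such that for every ε ∈ (0,ε₀): | ψ(ε) − 2 n ω_n^{1/n} − 2 n (n−1) ω_n^{2/n} κ₀ ε | ≤ C ε². -/

import Mathlib

noncomputable section

open MeasureTheory Real Set Filter

abbrev En (n : ℕ) : Type := EuclideanSpace ℝ (Fin n)

/-- Volume of the unit ball of `ℝⁿ`. -/
def ballVol (n : ℕ) : ℝ := (volume (Metric.ball (0 : En n) 1)).toReal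

/-- A normalized double-well potential. -/
structure DoubleWell (W : ℝ → ℝ) : Prop where
  contDiffOn : ContDiffOn ℝ 2 W (Icc 0 1)
  lipschitzSecond : ∃ L : NNReal, LipschitzOnWith L (iteratedDerivWithin 2 W (Icc 0 1)) (Icc 0 1)
  zero_at_zero : W 0 = 0
  zero_at_one : W 1 = 0
  pos_on : ∀ t ∈ Ioo (0:ℝ) 1, 0 < W t
  second_pos_zero : 0 < iteratedDerivWithin 2 W (Icc 0 1) 0
  second_pos_one : 0 < iteratedDerivWithin 2 W (Icc 0 1) 1
  normalized : ∫ t in (0:ℝ)..1, Real.sqrt (W t) = 1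

/-- `Φ(t) = ∫₀ᵗ √W`. -/
def Phi (W : ℝ → ℝ) (t : ℝ) : ℝ := ∫ s in (0:ℝ)..t, Real.sqrt (W s)

/-- `V(t) = Φ(t)^{n/(n-1)}`. -/
def Vpot (n : ℕ) (W : ℝ → ℝ) (t : ℝ) : ℝ := Phi W t ^ ((n : ℝ) / ((n : ℝ) - 1))

/-- Membership in `H¹(ℝⁿ;[0,1])`. -/
structure H1Box (n : ℕ) (u : En n → ℝ) : Prop where
  mem_Icc : ∀ x, u x ∈ Icc (0:ℝ) 1
  diff : Differentiable ℝ u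
  memL2 : MemLp u 2 (volume : Measure (En n))
  grad_memL2 : MemLp (fun x => fderiv ℝ u x) 2 (volume : Measure (En n))

/-- The Allen–Cahn energy. -/
def AC (n : ℕ) (W : ℝ → ℝ) (σ : ℝ) (u : En n → ℝ) : ℝ :=
  σ * (∫ x : En n, ‖fderiv ℝ u x‖ ^ 2) + σ⁻¹ * (∫ x : En n, W (u x))

/-- The isoperimetric-type infimum `Ψ(σ,m)`. -/
def Psi (n : ℕ) (W : ℝ → ℝ) (σ m : ℝ) : ℝ :=
  sInf ((fun u => AC n W σ u) ''
    {u : En n → ℝ | H1Box n u ∧ (∫ x : En n, Vpot n W (u x)) = m})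

/-- `u` is a minimizer of `ψ(ε) = Ψ(ε,1)`. -/
def Minimizes (n : ℕ) (W : ℝ → ℝ) (ε : ℝ) (u : En n → ℝ) : Prop :=
  H1Box n u ∧ (∫ x : En n, Vpot n W (u x)) = 1 ∧ AC n W ε u = Psi n W ε 1

/-- Radial function. -/
def Radial (n : ℕ) (u : En n → ℝ) : Prop :=
  ∃ ζ : ℝ → ℝ, ∀ x : En n, u x = ζ ‖x‖

/-- Radial decreasing function. -/
def RadialDecreasing (n : ℕ) (u : En n → ℝ) : Prop :=
  ∃ ζ : ℝ → ℝ, AntitoneOn ζ (Ici 0) ∧ ∀ x : En n, u x = ζ ‖x‖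

/-- The Laplacian as the trace of the second derivative. -/
def lap (n : ℕ) (u : En n → ℝ) (x : En n) : ℝ :=
  ∑ i : Fin n,
    fderiv ℝ (fun y => fderiv ℝ u y (EuclideanSpace.single i 1)) x (EuclideanSpace.single i 1)

/-- The optimal transition profile `η`. -/
structure TransitionProfile (W : ℝ → ℝ) (η : ℝ → ℝ) : Prop where
  mem : ∀ s, η s ∈ Ioo (0:ℝ) 1
  init : η 0 = 1/2
  ode : ∀ s, HasDerivAt η (-(Real.sqrt (W (η s)))) s
  anti : StrictAnti η
  tendsto_bot : Tendsto η atBot (nhds 1)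
  tendsto_top : Tendsto η atTop (nhds 0)

/-- `d_Φ(u,v)`. -/
def dPhi (n : ℕ) (W : ℝ → ℝ) (u v : En n → ℝ) : ℝ :=
  ∫ x : En n, |Phi W (u x) - Phi W (v x)| ^ ((n : ℝ) / ((n : ℝ) - 1))

/-- `R₀ = ω_n^{-1/n}`. -/
def R0 (n : ℕ) : ℝ := ballVol n ^ (-(1:ℝ) / (n : ℝ))

/-!
*Lower bound.* Young's inequality `ε |∇u|² + ε⁻¹ W(u) ≥ 2 β |∇u| √W(u) + ε⁻¹ (1 - β²) W(u)`, with a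
slope `β` depending on `u`, and the sharp isoperimetric inequality on the level sets of `Φ(u)` (a
consequence of Prékopa–Leindler) bound the energy by a one-dimensional functional of the
distribution of `Φ(u)`. At a ball of radius `R` the optimal profile tilts its slope from `1` to
`1 + O(ε / R)`; choosing this tilt for `β` and using the strict concavity of `v ↦ v ^ (1 - 1 / n)`
makes the bound exact up to `O(ε²)`.

*Upper bound.* The profile `η` is wrapped around a ball as a function of the volume coordinate
`a |x|ⁿ`, centred where the constraint density `-(Φ(η) ^ (n / (n - 1)))'` has its mean, so that the
constraint holds after a rescaling and the energy differs from the perimeter by the distance between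
the energy centre and the volume centre, which is `κ₀`.
-/

open scoped ENNReal NNReal Pointwise Topology

/-! ### The Prékopa–Leindler and Brunn–Minkowski inequalities -/

section PrekopaLeindler

lemma volume_add_volume_le_of_isCompact {K L C : Set ℝ} (hK : IsCompact K) (hL : IsCompact L)
    (hK₀ : K.Nonempty) (hL₀ : L.Nonempty) (hC : ∀ a ∈ K, ∀ b ∈ L, a + b ∈ C) :
    volume K + volume L ≤ volume C := by
  -- The translates `K + min L` and `max K + L` lie in `C` and share only the point `max K + min L`.
  obtain ⟨a, haK, ha⟩ := hK.exists_isGreatest hK₀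
  obtain ⟨b, hbL, hb⟩ := hL.exists_isLeast hL₀
  have volume_left : volume ((fun x => x + b) '' K) = volume K := by
    rw [image_add_right, measure_preimage_add_right]
  have volume_right : volume ((fun x => a + x) '' L) = volume L := by
    rw [image_add_left, measure_preimage_add]
  have aedisjoint : AEDisjoint volume ((fun x => x + b) '' K) ((fun x => a + x) '' L) := by
    refine measure_mono_null (t := {a + b}) ?_ (by simp)
    rintro x ⟨⟨k, hk, rfl⟩, ⟨l, hl, hkl⟩⟩
    have hka := ha hk
    have hbl := hb hl
    simp only [mem_singleton_iff] at hkl ⊢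
    linarith
  have measurable_right : MeasurableSet ((fun x => a + x) '' L) :=
    (hL.image (by fun_prop)).measurableSet
  calc volume K + volume L
      = volume (((fun x => x + b) '' K) ∪ ((fun x => a + x) '' L)) := by
        rw [measure_union₀ measurable_right.nullMeasurableSet aedisjoint, volume_left, volume_right]
    _ ≤ volume C := by
        apply measure_mono
        rintro x (⟨k, hk, rfl⟩ | ⟨l, hl, rfl⟩)
        · exact hC k hk b hbL
        · exact hC a haK l hl

lemma volume_add_volume_le {A B C : Set ℝ} (hA : MeasurableSet A) (hB : MeasurableSet B)
    (hA₀ : A.Nonempty) (hB₀ : B.Nonempty) (hC : ∀ a ∈ A, ∀ b ∈ B, a + b ∈ C) :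
    volume A + volume B ≤ volume C := by
  obtain ⟨a, ha⟩ := hA₀
  obtain ⟨b, hb⟩ := hB₀
  have compact_case : ∀ K, (K ⊆ A ∧ IsCompact K) → ∀ L, (L ⊆ B ∧ IsCompact L) →
      volume K + volume L ≤ volume C := by
    rintro K ⟨hKA, hK⟩ L ⟨hLB, hL⟩
    calc volume K + volume L ≤ volume (insert a K) + volume (insert b L) := by
          gcongr <;> exact subset_insert _ _
      _ ≤ volume C := volume_add_volume_le_of_isCompact (hK.insert a) (hL.insert b)
          (insert_nonempty _ _) (insert_nonempty _ _)
          fun x hx y hy => hC x (insert_subset ha hKA hx) y (insert_subset hb hLB hy)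
  rw [hA.measure_eq_iSup_isCompact, hB.measure_eq_iSup_isCompact]
  simp_rw [iSup_and']
  exact ENNReal.biSup_add_biSup_le' ⟨∅, by simp⟩ ⟨∅, by simp⟩ compact_case

lemma volume_setOf_pos_and_ofReal_lt (a : ℝ≥0∞) :
    volume {t : ℝ | 0 < t ∧ ENNReal.ofReal t < a} = a := by
  rcases eq_or_ne a ⊤ with rfl | ha
  · have : {t : ℝ | 0 < t ∧ ENNReal.ofReal t < ⊤} = Ioi 0 := by ext; simp
    rw [this, Real.volume_Ioi]
  · have : {t : ℝ | 0 < t ∧ ENNReal.ofReal t < a} = Ioo 0 a.toReal := by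
      ext t
      exact and_congr_right fun ht => ENNReal.ofReal_lt_iff_lt_toReal ht.le ha
    rw [this, Real.volume_Ioo, sub_zero, ENNReal.ofReal_toReal ha]

lemma lintegral_eq_lintegral_meas_ofReal_lt {α : Type*} [MeasurableSpace α] (μ : Measure α)
    [SFinite μ] {f : α → ℝ≥0∞} (hf : Measurable f) :
    ∫⁻ x, f x ∂μ = ∫⁻ t in Ioi (0 : ℝ), μ {x | ENNReal.ofReal t < f x} := by
  set S : Set (α × ℝ) := {q | ENNReal.ofReal q.2 < f q.1}
  have hS : MeasurableSet S := measurableSet_lt (by fun_prop) (by fun_prop)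
  calc ∫⁻ x, f x ∂μ = ∫⁻ x, (volume.restrict (Ioi (0 : ℝ))) (Prod.mk x ⁻¹' S) ∂μ := by
        refine lintegral_congr fun x => ?_
        rw [Measure.restrict_apply (measurable_prodMk_left hS), inter_comm,
          ← volume_setOf_pos_and_ofReal_lt (f x)]
        rfl
    _ = (μ.prod (volume.restrict (Ioi (0 : ℝ)))) S := (Measure.prod_apply hS).symm
    _ = ∫⁻ t in Ioi (0 : ℝ), μ {x | ENNReal.ofReal t < f x} := Measure.prod_apply_symm hS

lemma volume_smul_add_volume_smul_le {A B C : Set ℝ} (hA : MeasurableSet A) (hB : MeasurableSet B)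
    (hA₀ : A.Nonempty) (hB₀ : B.Nonempty) {l m : ℝ} (hl : 0 < l) (hm : 0 < m)
    (hC : ∀ a ∈ A, ∀ b ∈ B, l • a + m • b ∈ C) :
    ENNReal.ofReal l * volume A + ENNReal.ofReal m * volume B ≤ volume C := by
  have scaled := volume_add_volume_le (hA.const_smul₀ l) (hB.const_smul₀ m) hA₀.smul_set
    hB₀.smul_set (C := C) (by rintro _ ⟨a, ha, rfl⟩ _ ⟨b, hb, rfl⟩; exact hC a ha b hb)
  simpa only [Measure.addHaar_smul, Module.finrank_self, pow_one, abs_of_pos hl, abs_of_pos hm]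
    using scaled

/- Two functions with the same supremum have nonempty superlevel sets at the same heights, so the
one-dimensional Brunn–Minkowski inequality applies level by level. -/
lemma lintegral_add_lintegral_le_of_iSup_eq {f g h : ℝ → ℝ≥0∞} (hf : Measurable f)
    (hg : Measurable g) (hh : Measurable h) (hfg : ⨆ x, f x = ⨆ x, g x) {l m : ℝ} (hl : 0 < l)
    (hm : 0 < m) (hmin : ∀ x y, min (f x) (g y) ≤ h (l • x + m • y)) :
    ENNReal.ofReal l * (∫⁻ x, f x) + ENNReal.ofReal m * (∫⁻ x, g x) ≤ ∫⁻ x, h x := by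
  have measurable_superlevel (k : ℝ → ℝ≥0∞) :
      Measurable fun t => volume {x | ENNReal.ofReal t < k x} :=
    Antitone.measurable fun s t hst =>
      measure_mono fun x hx => (ENNReal.ofReal_le_ofReal hst).trans_lt hx
  rw [lintegral_eq_lintegral_meas_ofReal_lt volume hf,
    lintegral_eq_lintegral_meas_ofReal_lt volume hg,
    lintegral_eq_lintegral_meas_ofReal_lt volume hh,
    ← lintegral_const_mul' _ _ ENNReal.ofReal_ne_top,
    ← lintegral_const_mul' _ _ ENNReal.ofReal_ne_top,
    ← lintegral_add_left ((measurable_superlevel f).const_mul _)]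
  refine lintegral_mono fun t => ?_
  rcases lt_or_ge (ENNReal.ofReal t) (⨆ x, f x) with ht | ht
  · exact volume_smul_add_volume_smul_le (measurableSet_lt measurable_const hf)
      (measurableSet_lt measurable_const hg) (lt_iSup_iff.1 ht)
      (lt_iSup_iff.1 (ht.trans_eq hfg)) hl hm fun x hx y hy => (lt_min hx hy).trans_le (hmin x y)
  · have f_empty : {x | ENNReal.ofReal t < f x} = ∅ :=
      eq_empty_of_forall_notMem fun x => not_lt.2 ((le_iSup f x).trans ht)
    have g_empty : {x | ENNReal.ofReal t < g x} = ∅ :=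
      eq_empty_of_forall_notMem fun x => not_lt.2 ((le_iSup g x).trans (hfg ▸ ht))
    simp [f_empty, g_empty]

lemma ennreal_geom_mean_le_arith_mean2_weighted {l m : ℝ} (hl : 0 < l) (hm : 0 < m)
    (hlm : l + m = 1) (a b : ℝ≥0∞) :
    a ^ l * b ^ m ≤ ENNReal.ofReal l * a + ENNReal.ofReal m * b := by
  rcases eq_or_ne a ⊤ with rfl | ha
  · simp [ENNReal.mul_top, hl]
  rcases eq_or_ne b ⊤ with rfl | hb
  · simp [ENNReal.mul_top, hm]
  lift a to ℝ≥0 using ha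
  lift b to ℝ≥0 using hb
  have := NNReal.geom_mean_le_arith_mean2_weighted l.toNNReal m.toNNReal a b
    (by rw [← Real.toNNReal_add hl.le hm.le, hlm, Real.toNNReal_one])
  rw [Real.coe_toNNReal l hl.le, Real.coe_toNNReal m hm.le] at this
  rw [← ENNReal.coe_rpow_of_nonneg _ hl.le, ← ENNReal.coe_rpow_of_nonneg _ hm.le,
    ENNReal.ofReal, ENNReal.ofReal]
  exact_mod_cast this

lemma rpow_mul_rpow_of_add_eq_one {l m : ℝ} (hl : 0 < l) (hm : 0 < m) (hlm : l + m = 1)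
    (a : ℝ≥0∞) : a ^ l * a ^ m = a := by
  rw [← ENNReal.rpow_add_of_nonneg _ _ hl.le hm.le, hlm, ENNReal.rpow_one]

lemma min_le_rpow_mul_rpow {l m : ℝ} (hl : 0 < l) (hm : 0 < m) (hlm : l + m = 1) (a b : ℝ≥0∞) :
    min a b ≤ a ^ l * b ^ m := by
  rw [← rpow_mul_rpow_of_add_eq_one hl hm hlm (min a b)]
  gcongr
  · exact min_le_left a b
  · exact min_le_right a b

/-- The Prékopa–Leindler inequality as a property of a measure on a real vector space: it passes
to products and across measure-preserving linear maps, which reduces `ℝⁿ` to the line. -/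
def IsPrekopaLeindler {E : Type*} [AddCommGroup E] [Module ℝ E] [MeasurableSpace E]
    (μ : Measure E) : Prop :=
  ∀ ⦃f g h : E → ℝ≥0∞⦄, Measurable f → Measurable g → Measurable h →
    ∀ ⦃l m : ℝ⦄, 0 < l → 0 < m → l + m = 1 → (∀ x y, f x ^ l * g y ^ m ≤ h (l • x + m • y)) →
      (∫⁻ x, f x ∂μ) ^ l * (∫⁻ x, g x ∂μ) ^ m ≤ ∫⁻ x, h x ∂μ

lemma rpow_lintegral_mul_rpow_lintegral_le_of_iSup_ne_top {f g h : ℝ → ℝ≥0∞} (hf : Measurable f)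
    (hg : Measurable g) (hh : Measurable h) (hf_top : ⨆ x, f x ≠ ⊤) (hg_top : ⨆ x, g x ≠ ⊤)
    {l m : ℝ} (hl : 0 < l) (hm : 0 < m) (hlm : l + m = 1)
    (hfgh : ∀ x y, f x ^ l * g y ^ m ≤ h (l • x + m • y)) :
    (∫⁻ x, f x) ^ l * (∫⁻ x, g x) ^ m ≤ ∫⁻ x, h x := by
  set F := ⨆ x, f x
  set G := ⨆ x, g x
  rcases eq_or_ne F 0 with hF₀ | hF₀
  · simp [ENNReal.iSup_eq_zero.1 hF₀, hl]
  rcases eq_or_ne G 0 with hG₀ | hG₀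
  · simp [ENNReal.iSup_eq_zero.1 hG₀, hm]
  have hFl : F ^ l ≠ ⊤ := ENNReal.rpow_ne_top_of_nonneg hl.le hf_top
  have hGm : G ^ m ≠ ⊤ := ENNReal.rpow_ne_top_of_nonneg hm.le hg_top
  have hFl₀ : F ^ l ≠ 0 := by simp [hF₀, hf_top]
  have hGm₀ : G ^ m ≠ 0 := by simp [hG₀, hg_top]
  have div_rpow_mul_div_rpow (a b : ℝ≥0∞) :
      (a / F) ^ l * (b / G) ^ m = a ^ l * b ^ m / (F ^ l * G ^ m) := by
    rw [ENNReal.div_rpow_of_nonneg _ _ hl.le, ENNReal.div_rpow_of_nonneg _ _ hm.le]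
    simp only [div_eq_mul_inv, ENNReal.mul_inv (Or.inl hFl₀) (Or.inl hFl)]
    ring
  have normalized := lintegral_add_lintegral_le_of_iSup_eq (hf.div_const F) (hg.div_const G)
    (hh.div_const (F ^ l * G ^ m))
    (by rw [← ENNReal.iSup_div, ← ENNReal.iSup_div, ENNReal.div_self hF₀ hf_top,
      ENNReal.div_self hG₀ hg_top]) hl hm
    fun x y => (min_le_rpow_mul_rpow hl hm hlm _ _).trans <| by
      rw [div_rpow_mul_div_rpow]
      gcongr
      exact hfgh x y
  simp only [div_eq_mul_inv, lintegral_mul_const _ hf, lintegral_mul_const _ hg,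
    lintegral_mul_const _ hh] at normalized
  have combined := (ennreal_geom_mean_le_arith_mean2_weighted hl hm hlm _ _).trans normalized
  simp only [← div_eq_mul_inv, div_rpow_mul_div_rpow] at combined
  exact (ENNReal.mul_le_mul_iff_left (ENNReal.inv_ne_zero.2 (ENNReal.mul_ne_top hFl hGm))
    (ENNReal.inv_ne_top.2 (mul_ne_zero hFl₀ hGm₀))).1 combined

lemma tendsto_lintegral_min_natCast {α : Type*} [MeasurableSpace α] {μ : Measure α}
    {f : α → ℝ≥0∞} (hf : Measurable f) :
    Tendsto (fun k : ℕ => ∫⁻ x, min (f x) k ∂μ) atTop (𝓝 (∫⁻ x, f x ∂μ)) := by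
  refine lintegral_tendsto_of_tendsto_of_monotone (fun k => (hf.min measurable_const).aemeasurable)
    (ae_of_all _ fun x i j hij => ?_) (ae_of_all _ fun x => ?_)
  · exact min_le_min_left _ (by exact_mod_cast hij)
  · simpa using (tendsto_const_nhds (x := f x)).min ENNReal.tendsto_nat_nhds_top

lemma isPrekopaLeindler_volume_real : IsPrekopaLeindler (volume : Measure ℝ) := by
  intro f g h hf hg hh l m hl hm hlm hfgh
  rcases eq_or_ne (∫⁻ x, f x) 0 with hf₀ | hf₀
  · simp [hf₀, hl]
  rcases eq_or_ne (∫⁻ x, g x) 0 with hg₀ | hg₀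
  · simp [hg₀, hm]
  have iSup_min_ne_top (k : ℕ) (F : ℝ → ℝ≥0∞) : ⨆ x, min (F x) k ≠ ⊤ :=
    ne_top_of_le_ne_top (ENNReal.natCast_ne_top k) (iSup_le fun x => min_le_right _ _)
  have truncated (k : ℕ) :
      (∫⁻ x, min (f x) k) ^ l * (∫⁻ x, min (g x) k) ^ m ≤ ∫⁻ x, h x :=
    rpow_lintegral_mul_rpow_lintegral_le_of_iSup_ne_top (hf.min measurable_const)
      (hg.min measurable_const) hh (iSup_min_ne_top k f) (iSup_min_ne_top k g) hl hm hlm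
      fun x y => le_trans (by gcongr <;> exact min_le_left _ _) (hfgh x y)
  refine le_of_tendsto' (ENNReal.Tendsto.mul
    ((ENNReal.continuous_rpow_const.tendsto _).comp (tendsto_lintegral_min_natCast hf)) (Or.inl ?_)
    ((ENNReal.continuous_rpow_const.tendsto _).comp (tendsto_lintegral_min_natCast hg))
    (Or.inl ?_)) truncated
  · simp [hf₀, hl.not_gt]
  · simp [hg₀, hm.not_gt]

namespace IsPrekopaLeindler

variable {E F : Type*} [AddCommGroup E] [Module ℝ E] [MeasurableSpace E] [AddCommGroup F]
  [Module ℝ F] [MeasurableSpace F] {μ : Measure E} {ν : Measure F}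

lemma prod [SFinite ν] (hμ : IsPrekopaLeindler μ) (hν : IsPrekopaLeindler ν) :
    IsPrekopaLeindler (μ.prod ν) := by
  intro f g h hf hg hh l m hl hm hlm hfgh
  rw [lintegral_prod _ hf.aemeasurable, lintegral_prod _ hg.aemeasurable,
    lintegral_prod _ hh.aemeasurable]
  refine hμ hf.lintegral_prod_right' hg.lintegral_prod_right' hh.lintegral_prod_right' hl hm hlm
    fun x x' => ?_
  exact hν (by fun_prop) (by fun_prop) (by fun_prop) hl hm hlm fun y y' => hfgh (x, y) (x', y')

lemma of_measurePreserving (hμ : IsPrekopaLeindler μ) (e : E →ₗ[ℝ] F)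
    (he : MeasurePreserving e μ ν) : IsPrekopaLeindler ν := by
  intro f g h hf hg hh l m hl hm hlm hfgh
  rw [← he.lintegral_comp hf, ← he.lintegral_comp hg, ← he.lintegral_comp hh]
  refine hμ (hf.comp he.measurable) (hg.comp he.measurable) (hh.comp he.measurable) hl hm hlm
    fun x y => ?_
  simpa only [Function.comp_apply, map_add, map_smul] using hfgh (e x) (e y)

lemma rpow_measure_mul_rpow_measure_le (hμ : IsPrekopaLeindler μ) {A B C : Set E}
    (hA : MeasurableSet A) (hB : MeasurableSet B) (hC : MeasurableSet C) {l m : ℝ} (hl : 0 < l)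
    (hm : 0 < m) (hlm : l + m = 1) (hABC : ∀ a ∈ A, ∀ b ∈ B, l • a + m • b ∈ C) :
    μ A ^ l * μ B ^ m ≤ μ C := by
  rw [← lintegral_indicator_one hA, ← lintegral_indicator_one hB, ← lintegral_indicator_one hC]
  refine hμ (measurable_one.indicator hA) (measurable_one.indicator hB)
    (measurable_one.indicator hC) hl hm hlm fun x y => ?_
  by_cases hx : x ∈ A
  · by_cases hy : y ∈ B
    · simp [hx, hy, hABC x hx y hy]
    · simp [hy, hm]
  · simp [hx, hl]

end IsPrekopaLeindler

lemma isPrekopaLeindler_volume_pi (n : ℕ) : IsPrekopaLeindler (volume : Measure (Fin n → ℝ)) := by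
  induction n with
  | zero =>
    intro f g h _ _ _ l m _ _ _ hfgh
    simpa [MeasureTheory.Measure.volume_pi_eq_dirac (0 : Fin 0 → ℝ)] using hfgh 0 0
  | succ n ih =>
    have cons_eq : ⇑(Fin.consLinearEquiv ℝ fun _ : Fin (n + 1) => ℝ) =
        (MeasurableEquiv.piFinSuccAbove (fun _ : Fin (n + 1) => ℝ) 0).symm :=
      funext fun x => (Fin.insertNth_zero' x.1 x.2).symm
    refine (isPrekopaLeindler_volume_real.prod ih).of_measurePreserving
      (Fin.consLinearEquiv ℝ fun _ : Fin (n + 1) => ℝ).toLinearMap ?_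
    rw [LinearEquiv.coe_coe, cons_eq]
    exact (volume_preserving_piFinSuccAbove (fun _ : Fin (n + 1) => ℝ) 0).symm

lemma isPrekopaLeindler_volume_euclideanSpace (n : ℕ) :
    IsPrekopaLeindler (volume : Measure (En n)) :=
  (isPrekopaLeindler_volume_pi n).of_measurePreserving
    (WithLp.linearEquiv 2 ℝ (Fin n → ℝ)).symm.toLinearMap (PiLp.volume_preserving_toLp (Fin n))

end PrekopaLeindler

/-! ### The isoperimetric profile -/

section IsoProfile

open Metric Module

variable {E : Type*} [NormedAddCommGroup E] [NormedSpace ℝ E]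

lemma exists_pos_ofReal_pow_eq {v : ℝ≥0∞} (hv : v ≠ 0) (hv' : v ≠ ⊤) {d : ℕ} (hd : d ≠ 0) :
    ∃ a > 0, ENNReal.ofReal a ^ d = v := by
  have toReal_pos : 0 < v.toReal := ENNReal.toReal_pos hv hv'
  refine ⟨v.toReal ^ (d⁻¹ : ℝ), rpow_pos_of_pos toReal_pos _, ?_⟩
  rw [← ENNReal.ofReal_pow (by positivity), rpow_inv_natCast_pow toReal_pos.le hd,
    ENNReal.ofReal_toReal hv']

lemma isoExponent_pos (hE : 1 < finrank ℝ E) : (0 : ℝ) < (finrank ℝ E - 1) / finrank ℝ E := by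
  have : (1 : ℝ) < finrank ℝ E := by exact_mod_cast hE
  apply div_pos <;> linarith

variable [MeasurableSpace E]

/-- The isoperimetric profile of the Haar measure `μ`: the perimeter of a ball of measure `v`. -/
def isoProfile (μ : Measure E) (v : ℝ≥0∞) : ℝ≥0∞ :=
  finrank ℝ E * μ (ball 0 1) ^ (1 / finrank ℝ E : ℝ) * v ^ ((finrank ℝ E - 1) / finrank ℝ E : ℝ)

lemma isoProfile_zero (hE : 1 < finrank ℝ E) (μ : Measure E) : isoProfile μ 0 = 0 := by
  rw [isoProfile, ENNReal.zero_rpow_of_pos (isoExponent_pos hE), mul_zero]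

lemma monotone_isoProfile (hE : 1 < finrank ℝ E) (μ : Measure E) :
    Monotone (isoProfile μ) := fun _ _ h =>
  mul_le_mul_right (ENNReal.rpow_le_rpow h (isoExponent_pos hE).le) _

lemma measurable_isoProfile_measure_lt (hE : 1 < finrank ℝ E) (μ : Measure E) (f : E → ℝ) :
    Measurable fun t => isoProfile μ (μ {x | t < f x}) :=
  Antitone.measurable fun _ _ h => monotone_isoProfile hE μ
    (measure_mono fun _ hx => h.trans_lt hx)

lemma continuous_isoProfile [FiniteDimensional ℝ E] (μ : Measure E) [IsFiniteMeasureOnCompacts μ] :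
    Continuous (isoProfile μ) :=
  (ENNReal.continuous_const_mul <| ENNReal.mul_ne_top (ENNReal.natCast_ne_top _)
    (ENNReal.rpow_ne_top_of_nonneg (by positivity) measure_ball_lt_top.ne)).comp
    ENNReal.continuous_rpow_const

lemma isoProfile_pow (hE : 1 < finrank ℝ E) {μ : Measure E} {w a : ℝ} (ha : 0 ≤ a)
    (hw : ENNReal.ofReal w ^ finrank ℝ E = μ (ball 0 1)) :
    isoProfile μ (ENNReal.ofReal a ^ finrank ℝ E) =
      ENNReal.ofReal (finrank ℝ E * a ^ (finrank ℝ E - 1) * w) := by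
  have finrank_ne : (finrank ℝ E : ℝ) ≠ 0 := by positivity
  have pred_cast : (finrank ℝ E - 1 : ℝ) = (finrank ℝ E - 1 : ℕ) := by
    rw [Nat.cast_sub hE.le, Nat.cast_one]
  rw [isoProfile, ← hw, ← ENNReal.rpow_natCast_mul, ← ENNReal.rpow_natCast_mul,
    mul_one_div_cancel finrank_ne, ENNReal.rpow_one, mul_div_cancel₀ _ finrank_ne, pred_cast,
    ENNReal.rpow_natCast, ← ENNReal.ofReal_pow ha, ← ENNReal.ofReal_natCast, mul_right_comm,
    ← ENNReal.ofReal_mul (by positivity), ← ENNReal.ofReal_mul (by positivity)]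

variable [BorelSpace E] {μ : Measure E} [FiniteDimensional ℝ E] [μ.IsAddHaarMeasure]

lemma IsPrekopaLeindler.ofReal_add_pow_le_measure (hμ : IsPrekopaLeindler μ)
    {A B C : Set E} (hA : MeasurableSet A) (hB : MeasurableSet B)
    (hC : MeasurableSet C) (hABC : A + B ⊆ C) {a b : ℝ} (ha : 0 < a) (hb : 0 < b)
    (hμA : ENNReal.ofReal a ^ finrank ℝ E = μ A) (hμB : ENNReal.ofReal b ^ finrank ℝ E = μ B) :
    ENNReal.ofReal (a + b) ^ finrank ℝ E ≤ μ C := by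
  have measure_smul {S : Set E} {s : ℝ} (hs : 0 < s)
      (hS : ENNReal.ofReal s ^ finrank ℝ E = μ S) :
      μ (((a + b) / s) • S) = ENNReal.ofReal (a + b) ^ finrank ℝ E := by
    rw [Measure.addHaar_smul, ← hS, abs_of_pos (by positivity),
      ENNReal.ofReal_pow (by positivity), ← mul_pow, ← ENNReal.ofReal_mul (by positivity),
      div_mul_cancel₀ _ hs.ne']
  have sum_eq_one : a / (a + b) + b / (a + b) = 1 := by field_simp
  have mem_C : ∀ x ∈ ((a + b) / a) • A, ∀ y ∈ ((a + b) / b) • B,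
      (a / (a + b)) • x + (b / (a + b)) • y ∈ C := by
    rintro _ ⟨x, hx, rfl⟩ _ ⟨y, hy, rfl⟩
    simp only [smul_smul]
    rw [div_mul_div_cancel₀ (by positivity), div_mul_div_cancel₀ (by positivity), div_self ha.ne',
      div_self hb.ne', one_smul, one_smul]
    exact hABC (add_mem_add hx hy)
  have key := hμ.rpow_measure_mul_rpow_measure_le (hA.const_smul₀ ((a + b) / a))
    (hB.const_smul₀ ((a + b) / b)) hC (by positivity) (by positivity) sum_eq_one mem_C
  rwa [measure_smul ha hμA, measure_smul hb hμB, rpow_mul_rpow_of_add_eq_one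
    (by positivity) (by positivity) sum_eq_one] at key

lemma IsPrekopaLeindler.measure_add_isoProfile_le (hE : 1 < finrank ℝ E)
    (hμ : IsPrekopaLeindler μ) {A C : Set E} (hA : MeasurableSet A)
    (hC : MeasurableSet C) {r : ℝ} (hr : 0 < r) (hAC : A + ball 0 r ⊆ C) :
    μ A + ENNReal.ofReal r * isoProfile μ (μ A) ≤ μ C := by
  have finrank_ne : finrank ℝ E ≠ 0 := by positivity
  have A_subset : A ⊆ C := fun x hx => hAC ⟨x, hx, 0, mem_ball_self hr, add_zero x⟩
  rcases eq_or_ne (μ A) 0 with hA_zero | hA_zero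
  · simp [hA_zero, isoProfile_zero hE]
  rcases eq_or_ne (μ A) ⊤ with hA_top | hA_top
  · simp [measure_mono_top A_subset hA_top]
  obtain ⟨a, ha, hμA⟩ := exists_pos_ofReal_pow_eq hA_zero hA_top finrank_ne
  obtain ⟨w, hw, hμw⟩ := exists_pos_ofReal_pow_eq (measure_ball_pos μ (0 : E) one_pos).ne'
    measure_ball_lt_top.ne finrank_ne
  have hμr : ENNReal.ofReal (r * w) ^ finrank ℝ E = μ (ball 0 r) := by
    rw [Measure.addHaar_ball_of_pos μ _ hr, ← hμw, ENNReal.ofReal_mul hr.le, mul_pow,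
      ENNReal.ofReal_pow hr.le]
  refine le_trans ?_
    (hμ.ofReal_add_pow_le_measure hA measurableSet_ball hC hAC ha (mul_pos hr hw) hμA hμr)
  rw [← hμA, isoProfile_pow hE ha.le hμw, ← ENNReal.ofReal_pow ha.le,
    ← ENNReal.ofReal_pow (by positivity), ← ENNReal.ofReal_mul hr.le,
    ← ENNReal.ofReal_add (by positivity) (by positivity)]
  refine ENNReal.ofReal_le_ofReal (le_trans (le_of_eq (by ring))
    (pow_add_mul_le_add_pow ha.le (by positivity) (finrank ℝ E)))

end IsoProfile

/-! ### The sharp Sobolev inequality -/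

section Sobolev

open Metric Module

variable {E : Type*} [NormedAddCommGroup E] [NormedSpace ℝ E] [MeasurableSpace E] [BorelSpace E]
  {f : E → ℝ}

lemma measurable_enorm_fderiv (f : E → ℝ) : Measurable fun x => ‖fderiv ℝ f x‖ₑ :=
  (measurable_fderiv ℝ f).enorm

lemma ofReal_le_ofReal_add_lintegral_enorm_fderiv (hf : Differentiable ℝ f) (x y : E) :
    ENNReal.ofReal (f (x + y)) ≤
      ENNReal.ofReal (f x) + ∫⁻ s in Icc (0 : ℝ) 1, ‖fderiv ℝ f (x + s • y)‖ₑ * ‖y‖ₑ := by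
  have deriv_line (s : ℝ) :
      HasDerivAt (fun s : ℝ => f (x + s • y)) (fderiv ℝ f (x + s • y) y) s := by
    refine (hf (x + s • y)).hasFDerivAt.comp_hasDerivAt s ?_
    simpa using ((hasDerivAt_id s).smul_const y).const_add x
  have enorm_le : ∫⁻ s in Icc (0 : ℝ) 1, ‖fderiv ℝ f (x + s • y) y‖ₑ ≤
      ∫⁻ s in Icc (0 : ℝ) 1, ‖fderiv ℝ f (x + s • y)‖ₑ * ‖y‖ₑ :=
    lintegral_mono fun s => ContinuousLinearMap.le_opENorm _ _
  rcases eq_or_ne (∫⁻ s in Icc (0 : ℝ) 1, ‖fderiv ℝ f (x + s • y)‖ₑ * ‖y‖ₑ) ⊤ with h_top | h_top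
  · simp [h_top]
  have integrableOn : IntegrableOn (fun s : ℝ => fderiv ℝ f (x + s • y) y) (Icc 0 1) :=
    ⟨((measurable_fderiv_apply_const ℝ f y).comp
      (by fun_prop : Measurable fun s : ℝ => x + s • y)).aestronglyMeasurable,
      enorm_le.trans_lt h_top.lt_top⟩
  have ftc : ∫ s in Icc (0 : ℝ) 1, fderiv ℝ f (x + s • y) y = f (x + y) - f x := by
    rw [integral_Icc_eq_integral_Ioc, ← intervalIntegral.integral_of_le zero_le_one,
      intervalIntegral.integral_eq_sub_of_hasDerivAt (fun s _ => deriv_line s)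
        ((intervalIntegrable_iff_integrableOn_Icc_of_le zero_le_one).2 integrableOn)]
    simp
  calc ENNReal.ofReal (f (x + y)) = ENNReal.ofReal (f x + (f (x + y) - f x)) := by ring_nf
    _ ≤ ENNReal.ofReal (f x) + ENNReal.ofReal (f (x + y) - f x) := ENNReal.ofReal_add_le
    _ ≤ ENNReal.ofReal (f x) + ‖f (x + y) - f x‖ₑ := by gcongr; exact Real.ofReal_le_enorm _
    _ ≤ ENNReal.ofReal (f x) + ∫⁻ s in Icc (0 : ℝ) 1, ‖fderiv ℝ f (x + s • y) y‖ₑ := by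
      rw [← ftc]; gcongr; exact enorm_integral_le_lintegral_enorm _
    _ ≤ _ := by gcongr

lemma setLIntegral_ball_add_le {G : Type*} [NormedAddCommGroup G] [MeasurableSpace G]
    [BorelSpace G] (μ : Measure G) [μ.IsAddRightInvariant] (g : G → ℝ≥0∞) (x : G) {z : G} {k r : ℝ}
    (hz : ‖z‖ ≤ r) :
    ∫⁻ w in ball 0 k, g (x + w + z) ∂μ ≤ ∫⁻ w in ball 0 (k + r), g (x + w) ∂μ := by
  have preimage_ball : (· + z) ⁻¹' ball z k = ball 0 k := by ext w; simp [mem_ball, dist_eq_norm]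
  calc ∫⁻ w in ball 0 k, g (x + w + z) ∂μ = ∫⁻ w in ball z k, g (x + w) ∂μ := by
        rw [← (measurePreserving_add_right μ z).setLIntegral_comp_preimage_emb
          (measurableEmbedding_addRight z) _ (ball z k), preimage_ball]
        simp_rw [add_assoc]
    _ ≤ ∫⁻ w in ball 0 (k + r), g (x + w) ∂μ :=
      lintegral_mono_set (ball_subset_ball' (by rw [dist_zero_right]; linarith))

variable [FiniteDimensional ℝ E] {μ : Measure E} [μ.IsAddHaarMeasure]

lemma measurable_setLIntegral_add {g : E → ℝ≥0∞} (hg : Measurable g) (s : Set E) :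
    Measurable fun x => ∫⁻ w in s, g (x + w) ∂μ :=
  Measurable.lintegral_prod_right' (f := fun q : E × E => g (q.1 + q.2)) (by fun_prop)

lemma lintegral_setLIntegral_add {g : E → ℝ≥0∞} (hg : Measurable g) (s : Set E) :
    ∫⁻ x, ∫⁻ w in s, g (x + w) ∂μ ∂μ = μ s * ∫⁻ x, g x ∂μ := by
  have measurable_add : Measurable fun q : E × E => g (q.1 + q.2) := by fun_prop
  rw [lintegral_lintegral_swap measurable_add.aemeasurable]
  simp_rw [lintegral_add_right_eq_self g]
  rw [setLIntegral_const, mul_comm]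

lemma setLIntegral_ball_ofReal_add_le (hf : Differentiable ℝ f) (k : ℝ) {r : ℝ} (x : E) {y : E}
    (hy : ‖y‖ < r) :
    ∫⁻ w in ball 0 k, ENNReal.ofReal (f (x + y + w)) ∂μ ≤
      (∫⁻ w in ball 0 k, ENNReal.ofReal (f (x + w)) ∂μ) +
        ENNReal.ofReal r * ∫⁻ w in ball 0 (k + r), ‖fderiv ℝ f (x + w)‖ₑ ∂μ := by
  have measurable_f : Measurable f := hf.continuous.measurable
  have measurable_f' := measurable_enorm_fderiv f
  calc ∫⁻ w in ball 0 k, ENNReal.ofReal (f (x + y + w)) ∂μ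
    _ ≤ ∫⁻ w in ball 0 k, (ENNReal.ofReal (f (x + w)) +
          ∫⁻ s in Icc (0 : ℝ) 1, ‖fderiv ℝ f (x + w + s • y)‖ₑ * ‖y‖ₑ) ∂μ := by
      refine lintegral_mono fun w => ?_
      rw [add_right_comm]
      exact ofReal_le_ofReal_add_lintegral_enorm_fderiv hf (x + w) y
    _ = (∫⁻ w in ball 0 k, ENNReal.ofReal (f (x + w)) ∂μ) +
          ∫⁻ s in Icc (0 : ℝ) 1, ∫⁻ w in ball 0 k, ‖fderiv ℝ f (x + w + s • y)‖ₑ * ‖y‖ₑ ∂μ := by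
      rw [lintegral_add_left (by fun_prop), lintegral_lintegral_swap]
      exact ((measurable_f'.comp
        (by fun_prop : Measurable fun q : E × ℝ => x + q.1 + q.2 • y)).mul_const _).aemeasurable
    _ ≤ (∫⁻ w in ball 0 k, ENNReal.ofReal (f (x + w)) ∂μ) + ∫⁻ _ in Icc (0 : ℝ) 1,
          ENNReal.ofReal r * ∫⁻ w in ball 0 (k + r), ‖fderiv ℝ f (x + w)‖ₑ ∂μ := by
      refine add_le_add_right (setLIntegral_mono' measurableSet_Icc fun s hs => ?_) _
      have norm_smul_le : ‖s • y‖ ≤ r := by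
        rw [norm_smul, norm_of_nonneg hs.1]
        exact (mul_le_of_le_one_left (norm_nonneg y) hs.2).trans hy.le
      rw [lintegral_mul_const' _ _ enorm_ne_top, mul_comm, ← ofReal_norm]
      refine mul_le_mul' (ENNReal.ofReal_le_ofReal hy.le) ?_
      exact setLIntegral_ball_add_le μ (fun x => ‖fderiv ℝ f x‖ₑ) x norm_smul_le
    _ = _ := by simp

/-- The average of the positive part of `f` over the ball of radius `k` centred at `x`. -/
def ballMean (μ : Measure E) (f : E → ℝ) (k : ℝ) (x : E) : ℝ≥0∞ :=
  (μ (ball 0 k))⁻¹ * ∫⁻ w in ball 0 k, ENNReal.ofReal (f (x + w)) ∂μ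

lemma measurable_ballMean (hf : Measurable f) (k : ℝ) : Measurable (ballMean μ f k) :=
  (measurable_setLIntegral_add hf.ennreal_ofReal _).const_mul _

lemma lintegral_ballMean (hf : Measurable f) {k : ℝ} (hk : 0 < k) :
    ∫⁻ x, ballMean μ f k x ∂μ = ∫⁻ x, ENNReal.ofReal (f x) ∂μ := by
  simp only [ballMean]
  rw [lintegral_const_mul _ (measurable_setLIntegral_add hf.ennreal_ofReal _),
    lintegral_setLIntegral_add hf.ennreal_ofReal, ← mul_assoc,
    ENNReal.inv_mul_cancel (measure_ball_pos μ _ hk).ne' measure_ball_lt_top.ne, one_mul]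

lemma eventually_ofReal_lt_ballMean (hf : Continuous f) {t : ℝ} {x : E} (ht : 0 < t)
    (htx : t < f x) : ∀ᶠ k in 𝓝[>] 0, ENNReal.ofReal t < ballMean μ f k x := by
  obtain ⟨t', htt', ht'x⟩ := exists_between htx
  obtain ⟨δ, hδ, hball⟩ := Metric.mem_nhds_iff.1 (hf.continuousAt.eventually (lt_mem_nhds ht'x))
  filter_upwards [Ioo_mem_nhdsGT hδ] with k hk
  calc ENNReal.ofReal t < ENNReal.ofReal t' :=
        (ENNReal.ofReal_lt_ofReal_iff (ht.trans htt')).2 htt'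
    _ = (μ (ball 0 k))⁻¹ * ∫⁻ _ in ball (0 : E) k, ENNReal.ofReal t' ∂μ := by
      rw [setLIntegral_const, mul_left_comm, ENNReal.inv_mul_cancel
        (measure_ball_pos μ _ hk.1).ne' measure_ball_lt_top.ne, mul_one]
    _ ≤ ballMean μ f k x := by
      refine mul_le_mul_right (setLIntegral_mono' measurableSet_ball fun w hw => ?_) _
      have mem : x + w ∈ ball x δ := by
        simpa [mem_ball, dist_eq_norm] using (mem_ball_zero_iff.1 hw).trans hk.2
      exact ENNReal.ofReal_le_ofReal (hball mem).le

lemma tendsto_measure_ball_add {k : ℝ} (hk : 0 < k) :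
    Tendsto (fun r => μ (ball 0 (k + r))) (𝓝[>] 0) (𝓝 (μ (ball 0 k))) := by
  have measure_ball {r : ℝ} (hr : 0 < r) :
      μ (ball 0 r) = ENNReal.ofReal (r ^ finrank ℝ E) * μ (ball 0 1) :=
    Measure.addHaar_ball_of_pos μ _ hr
  have continuous_pow : Continuous fun r : ℝ => (k + r) ^ finrank ℝ E := by fun_prop
  have tendsto_pow := (continuous_pow.tendsto' 0 (k ^ finrank ℝ E) (by simp)).mono_left
    (nhdsWithin_le_nhds (s := Ioi 0))
  rw [measure_ball hk]
  refine (ENNReal.Tendsto.mul_const (ENNReal.tendsto_ofReal tendsto_pow)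
    (Or.inr measure_ball_lt_top.ne)).congr' ?_
  filter_upwards [self_mem_nhdsWithin] with r hr
  exact (measure_ball (add_pos hk hr)).symm

lemma lintegral_isoProfile_ballMean_le_of_pos (hE : 1 < finrank ℝ E) (hμ : IsPrekopaLeindler μ)
    (hf : Differentiable ℝ f) (hf_int : ∫⁻ x, ENNReal.ofReal (f x) ∂μ ≠ ⊤) {k r : ℝ} (hk : 0 < k)
    (hr : 0 < r) :
    ∫⁻ t in Ioi (0 : ℝ), isoProfile μ (μ {x | ENNReal.ofReal t < ballMean μ f k x}) ≤
      (μ (ball 0 k))⁻¹ * μ (ball 0 (k + r)) * ∫⁻ x, ‖fderiv ℝ f x‖ₑ ∂μ := by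
  set slope : E → ℝ≥0∞ := fun x =>
    (μ (ball 0 k))⁻¹ * ∫⁻ w in ball 0 (k + r), ‖fderiv ℝ f (x + w)‖ₑ ∂μ with hslope
  have measurable_f' := measurable_enorm_fderiv f
  have measurable_mean := measurable_ballMean (μ := μ) hf.continuous.measurable k
  have measurable_slope : Measurable slope :=
    (measurable_setLIntegral_add measurable_f' _).const_mul _
  have mean_add_le {x y : E} (hy : ‖y‖ < r) :
      ballMean μ f k x ≤ ballMean μ f k (x + y) + ENNReal.ofReal r * slope (x + y) := by
    have shift := setLIntegral_ball_ofReal_add_le (μ := μ) hf k (x + y) (y := -y)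
      (by simpa using hy)
    rw [add_neg_cancel_right] at shift
    calc ballMean μ f k x ≤ _ := mul_le_mul_right shift _
      _ = _ := by rw [ballMean, hslope]; ring
  have measurable_sum : Measurable fun x => ballMean μ f k x + ENNReal.ofReal r * slope x :=
    measurable_mean.add (measurable_slope.const_mul _)
  have antitone_measure : Antitone fun t : ℝ => μ {x | ENNReal.ofReal t < ballMean μ f k x} :=
    fun s t hst => measure_mono fun x hx => (ENNReal.ofReal_le_ofReal hst).trans_lt hx
  have layer_cake : (∫⁻ x, ballMean μ f k x ∂μ) + ENNReal.ofReal r *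
      ∫⁻ t in Ioi (0 : ℝ), isoProfile μ (μ {x | ENNReal.ofReal t < ballMean μ f k x}) ≤
      (∫⁻ x, ballMean μ f k x ∂μ) + ENNReal.ofReal r * ∫⁻ x, slope x ∂μ := by
    rw [← lintegral_const_mul _ measurable_slope, ← lintegral_add_left measurable_mean,
      lintegral_eq_lintegral_meas_ofReal_lt μ measurable_mean,
      lintegral_eq_lintegral_meas_ofReal_lt μ measurable_sum,
      ← lintegral_const_mul' _ _ ENNReal.ofReal_ne_top,
      ← lintegral_add_left antitone_measure.measurable]
    refine lintegral_mono fun t => hμ.measure_add_isoProfile_le hE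
      (measurableSet_lt measurable_const measurable_mean)
      (measurableSet_lt measurable_const measurable_sum) hr ?_
    rintro _ ⟨x, hx, y, hy, rfl⟩
    exact lt_of_lt_of_le hx (mean_add_le (mem_ball_zero_iff.1 hy))
  rw [ENNReal.add_le_add_iff_left (by rwa [lintegral_ballMean hf.continuous.measurable hk]),
    ENNReal.mul_le_mul_iff_right (by simpa using hr) ENNReal.ofReal_ne_top] at layer_cake
  rwa [lintegral_const_mul _ (measurable_setLIntegral_add measurable_f' _),
    lintegral_setLIntegral_add measurable_f', ← mul_assoc] at layer_cake

lemma lintegral_isoProfile_ballMean_le (hE : 1 < finrank ℝ E) (hμ : IsPrekopaLeindler μ)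
    (hf : Differentiable ℝ f) (hf_int : ∫⁻ x, ENNReal.ofReal (f x) ∂μ ≠ ⊤) {k : ℝ} (hk : 0 < k) :
    ∫⁻ t in Ioi (0 : ℝ), isoProfile μ (μ {x | ENNReal.ofReal t < ballMean μ f k x}) ≤
      ∫⁻ x, ‖fderiv ℝ f x‖ₑ ∂μ := by
  have ball_ne_zero : μ (ball 0 k) ≠ 0 := (measure_ball_pos μ (0 : E) hk).ne'
  rcases eq_or_ne (∫⁻ x, ‖fderiv ℝ f x‖ₑ ∂μ) ⊤ with h_top | h_top
  · simp [h_top]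
  have tendsto_bound := ENNReal.Tendsto.mul_const (ENNReal.Tendsto.const_mul
    (tendsto_measure_ball_add (μ := μ) hk) (Or.inr (ENNReal.inv_ne_top.2 ball_ne_zero)))
    (Or.inr h_top)
  rw [ENNReal.inv_mul_cancel ball_ne_zero measure_ball_lt_top.ne, one_mul] at tendsto_bound
  refine ge_of_tendsto tendsto_bound ?_
  filter_upwards [self_mem_nhdsWithin] with r hr
  exact lintegral_isoProfile_ballMean_le_of_pos hE hμ hf hf_int hk hr

lemma measure_le_liminf_measure {α ι : Type*} [MeasurableSpace α] (ν : Measure α) {l : Filter ι}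
    [l.IsCountablyGenerated] {s : Set α} {t : ι → Set α} (hs : MeasurableSet s)
    (ht : ∀ i, MeasurableSet (t i)) (hst : ∀ x ∈ s, ∀ᶠ i in l, x ∈ t i) :
    ν s ≤ liminf (fun i => ν (t i)) l := by
  calc ν s = ∫⁻ x, s.indicator 1 x ∂ν := (lintegral_indicator_one hs).symm
    _ ≤ ∫⁻ x, liminf (fun i => (t i).indicator 1 x) l ∂ν := by
      refine lintegral_mono (indicator_le fun x hx => ?_)
      refine le_liminf_of_le (by isBoundedDefault) ?_
      filter_upwards [hst x hx] with i hi
      rw [indicator_of_mem hi]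
    _ ≤ liminf (fun i => ∫⁻ x, (t i).indicator 1 x ∂ν) l :=
      lintegral_liminf_le fun i => measurable_one.indicator (ht i)
    _ = liminf (fun i => ν (t i)) l := by simp_rw [lintegral_indicator_one (ht _)]

theorem lintegral_isoProfile_le_lintegral_enorm_fderiv (hE : 1 < finrank ℝ E)
    (hμ : IsPrekopaLeindler μ) (hf : Differentiable ℝ f)
    (hf_int : ∫⁻ x, ENNReal.ofReal (f x) ∂μ ≠ ⊤) :
    ∫⁻ t in Ioi (0 : ℝ), isoProfile μ (μ {x | t < f x}) ≤ ∫⁻ x, ‖fderiv ℝ f x‖ₑ ∂μ := by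
  have measurable_f : Measurable f := hf.continuous.measurable
  have antitone_measure (k : ℝ) :
      Antitone fun t : ℝ => isoProfile μ (μ {x | ENNReal.ofReal t < ballMean μ f k x}) :=
    (monotone_isoProfile hE μ).comp_antitone fun s t hst =>
      measure_mono fun x hx => (ENNReal.ofReal_le_ofReal hst).trans_lt hx
  calc ∫⁻ t in Ioi (0 : ℝ), isoProfile μ (μ {x | t < f x})
    _ ≤ ∫⁻ t in Ioi (0 : ℝ), liminf (fun k =>
          isoProfile μ (μ {x | ENNReal.ofReal t < ballMean μ f k x})) (𝓝[>] 0) := by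
      refine setLIntegral_mono' measurableSet_Ioi fun t ht => ?_
      have measure_le := measure_le_liminf_measure μ (l := 𝓝[>] (0 : ℝ))
        (measurableSet_lt measurable_const measurable_f)
        (fun k => measurableSet_lt measurable_const (measurable_ballMean (μ := μ) measurable_f k))
        fun x hx => eventually_ofReal_lt_ballMean hf.continuous ht hx
      exact (monotone_isoProfile hE μ measure_le).trans_eq
        ((monotone_isoProfile hE μ).map_liminf_of_continuousAt _
          (continuous_isoProfile μ).continuousAt)
    _ ≤ liminf (fun k => ∫⁻ t in Ioi (0 : ℝ),
          isoProfile μ (μ {x | ENNReal.ofReal t < ballMean μ f k x})) (𝓝[>] 0) :=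
      lintegral_liminf_le fun k => (antitone_measure k).measurable
    _ ≤ ∫⁻ x, ‖fderiv ℝ f x‖ₑ ∂μ := by
      refine liminf_le_of_frequently_le' (Eventually.frequently ?_)
      filter_upwards [self_mem_nhdsWithin] with k hk
      exact lintegral_isoProfile_ballMean_le hE hμ hf hf_int hk

lemma lintegral_ofReal_mul_superlevel_le {X : Type*} {κ : ℝ → ℝ} (hκ : Continuous κ)
    (hκ_nonneg : ∀ t, 0 ≤ κ t) (f : X → ℝ) (Λ : Set X → ℝ≥0∞) :
    ∫⁻ t in Ioi 0, ENNReal.ofReal (κ t) * Λ {x | t < f x} ≤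
      ∫⁻ s in Ioi 0, Λ {x | s < ∫ t in 0..f x, κ t} := by
  set A : ℝ → ℝ := fun t => ∫ s in 0..t, κ s
  have deriv_A (t : ℝ) : HasDerivAt A (κ t) t := hκ.integral_hasStrictDerivAt 0 t |>.hasDerivAt
  have mono_A : Monotone A := monotone_of_hasDerivAt_nonneg deriv_A hκ_nonneg
  have lt_A {a b c : ℝ} (hab : a < b) (hc : c ∈ Icc a b) (hκc : 0 < κ c) : A a < A b := by
    have := intervalIntegral.integral_pos hab hκ.continuousOn (fun t _ => hκ_nonneg t) ⟨c, hc, hκc⟩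
    rwa [← intervalIntegral.integral_interval_sub_left (hκ.intervalIntegrable _ _)
      (hκ.intervalIntegrable _ _), sub_pos] at this
  have A_lt_iff {t y : ℝ} (ht : 0 < κ t) : A t < A y ↔ t < y :=
    ⟨mono_A.reflect_lt, fun h => lt_A h (left_mem_Icc.2 h.le) ht⟩
  have measurableSet_pos : MeasurableSet {t | 0 < κ t} :=
    (isOpen_lt continuous_const hκ).measurableSet
  set S : Set ℝ := {t | 0 < κ t} ∩ Ioi 0 with hS
  have measurableSet_S : MeasurableSet S := measurableSet_pos.inter measurableSet_Ioi
  have injOn_A : InjOn A S := fun a ha b hb hab => le_antisymm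
    (not_lt.1 fun h => ((A_lt_iff hb.1).2 h).ne' hab)
    (not_lt.1 fun h => ((A_lt_iff ha.1).2 h).ne hab)
  have image_subset : A '' S ⊆ Ioi 0 := by
    rintro _ ⟨t, ⟨hκt, ht⟩, rfl⟩
    have := lt_A ht (right_mem_Icc.2 (le_of_lt ht)) hκt
    rwa [show A 0 = 0 from intervalIntegral.integral_same] at this
  calc ∫⁻ t in Ioi 0, ENNReal.ofReal (κ t) * Λ {x | t < f x}
    _ = ∫⁻ t in S, ENNReal.ofReal (κ t) * Λ {x | t < f x} := by
      rw [hS, ← Measure.restrict_restrict measurableSet_pos]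
      exact (setLIntegral_eq_of_support_subset fun t ht =>
        ENNReal.ofReal_pos.1 (pos_of_ne_zero (left_ne_zero_of_mul ht))).symm
    _ = ∫⁻ s in A '' S, Λ {x | s < A (f x)} := by
      rw [lintegral_image_eq_lintegral_abs_deriv_mul measurableSet_S
        (fun t _ => (deriv_A t).hasDerivWithinAt) injOn_A]
      refine setLIntegral_congr_fun measurableSet_S fun t ht => ?_
      simp_rw [abs_of_nonneg (hκ_nonneg t), A_lt_iff ht.1]
    _ ≤ ∫⁻ s in Ioi 0, Λ {x | s < A (f x)} := lintegral_mono_set image_subset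

lemma le_of_forall_lintegral_boundedContinuous_le {Ω : Type*} [PseudoEMetricSpace Ω]
    [MeasurableSpace Ω] [BorelSpace Ω] {ν₁ ν₂ : Measure Ω} [IsFiniteMeasure ν₁] [IsFiniteMeasure ν₂]
    (h : ∀ φ : BoundedContinuousFunction Ω ℝ≥0, ∫⁻ x, φ x ∂ν₁ ≤ ∫⁻ x, φ x ∂ν₂) : ν₁ ≤ ν₂ := by
  have closed_le {K : Set Ω} (hK : IsClosed K) : ν₁ K ≤ ν₂ K :=
    le_of_tendsto_of_tendsto' (tendsto_lintegral_thickenedIndicator_of_isClosed ν₁ hK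
      (fun n => Nat.one_div_pos_of_nat) tendsto_one_div_add_atTop_nhds_zero_nat)
      (tendsto_lintegral_thickenedIndicator_of_isClosed ν₂ hK
      (fun n => Nat.one_div_pos_of_nat) tendsto_one_div_add_atTop_nhds_zero_nat) fun n => h _
  refine Measure.le_iff.2 fun s hs => ?_
  rw [hs.measure_eq_iSup_isClosed_of_ne_top (measure_ne_top _ _)]
  exact iSup₂_le fun K hKs => iSup_le fun hK => (closed_le hK).trans (measure_mono hKs)

lemma lintegral_boundedContinuous_mul_isoProfile_le (hE : 1 < finrank ℝ E)
    (hμ : IsPrekopaLeindler μ) (hf : Differentiable ℝ f)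
    (hf_int : ∫⁻ x, ENNReal.ofReal (f x) ∂μ ≠ ⊤) (φ : BoundedContinuousFunction ℝ ℝ≥0) :
    ∫⁻ t in Ioi 0, φ t * isoProfile μ (μ {x | t < f x}) ≤
      ∫⁻ x, φ (f x) * ‖fderiv ℝ f x‖ₑ ∂μ := by
  obtain ⟨M, hM⟩ := φ.isBounded_range.bddAbove
  have φ_le (t : ℝ) : (φ t : ℝ) ≤ M := hM (mem_range_self t)
  have continuous_φ : Continuous fun t => (φ t : ℝ) := by fun_prop
  have primitive_le (y : ℝ) : ENNReal.ofReal (∫ t in 0..y, (φ t : ℝ)) ≤ M * ENNReal.ofReal y := by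
    rw [← ENNReal.ofReal_coe_nnreal, ← ENNReal.ofReal_mul M.coe_nonneg]
    rcases le_total 0 y with hy | hy
    · refine ENNReal.ofReal_le_ofReal ?_
      simpa [mul_comm] using intervalIntegral.integral_mono_on (μ := volume) hy
        (continuous_φ.intervalIntegrable _ _) intervalIntegrable_const fun t _ => φ_le t
    · rw [intervalIntegral.integral_symm, ENNReal.ofReal_of_nonpos]
      · exact zero_le
      · exact neg_nonpos.2 (intervalIntegral.integral_nonneg hy fun t _ => (φ t).coe_nonneg)
  have primitive_int : ∫⁻ x, ENNReal.ofReal (∫ t in 0..f x, (φ t : ℝ)) ∂μ ≠ ⊤ :=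
    ne_top_of_le_ne_top (ENNReal.mul_ne_top ENNReal.coe_ne_top hf_int)
      ((lintegral_mono fun x => primitive_le (f x)).trans_eq
        (lintegral_const_mul' (M : ℝ≥0∞) _ ENNReal.coe_ne_top))
  have fderiv_comp (x : E) :
      HasFDerivAt (fun x => ∫ t in 0..f x, (φ t : ℝ)) ((φ (f x) : ℝ) • fderiv ℝ f x) x :=
    (continuous_φ.integral_hasStrictDerivAt 0 (f x)).hasDerivAt.comp_hasFDerivAt x
      (hf x).hasFDerivAt
  calc ∫⁻ t in Ioi 0, φ t * isoProfile μ (μ {x | t < f x})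
    _ ≤ ∫⁻ s in Ioi 0, isoProfile μ (μ {x | s < ∫ t in 0..f x, (φ t : ℝ)}) := by
      simpa using lintegral_ofReal_mul_superlevel_le continuous_φ (fun t => (φ t).coe_nonneg) f
        fun s => isoProfile μ (μ s)
    _ ≤ ∫⁻ x, ‖fderiv ℝ (fun x => ∫ t in 0..f x, (φ t : ℝ)) x‖ₑ ∂μ :=
      lintegral_isoProfile_le_lintegral_enorm_fderiv hE hμ
        (fun x => (fderiv_comp x).differentiableAt) primitive_int
    _ = ∫⁻ x, φ (f x) * ‖fderiv ℝ f x‖ₑ ∂μ := by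
      simp_rw [(fderiv_comp _).fderiv, enorm_smul, Real.enorm_of_nonneg (φ _).coe_nonneg,
        ENNReal.ofReal_coe_nnreal]

theorem lintegral_mul_isoProfile_le (hE : 1 < finrank ℝ E) (hμ : IsPrekopaLeindler μ)
    (hf : Differentiable ℝ f) (hf_int : ∫⁻ x, ENNReal.ofReal (f x) ∂μ ≠ ⊤)
    (hf_grad : ∫⁻ x, ‖fderiv ℝ f x‖ₑ ∂μ ≠ ⊤) {b : ℝ → ℝ≥0∞} (hb : Measurable b) :
    ∫⁻ t in Ioi 0, b t * isoProfile μ (μ {x | t < f x}) ≤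
      ∫⁻ x, b (f x) * ‖fderiv ℝ f x‖ₑ ∂μ := by
  have measurable_f : Measurable f := hf.continuous.measurable
  set profileMeasure := (volume.restrict (Ioi 0)).withDensity fun t =>
    isoProfile μ (μ {x | t < f x})
  set gradMeasure := μ.withDensity fun x => ‖fderiv ℝ f x‖ₑ
  have lintegral_profile {a : ℝ → ℝ≥0∞} (ha : Measurable a) : ∫⁻ t, a t ∂profileMeasure =
      ∫⁻ t in Ioi 0, a t * isoProfile μ (μ {x | t < f x}) := by
    rw [lintegral_withDensity_eq_lintegral_mul _ (measurable_isoProfile_measure_lt hE μ f) ha]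
    exact lintegral_congr fun _ => mul_comm _ _
  have lintegral_grad {a : ℝ → ℝ≥0∞} (ha : Measurable a) : ∫⁻ t, a t ∂gradMeasure.map f =
      ∫⁻ x, a (f x) * ‖fderiv ℝ f x‖ₑ ∂μ := by
    rw [lintegral_map ha measurable_f]
    exact (lintegral_withDensity_eq_lintegral_mul _ (measurable_enorm_fderiv f)
      (ha.comp measurable_f)).trans (lintegral_congr fun _ => mul_comm _ _)
  have : IsFiniteMeasure profileMeasure := isFiniteMeasure_withDensity <| ne_top_of_le_ne_top
    hf_grad (lintegral_isoProfile_le_lintegral_enorm_fderiv hE hμ hf hf_int)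
  have : IsFiniteMeasure gradMeasure := isFiniteMeasure_withDensity hf_grad
  have measure_le : profileMeasure ≤ gradMeasure.map f :=
    le_of_forall_lintegral_boundedContinuous_le fun φ => by
      have measurable_φ : Measurable fun t => (φ t : ℝ≥0∞) :=
        φ.continuous.measurable.coe_nnreal_ennreal
      rw [lintegral_profile measurable_φ, lintegral_grad measurable_φ]
      exact lintegral_boundedContinuous_mul_isoProfile_le hE hμ hf hf_int φ
  rw [← lintegral_profile hb, ← lintegral_grad hb]
  exact lintegral_mono' measure_le le_rfl

end Sobolev

/-! ### Nondegeneracy of the wells -/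

section Wells

open Asymptotics

lemma exists_forall_norm_le_mul_of_isBigO {X F G : Type*} [TopologicalSpace X] [Norm F]
    [SeminormedAddCommGroup G] {K : Set X} (hK : IsCompact K) {f : X → F} {g : X → G}
    (h : ∀ x ∈ K, f =O[𝓝[K] x] g) : ∃ C > 0, ∀ x ∈ K, ‖f x‖ ≤ C * ‖g x‖ := by
  refine hK.induction_on (p := fun s => ∃ C > 0, ∀ x ∈ s, ‖f x‖ ≤ C * ‖g x‖) ⟨1, one_pos, by simp⟩
    (fun s t hst ⟨C, hC, ht⟩ => ⟨C, hC, fun x hx => ht x (hst hx)⟩) ?_ fun x hx => ?_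
  · rintro s t ⟨C, hC, hs⟩ ⟨D, -, ht⟩
    refine ⟨max C D, lt_max_of_lt_left hC, fun x hx => ?_⟩
    rcases hx with hx | hx
    · exact (hs x hx).trans (by gcongr; exact le_max_left C D)
    · exact (ht x hx).trans (by gcongr; exact le_max_right C D)
  · obtain ⟨C, hC, hbound⟩ := (h x hx).exists_pos
    exact ⟨_, hbound.bound, C, hC, fun y hy => hy⟩

lemma isTheta_sub_sq_of_contDiffOn {f : ℝ → ℝ} {s : Set ℝ} {x₀ : ℝ} (hs : Convex ℝ s)
    (hx₀ : x₀ ∈ s) (hf : ContDiffOn ℝ 2 f s) (h₀ : f x₀ = 0) (h₁ : derivWithin f s x₀ = 0)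
    (h₂ : iteratedDerivWithin 2 f s x₀ ≠ 0) : f =Θ[𝓝[s] x₀] fun x => (x - x₀) ^ 2 := by
  have h_taylor (x : ℝ) :
      taylorWithinEval f 2 s x₀ x = iteratedDerivWithin 2 f s x₀ / 2 * (x - x₀) ^ 2 := by
    simp only [taylorWithinEval_succ, taylor_within_zero_eval, h₀, zero_add,
      iteratedDerivWithin_one, h₁, smul_eq_mul, Nat.factorial, Nat.reduceAdd,
      Nat.cast_one]
    ring
  have h_littleO := taylor_isLittleO hs hx₀ hf
  simp only [h_taylor] at h_littleO
  have h_coeff : iteratedDerivWithin 2 f s x₀ / 2 ≠ 0 := div_ne_zero h₂ two_ne_zero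
  have h_equiv : IsEquivalent (𝓝[s] x₀) f
      fun x => iteratedDerivWithin 2 f s x₀ / 2 * (x - x₀) ^ 2 :=
    (isLittleO_const_mul_right_iff h_coeff).2 h_littleO
  exact h_equiv.isTheta.trans ((isTheta_const_mul_left h_coeff).2 (isTheta_refl _ _))

lemma isTheta_one_of_tendsto {X : Type*} {l : Filter X} {f : X → ℝ} {a : ℝ} (ha : a ≠ 0)
    (hf : Tendsto f l (𝓝 a)) : f =Θ[l] fun _ => (1 : ℝ) :=
  ((isEquivalent_const_iff_tendsto ha).2 hf).isTheta.trans (isTheta_const_const ha one_ne_zero)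

variable {W η : ℝ → ℝ}

namespace TransitionProfile

lemma reflect (hη : TransitionProfile W η) :
    TransitionProfile (fun t => W (1 - t)) fun s => 1 - η (-s) where
  mem s := ⟨by linarith [(hη.mem (-s)).2], by linarith [(hη.mem (-s)).1]⟩
  init := by norm_num [hη.init]
  ode s := (((hη.ode (-s)).comp s (hasDerivAt_neg s)).const_sub 1).congr_deriv (by simp)
  anti s t hst := sub_lt_sub_left (hη.anti (neg_lt_neg hst)) 1
  tendsto_bot := by simpa using (hη.tendsto_top.comp tendsto_neg_atBot_atTop).const_sub 1
  tendsto_top := by simpa using (hη.tendsto_bot.comp tendsto_neg_atTop_atBot).const_sub 1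

lemma mem_Icc (hη : TransitionProfile W η) (s : ℝ) : η s ∈ Icc (0 : ℝ) 1 :=
  Ioo_subset_Icc_self (hη.mem s)

lemma continuous (hη : TransitionProfile W η) : Continuous η :=
  continuous_iff_continuousAt.2 fun s => (hη.ode s).continuousAt

lemma tendsto_nhdsGT_zero (hη : TransitionProfile W η) : Tendsto η atTop (𝓝[>] 0) :=
  tendsto_nhdsWithin_of_tendsto_nhds_of_eventually_within _ hη.tendsto_top
    (Eventually.of_forall fun s => (hη.mem s).1)

lemma not_eventually_mul_le (hη : TransitionProfile W η) {a : ℝ} (ha : 0 < a) :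
    ¬ ∀ᶠ t in 𝓝[>] (0 : ℝ), a * t ≤ W t := by
  intro h_linear
  obtain ⟨s₀, hs₀⟩ := eventually_atTop.1 (hη.tendsto_nhdsGT_zero.eventually h_linear)
  -- A linear lower bound would make `√η` decrease at a definite rate, hence become negative.
  have h_deriv (s : ℝ) : HasDerivAt (fun r => √(η r)) (-√(W (η s)) / (2 * √(η s))) s :=
    (hη.ode s).sqrt (hη.mem s).1.ne'
  have h_rate (s : ℝ) (hs : s₀ ≤ s) : -√(W (η s)) / (2 * √(η s)) ≤ -(√a / 2) := by
    have h_pos : 0 < √(η s) := Real.sqrt_pos.2 (hη.mem s).1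
    rw [div_le_iff₀ (by positivity)]
    linarith [Real.sqrt_mul ha.le (η s) ▸ Real.sqrt_le_sqrt (hs₀ s hs)]
  have h_le : s₀ ≤ s₀ + 2 * (√(η s₀) + 1) / √a := le_add_of_nonneg_right (by positivity)
  have h_drop := (convex_Ici s₀).image_sub_le_mul_sub_of_deriv_le
    (fun s _ => (h_deriv s).continuousAt.continuousWithinAt)
    (fun s _ => (h_deriv s).differentiableAt.differentiableWithinAt)
    (fun s hs => (h_deriv s).deriv ▸ h_rate s (interior_subset hs)) s₀ self_mem_Ici _ h_le h_le
  have h_eq : -(√a / 2) * (s₀ + 2 * (√(η s₀) + 1) / √a - s₀) = -(√(η s₀) + 1) := by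
    field_simp
    ring
  linarith [Real.sqrt_nonneg (η (s₀ + 2 * (√(η s₀) + 1) / √a))]

lemma deriv_eq_zero_at_zero (hη : TransitionProfile W η) (h_zero : W 0 = 0)
    (h_pos : ∀ t ∈ Ioo (0 : ℝ) 1, 0 < W t) {a : ℝ} (ha : HasDerivWithinAt W a (Icc 0 1) 0) :
    a = 0 := by
  have h_slope : Tendsto (fun t => W t / t) (𝓝[>] 0) (𝓝 a) := by
    have := hasDerivWithinAt_iff_tendsto_slope.1 ha
    rw [Icc_sdiff_left, nhdsWithin_Ioc_eq_nhdsGT zero_lt_one] at this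
    simpa [slope_fun_def, h_zero, div_eq_inv_mul] using this
  have h_nonneg : 0 ≤ a := by
    refine ge_of_tendsto h_slope ?_
    filter_upwards [Ioo_mem_nhdsGT zero_lt_one] with t ht
    exact div_nonneg (h_pos t ht).le ht.1.le
  by_contra h_ne
  have ha_pos : 0 < a := lt_of_le_of_ne h_nonneg (Ne.symm h_ne)
  refine hη.not_eventually_mul_le (half_pos ha_pos) ?_
  filter_upwards [h_slope.eventually (lt_mem_nhds (half_lt_self ha_pos)), self_mem_nhdsWithin]
    with t ht ht_pos
  exact ((lt_div_iff₀ ht_pos).1 ht).le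

lemma le_exp_neg (hη : TransitionProfile W η) {c : ℝ}
    (hW : ∀ t ∈ Ioo (0 : ℝ) 1, 2 * c * (t * (1 - t)) ≤ √(W t)) (hc : 0 ≤ c) {s : ℝ} (hs : 0 ≤ s) :
    η s ≤ exp (-(c * s)) := by
  have h_deriv (r : ℝ) : HasDerivAt (fun r => η r * exp (c * r))
      (-√(W (η r)) * exp (c * r) + η r * (exp (c * r) * c)) r :=
    (hη.ode r).mul (by simpa using ((hasDerivAt_id r).const_mul c).exp)
  have h_anti : AntitoneOn (fun r => η r * exp (c * r)) (Ici 0) := by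
    refine antitoneOn_of_hasDerivWithinAt_nonpos (convex_Ici 0)
      (fun r _ => (h_deriv r).continuousAt.continuousWithinAt)
      (fun r _ => (h_deriv r).hasDerivWithinAt) fun r hr => ?_
    have h_half : η r ≤ 1 / 2 := hη.init ▸ hη.anti.antitone (interior_subset hr)
    have h_rate : c * η r ≤ √(W (η r)) := by
      nlinarith [hW _ (hη.mem r), mul_nonneg hc (hη.mem r).1.le]
    nlinarith [exp_pos (c * r)]
  have h_le := h_anti self_mem_Ici hs hs
  simp only [hη.init, mul_zero, exp_zero, mul_one] at h_le
  rw [exp_neg, ← one_div, le_div_iff₀ (exp_pos _)]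
  linarith

end TransitionProfile

namespace DoubleWell

lemma nonneg (hW : DoubleWell W) {t : ℝ} (ht : t ∈ Icc (0 : ℝ) 1) : 0 ≤ W t := by
  rcases eq_endpoints_or_mem_Ioo_of_mem_Icc ht with rfl | rfl | ht
  · exact hW.zero_at_zero.ge
  · exact hW.zero_at_one.ge
  · exact (hW.pos_on t ht).le

lemma hasDerivWithinAt (hW : DoubleWell W) {t : ℝ} (ht : t ∈ Icc (0 : ℝ) 1) :
    HasDerivWithinAt W (derivWithin W (Icc 0 1) t) (Icc 0 1) t :=
  (hW.contDiffOn.differentiableOn two_ne_zero t ht).hasDerivWithinAt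

lemma derivWithin_zero (hW : DoubleWell W) (hη : TransitionProfile W η) :
    derivWithin W (Icc 0 1) 0 = 0 :=
  hη.deriv_eq_zero_at_zero hW.zero_at_zero hW.pos_on
    (hW.hasDerivWithinAt (left_mem_Icc.2 zero_le_one))

lemma derivWithin_one (hW : DoubleWell W) (hη : TransitionProfile W η) :
    derivWithin W (Icc 0 1) 1 = 0 := by
  have h_refl : MapsTo (fun t : ℝ => 1 - t) (Icc 0 1) (Icc 0 1) :=
    fun t ht => ⟨by linarith [ht.2], by linarith [ht.1]⟩
  have h_deriv :
      HasDerivWithinAt (fun t => W (1 - t)) (-derivWithin W (Icc 0 1) 1) (Icc 0 1) 0 := by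
    have := HasDerivWithinAt.comp_of_eq (0 : ℝ)
      (hW.hasDerivWithinAt (right_mem_Icc.2 zero_le_one))
      ((hasDerivWithinAt_id (0 : ℝ) (Icc (0 : ℝ) 1)).const_sub 1) h_refl (sub_zero 1).symm
    simpa [Function.comp_def] using this
  refine neg_eq_zero.1 (hη.reflect.deriv_eq_zero_at_zero (by simp [hW.zero_at_one]) ?_ h_deriv)
  exact fun t ht => hW.pos_on _ ⟨by linarith [ht.2], by linarith [ht.1]⟩

lemma isTheta_sq (hW : DoubleWell W) (hη : TransitionProfile W η) {x : ℝ}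
    (hx : x ∈ Icc (0 : ℝ) 1) : W =Θ[𝓝[Icc 0 1] x] fun t => t ^ 2 * (1 - t) ^ 2 := by
  have h_tendsto (f : ℝ → ℝ) (hf : Continuous f) : Tendsto f (𝓝[Icc 0 1] x) (𝓝 (f x)) :=
    hf.continuousAt.continuousWithinAt
  rcases eq_endpoints_or_mem_Ioo_of_mem_Icc hx with rfl | rfl | hx'
  · have h_near := isTheta_sub_sq_of_contDiffOn (convex_Icc 0 1) hx hW.contDiffOn
      hW.zero_at_zero (hW.derivWithin_zero hη) hW.second_pos_zero.ne'
    simpa using h_near.mul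
      (isTheta_one_of_tendsto (by norm_num) (h_tendsto (fun t => (1 - t) ^ 2) (by fun_prop))).symm
  · have h_near := isTheta_sub_sq_of_contDiffOn (convex_Icc 0 1) hx hW.contDiffOn
      hW.zero_at_one (hW.derivWithin_one hη) hW.second_pos_one.ne'
    have := (isTheta_one_of_tendsto (by norm_num)
      (h_tendsto (fun t => t ^ 2) (by fun_prop))).symm.mul h_near
    simp only [one_mul, sub_sq_comm _ (1 : ℝ)] at this
    exact this
  · have h_ne : x ^ 2 * (1 - x) ^ 2 ≠ 0 :=
      mul_ne_zero (pow_ne_zero 2 hx'.1.ne') (pow_ne_zero 2 (sub_pos.2 hx'.2).ne')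
    exact (isTheta_one_of_tendsto (hW.pos_on x hx').ne' (hW.contDiffOn.continuousOn x hx)).trans
      (isTheta_one_of_tendsto h_ne (h_tendsto _ (by fun_prop))).symm

lemma exists_sqrt_le_mul (hW : DoubleWell W) (hη : TransitionProfile W η) :
    ∃ C > 0, ∀ t ∈ Icc (0 : ℝ) 1, √(W t) ≤ C * (t * (1 - t)) := by
  obtain ⟨C, hC, h_le⟩ := exists_forall_norm_le_mul_of_isBigO isCompact_Icc
    fun x hx => (hW.isTheta_sq hη hx).isBigO
  refine ⟨√C, Real.sqrt_pos.2 hC, fun t ht => Real.sqrt_le_iff.2 ⟨?_, ?_⟩⟩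
  · exact mul_nonneg (Real.sqrt_nonneg C) (mul_nonneg ht.1 (sub_nonneg.2 ht.2))
  · rw [mul_pow, Real.sq_sqrt hC.le, mul_pow]
    have := h_le t ht
    rwa [Real.norm_of_nonneg (hW.nonneg ht), Real.norm_of_nonneg (by positivity)] at this

lemma exists_mul_le_sqrt (hW : DoubleWell W) (hη : TransitionProfile W η) :
    ∃ c > 0, ∀ t ∈ Icc (0 : ℝ) 1, c * (t * (1 - t)) ≤ √(W t) := by
  obtain ⟨C, hC, h_le⟩ := exists_forall_norm_le_mul_of_isBigO isCompact_Icc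
    fun x hx => (hW.isTheta_sq hη hx).symm.isBigO
  refine ⟨(√C)⁻¹, inv_pos.2 (Real.sqrt_pos.2 hC), fun t ht => Real.le_sqrt_of_sq_le ?_⟩
  have := h_le t ht
  rw [Real.norm_of_nonneg (by positivity), Real.norm_of_nonneg (hW.nonneg ht)] at this
  rwa [mul_pow, inv_pow, Real.sq_sqrt hC.le, mul_pow, inv_mul_le_iff₀ hC]

end DoubleWell

/-- A normalized potential on `[0, 1]` that is continuous and comparable to `t² (1 - t)²`: the
form in which a double well enters the energy estimates. -/
structure QuadraticWells (W : ℝ → ℝ) : Prop where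
  continuousOn : ContinuousOn W (Icc 0 1)
  nonneg {t : ℝ} : t ∈ Icc (0 : ℝ) 1 → 0 ≤ W t
  exists_sqrt_le_mul : ∃ C > 0, ∀ t ∈ Icc (0 : ℝ) 1, √(W t) ≤ C * (t * (1 - t))
  exists_mul_le_sqrt : ∃ c > 0, ∀ t ∈ Icc (0 : ℝ) 1, c * (t * (1 - t)) ≤ √(W t)
  normalized : ∫ t in (0 : ℝ)..1, √(W t) = 1

theorem DoubleWell.quadraticWells (hW : DoubleWell W) (hη : TransitionProfile W η) :
    QuadraticWells W where
  continuousOn := hW.contDiffOn.continuousOn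
  nonneg := hW.nonneg
  exists_sqrt_le_mul := hW.exists_sqrt_le_mul hη
  exists_mul_le_sqrt := hW.exists_mul_le_sqrt hη
  normalized := hW.normalized

namespace QuadraticWells

lemma pos (hW : QuadraticWells W) {t : ℝ} (ht : t ∈ Ioo (0 : ℝ) 1) : 0 < W t := by
  obtain ⟨c, hc, h_le⟩ := hW.exists_mul_le_sqrt
  have := mul_pos hc (mul_pos ht.1 (sub_pos.2 ht.2))
  exact Real.sqrt_pos.1 (this.trans_le (h_le t (Ioo_subset_Icc_self ht)))

lemma eq_zero (hW : QuadraticWells W) {t : ℝ} (ht : t ∈ Icc (0 : ℝ) 1) (h : t * (1 - t) = 0) :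
    W t = 0 := by
  obtain ⟨C, -, h_le⟩ := hW.exists_sqrt_le_mul
  have := h_le t ht
  rw [h, mul_zero] at this
  exact le_antisymm (Real.sqrt_eq_zero'.1 (this.antisymm (Real.sqrt_nonneg _))) (hW.nonneg ht)

lemma zero_at_zero (hW : QuadraticWells W) : W 0 = 0 := hW.eq_zero (by simp) (by simp)

lemma zero_at_one (hW : QuadraticWells W) : W 1 = 0 := hW.eq_zero (by simp) (by simp)

end QuadraticWells

end Wells

/-! ### Rapidly decreasing functions on the line -/

section RapidDecay

/-- A continuous function on the line decaying faster than every power: the class containing all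
densities attached to a transition profile. -/
structure RapidDecay (f : ℝ → ℝ) : Prop where
  continuous : Continuous f
  exists_bound : ∀ N : ℕ, ∃ C, ∀ s, |s| ^ N * |f s| ≤ C

namespace RapidDecay

variable {f g : ℝ → ℝ}

lemma of_abs_le_mul_exp {C k : ℝ} (hf : Continuous f) (hk : 0 < k)
    (h : ∀ s, |f s| ≤ C * exp (-(k * |s|))) : RapidDecay f := by
  refine ⟨hf, fun N => ⟨C * (N.factorial / k ^ N), fun s => ?_⟩⟩
  have h_pow : |s| ^ N ≤ N.factorial / k ^ N * exp (k * |s|) := by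
    have := pow_div_factorial_le_exp (k * |s|) (by positivity) N
    rw [mul_pow, div_le_iff₀ (by positivity)] at this
    rw [div_mul_eq_mul_div, le_div_iff₀ (by positivity)]
    linarith
  calc |s| ^ N * |f s|
      ≤ N.factorial / k ^ N * exp (k * |s|) * (C * exp (-(k * |s|))) := by gcongr; exact h s
    _ = C * (N.factorial / k ^ N) * (exp (k * |s|) * exp (-(k * |s|))) := by ring
    _ = C * (N.factorial / k ^ N) := by rw [← exp_add, add_neg_cancel, exp_zero, mul_one]

lemma of_abs_le {C : ℝ} (hg : RapidDecay g) (hf : Continuous f) (h : ∀ s, |f s| ≤ C * |g s|) :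
    RapidDecay f := by
  refine ⟨hf, fun N => ?_⟩
  obtain ⟨D, hD⟩ := hg.exists_bound N
  refine ⟨|C| * D, fun s => ?_⟩
  calc |s| ^ N * |f s| ≤ |s| ^ N * (|C| * |g s|) := by
        gcongr
        exact (h s).trans (by gcongr; exact le_abs_self C)
    _ = |C| * (|s| ^ N * |g s|) := by ring
    _ ≤ |C| * D := by gcongr; exact hD s

lemma sub_const_mul (hf : RapidDecay f) (a : ℝ) : RapidDecay fun s => (s - a) * f s := by
  refine ⟨by have := hf.continuous; fun_prop, fun N => ?_⟩
  obtain ⟨C, hC⟩ := hf.exists_bound (N + 1)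
  obtain ⟨D, hD⟩ := hf.exists_bound N
  refine ⟨C + |a| * D, fun s => ?_⟩
  calc |s| ^ N * |(s - a) * f s| ≤ |s| ^ N * ((|s| + |a|) * |f s|) := by
        rw [abs_mul]
        gcongr
        exact abs_sub s a
    _ = |s| ^ (N + 1) * |f s| + |a| * (|s| ^ N * |f s|) := by ring
    _ ≤ C + |a| * D := by gcongr; exacts [hC s, hD s]

lemma id_mul (hf : RapidDecay f) : RapidDecay fun s => s * f s := by
  simpa using hf.sub_const_mul 0

lemma integrable (hf : RapidDecay f) : Integrable f := by
  obtain ⟨C, hC⟩ := hf.exists_bound 0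
  obtain ⟨D, hD⟩ := hf.exists_bound (0 + (volume : Measure ℝ).integrablePower)
  have h_norm := integrable_of_le_of_pow_mul_le (μ := volume) (by simpa using hC) hD
    hf.continuous.aestronglyMeasurable
  simp only [pow_zero, one_mul] at h_norm
  exact (integrable_norm_iff hf.continuous.aestronglyMeasurable).1 h_norm

lemma tendsto_atTop (hf : RapidDecay f) : Tendsto f atTop (𝓝 0) := by
  obtain ⟨C, hC⟩ := hf.exists_bound 1
  refine squeeze_zero_norm' ?_ (tendsto_const_nhds.div_atTop tendsto_id : Tendsto (C / ·) _ _)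
  filter_upwards [eventually_gt_atTop 0] with s hs
  rw [le_div_iff₀' hs]
  simpa [abs_of_pos hs] using hC s

end RapidDecay

end RapidDecay

/-! ### The well density and its primitive -/

section WellCdf

/-- `√W` on `[0, 1]`, extended by its (vanishing) boundary values to the whole line. -/
def wellDensity (W : ℝ → ℝ) (t : ℝ) : ℝ := √(W (max 0 (min 1 t)))

/-- The primitive of `wellDensity`: a globally defined monotone extension of `Phi` from `[0, 1]`. -/
def wellCdf (W : ℝ → ℝ) (t : ℝ) : ℝ := ∫ s in (0 : ℝ)..t, wellDensity W s

variable {W : ℝ → ℝ} {t : ℝ}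

lemma wellDensity_nonneg (W : ℝ → ℝ) (t : ℝ) : 0 ≤ wellDensity W t := Real.sqrt_nonneg _

lemma wellDensity_of_mem (ht : t ∈ Icc (0 : ℝ) 1) : wellDensity W t = √(W t) := by
  rw [wellDensity, min_eq_right ht.2, max_eq_right ht.1]

lemma wellCdf_zero (W : ℝ → ℝ) : wellCdf W 0 = 0 := intervalIntegral.integral_same

lemma Phi_eq_wellCdf (ht : t ∈ Icc (0 : ℝ) 1) : Phi W t = wellCdf W t := by
  refine intervalIntegral.integral_congr fun s hs => ?_
  rw [uIcc_of_le ht.1] at hs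
  exact (wellDensity_of_mem ⟨hs.1, hs.2.trans ht.2⟩).symm

lemma Vpot_eq_wellCdf_rpow (n : ℕ) (ht : t ∈ Icc (0 : ℝ) 1) :
    Vpot n W t = wellCdf W t ^ conjExponent n := by
  rw [Vpot, Phi_eq_wellCdf ht, conjExponent]

namespace QuadraticWells

lemma continuous_wellDensity (hW : QuadraticWells W) : Continuous (wellDensity W) :=
  (hW.continuousOn.comp_continuous (by fun_prop) fun _ =>
    ⟨le_max_left _ _, max_le zero_le_one (min_le_left _ _)⟩).sqrt

lemma sq_wellDensity (hW : QuadraticWells W) (ht : t ∈ Icc (0 : ℝ) 1) :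
    wellDensity W t ^ 2 = W t := by
  rw [wellDensity_of_mem ht, Real.sq_sqrt (hW.nonneg ht)]

lemma wellDensity_pos (hW : QuadraticWells W) (ht : t ∈ Ioo (0 : ℝ) 1) : 0 < wellDensity W t := by
  rw [wellDensity_of_mem (Ioo_subset_Icc_self ht)]
  exact Real.sqrt_pos.2 (hW.pos ht)

lemma hasDerivAt_wellCdf (hW : QuadraticWells W) (t : ℝ) :
    HasDerivAt (wellCdf W) (wellDensity W t) t :=
  (hW.continuous_wellDensity.integral_hasStrictDerivAt 0 t).hasDerivAt

lemma continuous_wellCdf (hW : QuadraticWells W) : Continuous (wellCdf W) :=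
  continuous_iff_continuousAt.2 fun t => (hW.hasDerivAt_wellCdf t).continuousAt

lemma wellCdf_one (hW : QuadraticWells W) : wellCdf W 1 = 1 := by
  rw [← Phi_eq_wellCdf (right_mem_Icc.2 zero_le_one)]
  exact hW.normalized

lemma monotone_wellCdf (hW : QuadraticWells W) : Monotone (wellCdf W) :=
  monotone_of_hasDerivAt_nonneg hW.hasDerivAt_wellCdf (wellDensity_nonneg W)

lemma strictMonoOn_wellCdf (hW : QuadraticWells W) : StrictMonoOn (wellCdf W) (Icc 0 1) := by
  refine strictMonoOn_of_deriv_pos (convex_Icc 0 1) hW.continuous_wellCdf.continuousOn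
    fun t ht => ?_
  rw [(hW.hasDerivAt_wellCdf t).deriv]
  exact hW.wellDensity_pos (interior_Icc (a := (0 : ℝ)) ▸ ht)

lemma wellCdf_mem_Icc (hW : QuadraticWells W) (ht : t ∈ Icc (0 : ℝ) 1) :
    wellCdf W t ∈ Icc (0 : ℝ) 1 :=
  ⟨wellCdf_zero W ▸ hW.monotone_wellCdf ht.1, hW.wellCdf_one ▸ hW.monotone_wellCdf ht.2⟩

lemma wellCdf_mem_Ioo (hW : QuadraticWells W) (ht : t ∈ Ioo (0 : ℝ) 1) :
    wellCdf W t ∈ Ioo (0 : ℝ) 1 := by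
  have h_Icc := Ioo_subset_Icc_self ht
  exact ⟨wellCdf_zero W ▸ hW.strictMonoOn_wellCdf (left_mem_Icc.2 zero_le_one) h_Icc ht.1,
    hW.wellCdf_one ▸ hW.strictMonoOn_wellCdf h_Icc (right_mem_Icc.2 zero_le_one) ht.2⟩

lemma exists_wellCdf_le_sq (hW : QuadraticWells W) :
    ∃ C > 0, ∀ t ∈ Icc (0 : ℝ) 1,
      wellCdf W t ≤ C * t ^ 2 ∧ 1 - wellCdf W t ≤ C * (1 - t) ^ 2 := by
  obtain ⟨C, hC, h_sqrt⟩ := hW.exists_sqrt_le_mul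
  have h_diff {a b D : ℝ} (ha : 0 ≤ a) (hab : a ≤ b) (hb : b ≤ 1)
      (hD : ∀ s ∈ Icc a b, s * (1 - s) ≤ D) : wellCdf W b - wellCdf W a ≤ C * D * (b - a) := by
    refine (convex_Icc a b).image_sub_le_mul_sub_of_deriv_le hW.continuous_wellCdf.continuousOn
      (fun s _ => (hW.hasDerivAt_wellCdf s).differentiableAt.differentiableWithinAt)
      (fun s hs => ?_) a (left_mem_Icc.2 hab) b (right_mem_Icc.2 hab) hab
    have hs' := interior_subset hs
    have hs_mem : s ∈ Icc (0 : ℝ) 1 := ⟨ha.trans hs'.1, hs'.2.trans hb⟩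
    rw [(hW.hasDerivAt_wellCdf s).deriv, wellDensity_of_mem hs_mem]
    exact (h_sqrt s hs_mem).trans (by gcongr; exact hD s hs')
  refine ⟨C, hC, fun t ht => ⟨?_, ?_⟩⟩
  · have := h_diff le_rfl ht.1 ht.2 (D := t) fun s hs => by nlinarith [hs.1, hs.2]
    rw [wellCdf_zero] at this
    linarith
  · have := h_diff ht.1 ht.2 le_rfl (D := 1 - t) fun s hs => by nlinarith [hs.1, hs.2, ht.1]
    rw [hW.wellCdf_one] at this
    linarith

lemma exists_wellCdf_mul_one_sub_le (hW : QuadraticWells W) :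
    ∃ C > 0, ∀ t ∈ Icc (0 : ℝ) 1, wellCdf W t * (1 - wellCdf W t) ≤ C * W t := by
  obtain ⟨c, hc, h_sqrt⟩ := hW.exists_mul_le_sqrt
  obtain ⟨D, hD, h_cdf⟩ := hW.exists_wellCdf_le_sq
  refine ⟨D ^ 2 / c ^ 2, by positivity, fun t ht => ?_⟩
  have h_nonneg : 0 ≤ 1 - wellCdf W t := sub_nonneg.2 (hW.wellCdf_mem_Icc ht).2
  have h_low : (c * (t * (1 - t))) ^ 2 ≤ W t := by
    rw [← Real.sq_sqrt (hW.nonneg ht)]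
    exact pow_le_pow_left₀ (mul_nonneg hc.le (mul_nonneg ht.1 (sub_nonneg.2 ht.2))) (h_sqrt t ht) 2
  calc wellCdf W t * (1 - wellCdf W t) ≤ D * t ^ 2 * (D * (1 - t) ^ 2) := by
        gcongr
        exacts [(h_cdf t ht).1, (h_cdf t ht).2]
    _ = D ^ 2 / c ^ 2 * (c * (t * (1 - t))) ^ 2 := by field_simp
    _ ≤ D ^ 2 / c ^ 2 * W t := by gcongr

lemma hasDerivAt_wellCdf_rpow (hW : QuadraticWells W) {q : ℝ} (hq : 1 ≤ q) (t : ℝ) :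
    HasDerivAt (fun t => wellCdf W t ^ q) (q * wellCdf W t ^ (q - 1) * wellDensity W t) t :=
  ((hW.hasDerivAt_wellCdf t).rpow_const (Or.inr hq)).congr_deriv (by ring)

end QuadraticWells

end WellCdf

/-! ### Densities of the transition profile -/

section Profile

lemma sub_rpow_mem_Icc {y q : ℝ} (hy : y ∈ Icc (0 : ℝ) 1) (hq : 1 ≤ q) (hq' : q ≤ 2) :
    y - y ^ q ∈ Icc 0 (y * (1 - y)) := by
  have h_le : y ^ q ≤ y ^ (1 : ℝ) :=
    rpow_le_rpow_of_exponent_ge' hy.1 hy.2 zero_le_one hq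
  have h_ge : y ^ (2 : ℝ) ≤ y ^ q :=
    rpow_le_rpow_of_exponent_ge' hy.1 hy.2 (zero_le_one.trans hq) hq'
  rw [rpow_one] at h_le
  rw [rpow_two] at h_ge
  exact ⟨by linarith, by linarith⟩

/-- The density `-d/ds Φ(η(s))^q` of the constrained volume across the interface; `q = n / (n - 1)`
gives `V(η)`. -/
def volumeDensity (W η : ℝ → ℝ) (q s : ℝ) : ℝ := q * wellCdf W (η s) ^ (q - 1) * W (η s)

/-- The centre of mass of `volumeDensity`: the position at which the sharp interface enclosing the
same volume as the profile lies. -/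
def volumeCentre (W η : ℝ → ℝ) (q : ℝ) : ℝ := ∫ s, s * volumeDensity W η q s

variable {W η : ℝ → ℝ} {q : ℝ}

namespace TransitionProfile

lemma exists_mul_one_sub_le_exp (hη : TransitionProfile W η) (hW : QuadraticWells W) :
    ∃ k > 0, ∀ s, η s * (1 - η s) ≤ exp (-(k * |s|)) := by
  obtain ⟨c, hc, h_sqrt⟩ := hW.exists_mul_le_sqrt
  refine ⟨c / 2, half_pos hc, fun s => ?_⟩
  have ⟨h_pos, h_lt⟩ := hη.mem s
  rcases le_total 0 s with hs | hs
  · have := hη.le_exp_neg (c := c / 2) (fun t ht => by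
      linarith [h_sqrt t (Ioo_subset_Icc_self ht)]) (half_pos hc).le hs
    rw [abs_of_nonneg hs]
    nlinarith
  · have := hη.reflect.le_exp_neg (c := c / 2) (fun t ht => by
      linarith [h_sqrt (1 - t) ⟨sub_nonneg.2 ht.2.le, sub_le_self 1 ht.1.le⟩]) (half_pos hc).le
      (neg_nonneg.2 hs)
    rw [neg_neg] at this
    rw [abs_of_nonpos hs]
    nlinarith

lemma continuous_comp (hη : TransitionProfile W η) (hW : QuadraticWells W) :
    Continuous fun s => W (η s) :=
  hW.continuousOn.comp_continuous hη.continuous hη.mem_Icc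

lemma rapidDecay_comp (hη : TransitionProfile W η) (hW : QuadraticWells W) :
    RapidDecay fun s => W (η s) := by
  obtain ⟨C, hC, h_sqrt⟩ := hW.exists_sqrt_le_mul
  obtain ⟨k, hk, h_exp⟩ := hη.exists_mul_one_sub_le_exp hW
  refine .of_abs_le_mul_exp (C := C ^ 2) (hη.continuous_comp hW) hk fun s => ?_
  have h_nonneg := hW.nonneg (hη.mem_Icc s)
  have h_prod : 0 ≤ η s * (1 - η s) := mul_nonneg (hη.mem s).1.le (sub_nonneg.2 (hη.mem s).2.le)
  calc |W (η s)| = √(W (η s)) ^ 2 := by rw [abs_of_nonneg h_nonneg, Real.sq_sqrt h_nonneg]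
    _ ≤ (C * (η s * (1 - η s))) ^ 2 := by gcongr; exact h_sqrt _ (hη.mem_Icc s)
    _ ≤ C ^ 2 * (η s * (1 - η s)) := by
      rw [mul_pow]
      gcongr
      exact pow_le_of_le_one h_prod (by nlinarith [sq_nonneg (η s - 1 / 2)]) two_ne_zero
    _ ≤ C ^ 2 * exp (-(k * |s|)) := by gcongr; exact h_exp s

lemma wellCdf_mem_Icc (hη : TransitionProfile W η) (hW : QuadraticWells W) (s : ℝ) :
    wellCdf W (η s) ∈ Icc (0 : ℝ) 1 :=
  hW.wellCdf_mem_Icc (hη.mem_Icc s)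

lemma continuous_wellCdf_rpow (hη : TransitionProfile W η) (hW : QuadraticWells W) (hq : 0 ≤ q) :
    Continuous fun s => wellCdf W (η s) ^ q :=
  (hW.continuous_wellCdf.comp hη.continuous).rpow_const fun _ => Or.inr hq

lemma rapidDecay_wellCdf_sub_rpow (hη : TransitionProfile W η) (hW : QuadraticWells W) (hq : 1 ≤ q)
    (hq' : q ≤ 2) : RapidDecay fun s => wellCdf W (η s) - wellCdf W (η s) ^ q := by
  obtain ⟨C, -, h_le⟩ := hW.exists_wellCdf_mul_one_sub_le
  refine (hη.rapidDecay_comp hW).of_abs_le (C := C) ?_ fun s => ?_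
  · exact (hW.continuous_wellCdf.comp hη.continuous).sub
      (hη.continuous_wellCdf_rpow hW (zero_le_one.trans hq))
  · have h_mem := sub_rpow_mem_Icc (hη.wellCdf_mem_Icc hW s) hq hq'
    rw [abs_of_nonneg h_mem.1, abs_of_nonneg (hW.nonneg (hη.mem_Icc s))]
    exact h_mem.2.trans (h_le _ (hη.mem_Icc s))

lemma volumeDensity_nonneg (hη : TransitionProfile W η) (hW : QuadraticWells W) (hq : 0 ≤ q)
    (s : ℝ) : 0 ≤ volumeDensity W η q s :=
  mul_nonneg (mul_nonneg hq (rpow_nonneg (hη.wellCdf_mem_Icc hW s).1 _))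
    (hW.nonneg (hη.mem_Icc s))

lemma rapidDecay_volumeDensity (hη : TransitionProfile W η) (hW : QuadraticWells W) (hq : 1 ≤ q) :
    RapidDecay (volumeDensity W η q) := by
  have hq₀ : 0 ≤ q := zero_le_one.trans hq
  refine (hη.rapidDecay_comp hW).of_abs_le (C := q) ?_ fun s => ?_
  · exact ((hη.continuous_wellCdf_rpow hW (sub_nonneg.2 hq)).const_mul q).mul
      (hη.continuous_comp hW)
  · have h_mem := hη.wellCdf_mem_Icc hW s
    rw [abs_of_nonneg (hη.volumeDensity_nonneg hW hq₀ s), abs_of_nonneg (hW.nonneg (hη.mem_Icc s)),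
      volumeDensity]
    gcongr
    · exact hW.nonneg (hη.mem_Icc s)
    · exact mul_le_of_le_one_right hq₀ (rpow_le_one h_mem.1 h_mem.2 (sub_nonneg.2 hq))

lemma wellDensity_mul_sqrt (hη : TransitionProfile W η) (hW : QuadraticWells W) (s : ℝ) :
    wellDensity W (η s) * √(W (η s)) = W (η s) := by
  rw [wellDensity_of_mem (hη.mem_Icc s), Real.mul_self_sqrt (hW.nonneg (hη.mem_Icc s))]

lemma hasDerivAt_wellCdf (hη : TransitionProfile W η) (hW : QuadraticWells W) (s : ℝ) :
    HasDerivAt (fun s => wellCdf W (η s)) (-W (η s)) s :=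
  ((hW.hasDerivAt_wellCdf (η s)).comp s (hη.ode s)).congr_deriv
    (by rw [mul_neg, hη.wellDensity_mul_sqrt hW])

lemma hasDerivAt_wellCdf_rpow (hη : TransitionProfile W η) (hW : QuadraticWells W) (hq : 1 ≤ q)
    (s : ℝ) : HasDerivAt (fun s => wellCdf W (η s) ^ q) (-volumeDensity W η q s) s :=
  ((hW.hasDerivAt_wellCdf_rpow hq (η s)).comp s (hη.ode s)).congr_deriv
    (by rw [mul_neg, mul_assoc, hη.wellDensity_mul_sqrt hW, volumeDensity])

lemma tendsto_wellCdf_rpow_atBot (hη : TransitionProfile W η) (hW : QuadraticWells W) (hq : 0 < q) :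
    Tendsto (fun s => wellCdf W (η s) ^ q) atBot (𝓝 1) := by
  have := ((hW.continuous_wellCdf.tendsto 1).comp hη.tendsto_bot).rpow_const (p := q) (Or.inr hq.le)
  simpa [hW.wellCdf_one, Function.comp_def] using this

lemma tendsto_wellCdf_rpow_atTop (hη : TransitionProfile W η) (hW : QuadraticWells W) (hq : 0 < q) :
    Tendsto (fun s => wellCdf W (η s) ^ q) atTop (𝓝 0) := by
  have := ((hW.continuous_wellCdf.tendsto 0).comp hη.tendsto_top).rpow_const (p := q) (Or.inr hq.le)
  simpa [wellCdf_zero, Function.comp_def, zero_rpow hq.ne'] using this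

lemma integral_volumeDensity (hη : TransitionProfile W η) (hW : QuadraticWells W) (hq : 1 ≤ q) :
    ∫ s, volumeDensity W η q s = 1 := by
  have hq₀ : 0 < q := zero_lt_one.trans_le hq
  have := integral_of_hasDerivAt_of_tendsto (hη.hasDerivAt_wellCdf_rpow hW hq)
    (hη.rapidDecay_volumeDensity hW hq).integrable.neg (hη.tendsto_wellCdf_rpow_atBot hW hq₀)
    (hη.tendsto_wellCdf_rpow_atTop hW hq₀)
  rw [integral_neg] at this
  linarith

lemma volumeDensity_one (W η : ℝ → ℝ) : volumeDensity W η 1 = fun s => W (η s) := by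
  ext s
  simp [volumeDensity]

lemma integral_comp (hη : TransitionProfile W η) (hW : QuadraticWells W) : ∫ s, W (η s) = 1 := by
  simpa [volumeDensity_one] using hη.integral_volumeDensity hW le_rfl

lemma exists_sq_le_mul_of_le (hη : TransitionProfile W η) (hW : QuadraticWells W) (a : ℝ) :
    ∃ C, ∀ s, a ≤ s → η s ^ 2 ≤ C * W (η s) := by
  obtain ⟨c, hc, h_sqrt⟩ := hW.exists_mul_le_sqrt
  have h_gap : 0 < 1 - η a := sub_pos.2 (hη.mem a).2
  refine ⟨((c * (1 - η a)) ^ 2)⁻¹, fun s hs => ?_⟩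
  rw [← Real.sq_sqrt (hW.nonneg (hη.mem_Icc s)), le_inv_mul_iff₀ (by positivity), ← mul_pow]
  have h_pos := (hη.mem s).1
  refine pow_le_pow_left₀ (by positivity) ((le_trans ?_ (h_sqrt _ (hη.mem_Icc s)))) 2
  calc c * (1 - η a) * η s ≤ c * (1 - η s) * η s := by gcongr; exact hη.anti.antitone hs
    _ = c * (η s * (1 - η s)) := by ring

lemma exists_wellCdf_rpow_le_mul_of_le (hη : TransitionProfile W η) (hW : QuadraticWells W)
    (hq : 1 ≤ q) (a : ℝ) : ∃ C, ∀ s, a ≤ s → wellCdf W (η s) ^ q ≤ C * W (η s) := by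
  obtain ⟨C, hC, h_cdf⟩ := hW.exists_wellCdf_le_sq
  obtain ⟨D, hD⟩ := hη.exists_sq_le_mul_of_le hW a
  refine ⟨C * D, fun s hs => ?_⟩
  have h_mem := hη.wellCdf_mem_Icc hW s
  calc wellCdf W (η s) ^ q ≤ wellCdf W (η s) := rpow_le_self_of_le_one h_mem.1 h_mem.2 hq
    _ ≤ C * η s ^ 2 := (h_cdf _ (hη.mem_Icc s)).1
    _ ≤ C * D * W (η s) := by rw [mul_assoc]; gcongr; exact hD s hs

lemma integrableOn_Ioi_of_le_mul (hη : TransitionProfile W η) (hW : QuadraticWells W) {f : ℝ → ℝ}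
    {a C : ℝ} (hf : Continuous f) (h_nonneg : ∀ s, 0 ≤ f s)
    (h_le : ∀ s, a ≤ s → f s ≤ C * W (η s)) : IntegrableOn f (Ioi a) := by
  refine ((hη.rapidDecay_comp hW).integrable.const_mul C).integrableOn.mono'
    hf.aestronglyMeasurable ?_
  refine (ae_restrict_iff' measurableSet_Ioi).2 (Eventually.of_forall fun s hs => ?_)
  rw [Real.norm_of_nonneg (h_nonneg s)]
  exact h_le s (le_of_lt hs)

lemma integrableOn_Ioi_sq (hη : TransitionProfile W η) (hW : QuadraticWells W) (a : ℝ) :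
    IntegrableOn (fun s => η s ^ 2) (Ioi a) := by
  obtain ⟨C, hC⟩ := hη.exists_sq_le_mul_of_le hW a
  exact hη.integrableOn_Ioi_of_le_mul hW (hη.continuous.pow 2) (fun s => sq_nonneg _) hC

lemma integrableOn_Ioi_wellCdf_rpow (hη : TransitionProfile W η) (hW : QuadraticWells W)
    (hq : 1 ≤ q) (a : ℝ) : IntegrableOn (fun s => wellCdf W (η s) ^ q) (Ioi a) := by
  obtain ⟨C, hC⟩ := hη.exists_wellCdf_rpow_le_mul_of_le hW hq a
  exact hη.integrableOn_Ioi_of_le_mul hW (hη.continuous_wellCdf_rpow hW (zero_le_one.trans hq))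
    (fun s => rpow_nonneg (hη.wellCdf_mem_Icc hW s).1 q) hC

lemma tendsto_sub_mul_wellCdf_rpow_atTop (hη : TransitionProfile W η) (hW : QuadraticWells W)
    (hq : 1 ≤ q) (a : ℝ) : Tendsto (fun s => (s - a) * wellCdf W (η s) ^ q) atTop (𝓝 0) := by
  obtain ⟨C, hC⟩ := hη.exists_wellCdf_rpow_le_mul_of_le hW hq a
  have h_lim := ((hη.rapidDecay_comp hW).sub_const_mul a).tendsto_atTop.const_mul C
  rw [mul_zero] at h_lim
  refine tendsto_of_tendsto_of_tendsto_of_le_of_le' tendsto_const_nhds h_lim ?_ ?_ <;>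
    filter_upwards [eventually_ge_atTop a] with s hs
  · exact mul_nonneg (sub_nonneg.2 hs) (rpow_nonneg (hη.wellCdf_mem_Icc hW s).1 q)
  · rw [mul_left_comm]
    exact mul_le_mul_of_nonneg_left (hC s hs) (sub_nonneg.2 hs)

lemma setIntegral_Ioi_wellCdf_rpow (hη : TransitionProfile W η) (hW : QuadraticWells W) (hq : 1 ≤ q)
    (a : ℝ) :
    ∫ s in Ioi a, wellCdf W (η s) ^ q = ∫ s in Ioi a, (s - a) * volumeDensity W η q s := by
  have h_zero : Tendsto ((fun s => s - a) * fun s => wellCdf W (η s) ^ q) (𝓝[>] a) (𝓝 0) := by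
    have h_cont := (continuous_sub_right a).mul
      (hη.continuous_wellCdf_rpow hW (zero_le_one.trans hq))
    simpa using (h_cont.tendsto a).mono_left nhdsWithin_le_nhds
  have h_parts := integral_Ioi_mul_deriv_eq_deriv_mul (a := a) (u := fun s => s - a)
    (u' := fun _ => 1) (fun s _ => (hasDerivAt_id s).sub_const a)
    (fun s _ => hη.hasDerivAt_wellCdf_rpow hW hq s)
    (by simpa [Pi.mul_def] using
      ((hη.rapidDecay_volumeDensity hW hq).sub_const_mul a).integrable.neg.integrableOn)
    (by simpa [Pi.mul_def] using hη.integrableOn_Ioi_wellCdf_rpow hW hq a)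
    h_zero (hη.tendsto_sub_mul_wellCdf_rpow_atTop hW hq a)
  simp only [mul_neg, integral_neg, one_mul, sub_zero, zero_sub, neg_inj] at h_parts
  exact h_parts.symm

lemma volumeCentre_sub_le_setIntegral_Ioi (hη : TransitionProfile W η) (hW : QuadraticWells W)
    (hq : 1 ≤ q) (a : ℝ) : volumeCentre W η q - a ≤ ∫ s in Ioi a, wellCdf W (η s) ^ q := by
  have h_decay := hη.rapidDecay_volumeDensity hW hq
  have h_int := (h_decay.sub_const_mul a).integrable
  calc volumeCentre W η q - a = ∫ s, (s - a) * volumeDensity W η q s := by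
        simp only [sub_mul]
        rw [integral_sub h_decay.id_mul.integrable (h_decay.integrable.const_mul a),
          integral_const_mul, hη.integral_volumeDensity hW hq, mul_one, volumeCentre]
    _ = (∫ s in Iic a, (s - a) * volumeDensity W η q s)
        + ∫ s in Ioi a, (s - a) * volumeDensity W η q s :=
      (intervalIntegral.integral_Iic_add_Ioi h_int.integrableOn h_int.integrableOn).symm
    _ ≤ ∫ s in Ioi a, (s - a) * volumeDensity W η q s := by
      refine add_le_of_nonpos_left (setIntegral_nonpos measurableSet_Iic fun s hs => ?_)
      exact mul_nonpos_of_nonpos_of_nonneg (sub_nonpos.2 hs)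
        (hη.volumeDensity_nonneg hW (zero_le_one.trans hq) s)
    _ = ∫ s in Ioi a, wellCdf W (η s) ^ q := (hη.setIntegral_Ioi_wellCdf_rpow hW hq a).symm

lemma integral_id_mul_comp_sub_volumeCentre (hη : TransitionProfile W η) (hW : QuadraticWells W)
    (hq : 1 ≤ q) (hq' : q ≤ 2) : (∫ s, s * W (η s)) - volumeCentre W η q
      = ∫ s, (wellCdf W (η s) - wellCdf W (η s) ^ q) := by
  have h_excess := hη.rapidDecay_wellCdf_sub_rpow hW hq hq'
  have h_decay := (hη.rapidDecay_comp hW).id_mul.integrable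
  have h_decay' := (hη.rapidDecay_volumeDensity hW hq).id_mul.integrable
  have h_eq (s : ℝ) : s * (-W (η s) - -volumeDensity W η q s)
      = -(s * W (η s) - s * volumeDensity W η q s) := by ring
  have h_parts := integral_mul_deriv_eq_deriv_mul_of_integrable (u := fun s => s)
    (u' := fun _ => 1) (v := fun s => wellCdf W (η s) - wellCdf W (η s) ^ q)
    (fun s _ => hasDerivAt_id s)
    (fun s _ => (hη.hasDerivAt_wellCdf hW s).sub (hη.hasDerivAt_wellCdf_rpow hW hq s))
    (by simp only [Pi.mul_def, h_eq]; exact (h_decay.sub h_decay').neg)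
    (by simpa only [Pi.mul_def, one_mul] using h_excess.integrable)
    (by simpa only [Pi.mul_def] using h_excess.id_mul.integrable)
  simp only [h_eq, integral_neg, one_mul, neg_inj] at h_parts
  rwa [integral_sub h_decay h_decay'] at h_parts

lemma range_eq (hη : TransitionProfile W η) : range η = Ioo 0 1 := by
  refine Subset.antisymm (range_subset_iff.2 hη.mem) fun t ht => ?_
  exact mem_range_of_exists_le_of_exists_ge hη.continuous
    ((hη.tendsto_top.eventually (gt_mem_nhds ht.1)).exists.imp fun _ h => h.le)
    ((hη.tendsto_bot.eventually (lt_mem_nhds ht.2)).exists.imp fun _ h => h.le)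

lemma range_wellCdf_comp (hη : TransitionProfile W η) (hW : QuadraticWells W) :
    range (fun s => wellCdf W (η s)) = Ioo 0 1 := by
  refine Subset.antisymm (range_subset_iff.2 fun s => hW.wellCdf_mem_Ioo (hη.mem s)) fun y hy => ?_
  have h_ivt := intermediate_value_Ioo zero_le_one hW.continuous_wellCdf.continuousOn
  rw [wellCdf_zero, hW.wellCdf_one] at h_ivt
  obtain ⟨t, ht, rfl⟩ := h_ivt hy
  obtain ⟨s, rfl⟩ := hη.range_eq.symm.subset ht
  exact ⟨s, rfl⟩

lemma setIntegral_Ioo_eq_integral_mul (hη : TransitionProfile W η) (hW : QuadraticWells W)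
    (g : ℝ → ℝ) : ∫ y in Ioo (0 : ℝ) 1, g y = ∫ s, W (η s) * g (wellCdf W (η s)) := by
  have h_inj : InjOn (fun s => wellCdf W (η s)) univ := fun s _ s' _ h =>
    hη.anti.injective (hW.strictMonoOn_wellCdf.injOn (hη.mem_Icc s) (hη.mem_Icc s') h)
  have h_subst := integral_image_eq_integral_abs_deriv_smul MeasurableSet.univ
    (fun s _ => (hη.hasDerivAt_wellCdf hW s).hasDerivWithinAt) h_inj g
  rw [image_univ, hη.range_wellCdf_comp hW, setIntegral_univ] at h_subst
  simpa only [abs_neg, smul_eq_mul, abs_of_nonneg (hW.nonneg (hη.mem_Icc _))] using h_subst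

end TransitionProfile

end Profile

/-! ### The first-order coefficient -/

section CurvatureCoeff

/-- The coefficient `κ₀` of the first-order correction: the offset between the energy centre and the
volume centre of the transition layer. -/
def curvatureCoeff (W η : ℝ → ℝ) (q : ℝ) : ℝ := ∫ s, (s - volumeCentre W η q) * W (η s)

variable {W η : ℝ → ℝ} {q : ℝ} {n : ℕ}

lemma one_lt_conjExponent (hn : 2 ≤ n) : 1 < conjExponent n :=
  (HolderConjugate.conjExponent (by exact_mod_cast hn)).symm.lt

lemma conjExponent_le_two (hn : 2 ≤ n) : conjExponent n ≤ 2 := by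
  have h_cast : (2 : ℝ) ≤ n := by exact_mod_cast hn
  rw [conjExponent, div_le_iff₀] <;> linarith

namespace TransitionProfile

lemma curvatureCoeff_eq_sub (hη : TransitionProfile W η) (hW : QuadraticWells W) (q : ℝ) :
    curvatureCoeff W η q = (∫ s, s * W (η s)) - volumeCentre W η q := by
  have h_decay := hη.rapidDecay_comp hW
  simp only [curvatureCoeff, sub_mul]
  rw [integral_sub h_decay.id_mul.integrable (h_decay.integrable.const_mul _), integral_const_mul,
    hη.integral_comp hW, mul_one]

lemma curvatureCoeff_eq_integral (hη : TransitionProfile W η) (hW : QuadraticWells W) (hq : 1 ≤ q)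
    (hq' : q ≤ 2) : curvatureCoeff W η q = ∫ s, (wellCdf W (η s) - wellCdf W (η s) ^ q) := by
  rw [hη.curvatureCoeff_eq_sub hW, hη.integral_id_mul_comp_sub_volumeCentre hW hq hq']

lemma derivWithin_Vpot_mul_deriv (hη : TransitionProfile W η) (hW : QuadraticWells W) (hn : 2 ≤ n)
    (s : ℝ) : derivWithin (Vpot n W) (Icc 0 1) (η s) * deriv η s
      = -volumeDensity W η (conjExponent n) s := by
  have h_deriv : HasDerivWithinAt (Vpot n W) _ (Icc 0 1) (η s) :=
    (hW.hasDerivAt_wellCdf_rpow (one_lt_conjExponent hn).le (η s)).hasDerivWithinAt.congr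
      (fun t ht => Vpot_eq_wellCdf_rpow n ht) (Vpot_eq_wellCdf_rpow n (hη.mem_Icc s))
  rw [h_deriv.derivWithin (uniqueDiffOn_Icc one_pos _ (hη.mem_Icc s)), (hη.ode s).deriv, mul_neg,
    mul_assoc, hη.wellDensity_mul_sqrt hW, volumeDensity]

lemma integral_derivWithin_Vpot_mul_deriv_add (hη : TransitionProfile W η) (hW : QuadraticWells W)
    (hn : 2 ≤ n) :
    ∫ s, (derivWithin (Vpot n W) (Icc 0 1) (η s) * deriv η s + W (η s)) * s
      = curvatureCoeff W η (conjExponent n) := by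
  have h_vol := hη.rapidDecay_volumeDensity hW (one_lt_conjExponent hn).le
  rw [hη.curvatureCoeff_eq_sub hW, volumeCentre,
    ← integral_sub (hη.rapidDecay_comp hW).id_mul.integrable h_vol.id_mul.integrable]
  congr with s
  rw [hη.derivWithin_Vpot_mul_deriv hW hn]
  ring

end TransitionProfile

end CurvatureCoeff

/-! ### Integrals of radial functions in the volume coordinate -/

section Radial

open Module (finrank)

variable {a : ℝ} {d : ℕ}

lemma image_mul_pow_add_Ioi (hd : d ≠ 0) (ha : 0 < a) (s₀ : ℝ) :
    (fun r : ℝ => a * r ^ d + s₀) '' Ioi 0 = Ioi s₀ := by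
  refine Subset.antisymm (image_subset_iff.2 fun r hr => ?_) fun s hs => ?_
  · exact lt_add_of_pos_left s₀ (mul_pos ha (pow_pos hr d))
  · have h_pos : 0 < (s - s₀) / a := div_pos (sub_pos.2 hs) ha
    refine ⟨((s - s₀) / a) ^ (d⁻¹ : ℝ), rpow_pos_of_pos h_pos _, ?_⟩
    dsimp only
    rw [rpow_inv_natCast_pow h_pos.le hd, mul_div_cancel₀ _ ha.ne', sub_add_cancel]

lemma injOn_mul_pow_add (hd : d ≠ 0) (ha : a ≠ 0) (s₀ : ℝ) :
    InjOn (fun r : ℝ => a * r ^ d + s₀) (Ioi 0) := fun _ hr _ hr' h =>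
  (pow_left_inj₀ (le_of_lt hr) (le_of_lt hr') hd).1 (mul_left_cancel₀ ha (add_right_cancel h))

lemma hasDerivAt_mul_pow_add (a s₀ r : ℝ) (d : ℕ) :
    HasDerivAt (fun r : ℝ => a * r ^ d + s₀) (a * (d * r ^ (d - 1))) r :=
  ((hasDerivAt_pow d r).const_mul a).add_const s₀

lemma abs_deriv_mul_pow_smul (ha : 0 < a) (d : ℕ) (g : ℝ → ℝ) :
    EqOn (fun r => |a * (d * r ^ (d - 1))| • g r) (fun r => (a * d) • r ^ (d - 1) • g r)
      (Ioi 0) := fun r hr => by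
  have h_nonneg : 0 ≤ a * (d * r ^ (d - 1)) := by have := (mem_Ioi.1 hr).le; positivity
  simp only [abs_of_nonneg h_nonneg, smul_eq_mul]
  ring

variable {E : Type*} [NormedAddCommGroup E] [NormedSpace ℝ E] [FiniteDimensional ℝ E]
  [Nontrivial E] [MeasurableSpace E] [BorelSpace E] (μ : Measure E) [μ.IsAddHaarMeasure]
  {g : ℝ → ℝ} {s₀ : ℝ}

lemma integrable_comp_mul_norm_pow_add (ha : 0 < a) (hg : IntegrableOn g (Ioi s₀)) :
    Integrable (fun x : E => g (a * ‖x‖ ^ finrank ℝ E + s₀)) μ := by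
  have hd : finrank ℝ E ≠ 0 := Module.finrank_pos.ne'
  rw [integrable_fun_norm_addHaar μ (f := fun r => g (a * r ^ finrank ℝ E + s₀))]
  rw [← image_mul_pow_add_Ioi hd ha s₀, integrableOn_image_iff_integrableOn_abs_deriv_smul
    measurableSet_Ioi (fun r _ => (hasDerivAt_mul_pow_add a s₀ r _).hasDerivWithinAt)
    (injOn_mul_pow_add hd ha.ne' s₀), integrableOn_congr_fun (abs_deriv_mul_pow_smul ha _ _)
    measurableSet_Ioi] at hg
  exact (integrable_fun_smul_iff (by positivity) _).1 hg

lemma integral_comp_mul_norm_pow_add (ha : 0 < a) (g : ℝ → ℝ) (s₀ : ℝ) :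
    ∫ x : E, g (a * ‖x‖ ^ finrank ℝ E + s₀) ∂μ
      = μ.real (Metric.ball 0 1) * a⁻¹ * ∫ s in Ioi s₀, g s := by
  have hd : finrank ℝ E ≠ 0 := Module.finrank_pos.ne'
  rw [integral_fun_norm_addHaar μ (fun r => g (a * r ^ finrank ℝ E + s₀)),
    ← image_mul_pow_add_Ioi hd ha s₀, integral_image_eq_integral_abs_deriv_smul measurableSet_Ioi
    (fun r _ => (hasDerivAt_mul_pow_add a s₀ r _).hasDerivWithinAt)
    (injOn_mul_pow_add hd ha.ne' s₀),
    setIntegral_congr_fun measurableSet_Ioi (abs_deriv_mul_pow_smul ha _ _), integral_smul]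
  simp only [smul_eq_mul, nsmul_eq_mul]
  field_simp

end Radial

/-! ### The upper bound -/

section UpperBound

/-- The sharp constant `n ω_n^{1/n}` of the isoperimetric inequality in `ℝⁿ`. -/
def isoConst (n : ℕ) : ℝ := n * ballVol n ^ ((1 : ℝ) / n)

/-- The transition profile wrapped around a ball, as a function of the volume coordinate
`s = a‖x‖ⁿ + s₀`, in which radial integrals carry no Jacobian. -/
def radialProfile (n : ℕ) (η : ℝ → ℝ) (a s₀ : ℝ) (x : En n) : ℝ := η (a * ‖x‖ ^ n + s₀)

variable {W η : ℝ → ℝ} {n : ℕ} {a s₀ : ℝ}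

lemma ballVol_pos (n : ℕ) : 0 < ballVol n :=
  ENNReal.toReal_pos (Metric.measure_ball_pos _ _ one_pos).ne' measure_ball_lt_top.ne

lemma isoConst_pos (hn : n ≠ 0) : 0 < isoConst n :=
  mul_pos (by positivity) (rpow_pos_of_pos (ballVol_pos n) _)

lemma isoConst_sq (n : ℕ) : isoConst n ^ 2 = n ^ 2 * ballVol n ^ ((2 : ℝ) / n) := by
  rw [isoConst, mul_pow, ← rpow_mul_natCast (ballVol_pos n).le]
  ring_nf

lemma one_add_rpow_le {k x : ℝ} (hk : 1 ≤ k) (hk' : k ≤ 2) (hx : -1 ≤ x) :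
    (1 + x) ^ k ≤ 1 + k * x + x ^ 2 := by
  have hx' : 0 ≤ 1 + x := by linarith
  calc (1 + x) ^ k = (1 + x) ^ (k - 1) * (1 + x) := by
        rw [← rpow_add_one' hx' (by linarith), sub_add_cancel]
    _ ≤ (1 + (k - 1) * x) * (1 + x) := by
      gcongr
      exact rpow_one_add_le_one_add_mul_self hx (by linarith) (by linarith)
    _ ≤ 1 + k * x + x ^ 2 := by nlinarith [sq_nonneg x]

lemma inv_mul_rpow_mul_le {b M J Q k : ℝ} (hb : 0 < b) (hM : b⁻¹ ≤ M) (hJ : 0 ≤ J) (hk : 1 ≤ k)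
    (hJQ : J ≤ (b ^ k)⁻¹ * Q) : M⁻¹ * M ^ (2 - k) * J ≤ b⁻¹ * Q := by
  have hM_pos : 0 < M := (inv_pos.2 hb).trans_le hM
  calc M⁻¹ * M ^ (2 - k) * J = (M⁻¹) ^ (k - 1) * J := by
        rw [inv_rpow hM_pos.le, ← rpow_neg hM_pos.le, ← rpow_neg_one, ← rpow_add hM_pos]
        congr 2
        ring
    _ ≤ b ^ (k - 1) * ((b ^ k)⁻¹ * Q) := by
      gcongr ?_ * ?_
      exact rpow_le_rpow (by positivity) (inv_le_of_inv_le₀ hb hM) (sub_nonneg.2 hk)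
    _ = b⁻¹ * Q := by
      rw [← mul_assoc, ← rpow_neg hb.le, ← rpow_add hb, ← rpow_neg_one]
      congr 2
      ring

lemma gradExponent_bounds (hn : 2 ≤ n) : 1 ≤ 2 - (2 : ℝ) / n ∧ 2 - (2 : ℝ) / n ≤ 2 := by
  have hn' : (2 : ℝ) ≤ n := by exact_mod_cast hn
  have h_le : (2 : ℝ) / n ≤ 1 := (div_le_one (by linarith)).2 hn'
  have h_nonneg : (0 : ℝ) ≤ 2 / n := by positivity
  constructor <;> linarith

lemma integrable_comp_volumeCoord (hn : n ≠ 0) (ha : 0 < a) {g : ℝ → ℝ}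
    (hg : IntegrableOn g (Ioi s₀)) : Integrable fun x : En n => g (a * ‖x‖ ^ n + s₀) := by
  have := Fin.pos_iff_nonempty.1 (Nat.pos_of_ne_zero hn)
  simpa only [finrank_euclideanSpace_fin]
    using integrable_comp_mul_norm_pow_add (volume : Measure (En n)) ha hg

lemma integral_comp_volumeCoord (hn : n ≠ 0) (ha : 0 < a) (g : ℝ → ℝ) (s₀ : ℝ) :
    ∫ x : En n, g (a * ‖x‖ ^ n + s₀) = ballVol n * a⁻¹ * ∫ s in Ioi s₀, g s := by
  have := Fin.pos_iff_nonempty.1 (Nat.pos_of_ne_zero hn)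
  have h_radial := integral_comp_mul_norm_pow_add (volume : Measure (En n)) ha g s₀
  rwa [finrank_euclideanSpace_fin, Measure.real, ← ballVol] at h_radial

namespace TransitionProfile

lemma integrable_comp_mul_quadratic (hη : TransitionProfile W η) (hW : QuadraticWells W)
    (τ A B : ℝ) :
    Integrable fun s => W (η s) + A * ((s - τ) * W (η s)) + B * ((s - τ) * ((s - τ) * W (η s))) :=
  have h_decay := hη.rapidDecay_comp hW
  have h_first := h_decay.sub_const_mul τ
  (h_decay.integrable.add (h_first.integrable.const_mul A)).add
    ((h_first.sub_const_mul τ).integrable.const_mul B)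

lemma integral_comp_mul_quadratic (hη : TransitionProfile W η) (hW : QuadraticWells W) (τ A B : ℝ) :
    ∫ s, (W (η s) + A * ((s - τ) * W (η s)) + B * ((s - τ) * ((s - τ) * W (η s))))
      = 1 + A * (∫ s, (s - τ) * W (η s)) + B * ∫ s, (s - τ) * ((s - τ) * W (η s)) := by
  have h_decay := hη.rapidDecay_comp hW
  have h_first := h_decay.sub_const_mul τ
  rw [integral_add (h_decay.integrable.fun_add (h_first.integrable.const_mul A))
    ((h_first.sub_const_mul τ).integrable.const_mul B), integral_add h_decay.integrable
    (h_first.integrable.const_mul A), integral_const_mul, integral_const_mul, hη.integral_comp hW]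

lemma comp_mul_one_add_rpow_le (hη : TransitionProfile W η) (hW : QuadraticWells W) {k x : ℝ}
    (hk : 1 ≤ k) (hk' : k ≤ 2) (hx : -1 ≤ x) (s : ℝ) :
    W (η s) * (1 + x) ^ k ≤ W (η s) * (1 + k * x + x ^ 2) :=
  mul_le_mul_of_nonneg_left (one_add_rpow_le hk hk' hx) (hW.nonneg (hη.mem_Icc s))

lemma integrableOn_Ioi_comp_mul_rpow (hη : TransitionProfile W η) (hW : QuadraticWells W) {k : ℝ}
    (hk : 1 ≤ k) (hk' : k ≤ 2) (s₀ : ℝ) :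
    IntegrableOn (fun s => W (η s) * (s - s₀) ^ k) (Ioi s₀) := by
  have h_cont : Continuous fun s => W (η s) * (s - s₀) ^ k :=
    (hη.continuous_comp hW).mul ((continuous_sub_right s₀).rpow_const fun _ => Or.inr (by linarith))
  refine (hη.integrable_comp_mul_quadratic hW (s₀ + 1) k 1).integrableOn.mono'
    h_cont.aestronglyMeasurable ?_
  refine (ae_restrict_mem measurableSet_Ioi).mono fun s hs => ?_
  have hs' : 0 < s - s₀ := sub_pos.2 hs
  have h_le := hη.comp_mul_one_add_rpow_le hW (x := s - s₀ - 1) hk hk' (by linarith) s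
  rw [norm_of_nonneg (mul_nonneg (hW.nonneg (hη.mem_Icc s)) (by positivity))]
  rw [add_sub_cancel] at h_le
  exact h_le.trans_eq (by ring)

lemma setIntegral_Ioi_comp_mul_rpow_le (hη : TransitionProfile W η) (hW : QuadraticWells W)
    {b k : ℝ} (hb : 0 < b) (hk : 1 ≤ k) (hk' : k ≤ 2) (τ : ℝ) :
    ∫ s in Ioi (τ - b⁻¹), W (η s) * (s - (τ - b⁻¹)) ^ k
      ≤ (b ^ k)⁻¹ * (1 + k * b * (∫ s, (s - τ) * W (η s))
          + b ^ 2 * ∫ s, (s - τ) * ((s - τ) * W (η s))) := by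
  have hF_int := (hη.integrable_comp_mul_quadratic hW τ (k * b) (b ^ 2)).const_mul (b ^ k)⁻¹
  rw [← hη.integral_comp_mul_quadratic hW, ← integral_const_mul]
  refine (setIntegral_mono_on (hη.integrableOn_Ioi_comp_mul_rpow hW hk hk' _) hF_int.integrableOn
    measurableSet_Ioi fun s hs => ?_).trans
      (setIntegral_le_integral hF_int (ae_of_all _ fun s => ?_))
  · have h_scale : s - (τ - b⁻¹) = b⁻¹ * (1 + b * (s - τ)) := by field_simp; ring
    have h_pos : 0 < b⁻¹ * (1 + b * (s - τ)) := by rw [← h_scale]; exact sub_pos.2 hs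
    have h_pos' : 0 < 1 + b * (s - τ) := pos_of_mul_pos_right h_pos (by positivity)
    rw [h_scale, mul_rpow (by positivity) h_pos'.le, inv_rpow hb.le, mul_left_comm]
    gcongr
    refine (hη.comp_mul_one_add_rpow_le hW hk hk' (x := b * (s - τ)) ?_ s).trans_eq (by ring)
    linarith
  · have h_eq : W (η s) + k * b * ((s - τ) * W (η s)) + b ^ 2 * ((s - τ) * ((s - τ) * W (η s)))
        = W (η s) * (1 + k * (b * (s - τ)) + (b * (s - τ)) ^ 2) := by ring
    simp only [h_eq, Pi.zero_apply]
    have h_quad : 0 ≤ 1 + k * (b * (s - τ)) + (b * (s - τ)) ^ 2 := by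
      nlinarith [sq_nonneg (k / 2 + b * (s - τ))]
    have := hW.nonneg (hη.mem_Icc s)
    positivity

lemma hasFDerivAt_radialProfile (hη : TransitionProfile W η) (hn : 2 ≤ n) (a s₀ : ℝ) (x : En n) :
    HasFDerivAt (radialProfile n η a s₀)
      (-√(W (radialProfile n η a s₀ x)) • a • fderiv ℝ (fun x : En n => ‖x‖ ^ (n : ℝ)) x) x := by
  have hn' : (1 : ℝ) < n := by exact_mod_cast hn
  have h_coord := (((differentiable_norm_rpow hn' x).hasFDerivAt).const_mul a).add_const s₀
  simp only [rpow_natCast] at h_coord ⊢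
  exact (hη.ode (a * ‖x‖ ^ n + s₀)).comp_hasFDerivAt x h_coord

lemma differentiable_radialProfile (hη : TransitionProfile W η) (hn : 2 ≤ n) (a s₀ : ℝ) :
    Differentiable ℝ (radialProfile n η a s₀) := fun x =>
  (hη.hasFDerivAt_radialProfile hn a s₀ x).differentiableAt

lemma sq_norm_fderiv_radialProfile (hη : TransitionProfile W η) (hW : QuadraticWells W) (hn : 2 ≤ n)
    (ha : 0 < a) (s₀ : ℝ) (x : En n) :
    ‖fderiv ℝ (radialProfile n η a s₀) x‖ ^ 2 = n ^ 2 * a ^ ((2 : ℝ) / n)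
      * (W (η (a * ‖x‖ ^ n + s₀)) * (a * ‖x‖ ^ n + s₀ - s₀) ^ (2 - (2 : ℝ) / n)) := by
  have hn' : (1 : ℝ) < n := by exact_mod_cast hn
  have h_exp : (n : ℝ) * (2 - 2 / n) = (n - 1) * (2 : ℕ) := by push_cast; field_simp
  have h_pow : (a * ‖x‖ ^ n) ^ (2 - (2 : ℝ) / n)
      = a ^ (2 - (2 : ℝ) / n) * (‖x‖ ^ ((n : ℝ) - 1)) ^ 2 := by
    rw [mul_rpow ha.le (by positivity), ← rpow_natCast, ← rpow_mul (norm_nonneg x), h_exp,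
      rpow_mul (norm_nonneg x), rpow_natCast]
  have h_split : a ^ 2 = a ^ ((2 : ℝ) / n) * a ^ (2 - (2 : ℝ) / n) := by
    rw [← rpow_add ha, add_sub_cancel, rpow_two]
  rw [(hη.hasFDerivAt_radialProfile hn a s₀ x).fderiv, norm_smul, norm_smul,
    norm_fderiv_norm_id_rpow x hn', norm_neg, norm_of_nonneg (Real.sqrt_nonneg _),
    norm_of_nonneg ha.le, add_sub_cancel_right, h_pow, radialProfile, mul_pow,
    Real.sq_sqrt (hW.nonneg (hη.mem_Icc _)), mul_pow, mul_pow, h_split]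
  ring

lemma h1Box_radialProfile (hη : TransitionProfile W η) (hW : QuadraticWells W) (hn : 2 ≤ n)
    (ha : 0 < a) (s₀ : ℝ) : H1Box n (radialProfile n η a s₀) where
  mem_Icc x := hη.mem_Icc _
  diff := hη.differentiable_radialProfile hn a s₀
  memL2 := (memLp_two_iff_integrable_sq
    (hη.differentiable_radialProfile hn a s₀).continuous.aestronglyMeasurable).2
    (integrable_comp_volumeCoord (by lia) ha (hη.integrableOn_Ioi_sq hW s₀))
  grad_memL2 := by
    have h_bounds := gradExponent_bounds hn
    rw [← memLp_norm_iff (measurable_fderiv ℝ _).aestronglyMeasurable,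
      memLp_two_iff_integrable_sq (measurable_fderiv ℝ _).norm.aestronglyMeasurable]
    simp only [hη.sq_norm_fderiv_radialProfile hW hn ha]
    exact (integrable_comp_volumeCoord (by lia) ha
      (hη.integrableOn_Ioi_comp_mul_rpow hW h_bounds.1 h_bounds.2 s₀)).const_mul _

lemma integral_Vpot_radialProfile (hη : TransitionProfile W η) (hn : n ≠ 0)
    (ha : 0 < a) (s₀ : ℝ) : ∫ x, Vpot n W (radialProfile n η a s₀ x)
      = ballVol n * a⁻¹ * ∫ s in Ioi s₀, wellCdf W (η s) ^ conjExponent n := by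
  rw [← integral_comp_volumeCoord hn ha]
  congr with x
  exact Vpot_eq_wellCdf_rpow n (hη.mem_Icc _)

lemma integral_comp_radialProfile_le (hη : TransitionProfile W η) (hW : QuadraticWells W)
    (hn : n ≠ 0) (ha : 0 < a) (s₀ : ℝ) : ∫ x, W (radialProfile n η a s₀ x) ≤ ballVol n * a⁻¹ := by
  refine (integral_comp_volumeCoord hn ha (fun s => W (η s)) s₀).trans_le ?_
  have h_le : ∫ s in Ioi s₀, W (η s) ≤ 1 := (setIntegral_le_integral
    (hη.rapidDecay_comp hW).integrable (ae_of_all _ fun s => hW.nonneg (hη.mem_Icc s))).trans_eq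
      (hη.integral_comp hW)
  exact mul_le_of_le_one_right (mul_nonneg (ballVol_pos n).le (inv_nonneg.2 ha.le)) h_le

lemma integral_sq_norm_fderiv_radialProfile (hη : TransitionProfile W η) (hW : QuadraticWells W)
    (hn : 2 ≤ n) (ha : 0 < a) (s₀ : ℝ) :
    ∫ x, ‖fderiv ℝ (radialProfile n η a s₀) x‖ ^ 2 = ballVol n * a⁻¹ *
      (n ^ 2 * a ^ ((2 : ℝ) / n) * ∫ s in Ioi s₀, W (η s) * (s - s₀) ^ (2 - (2 : ℝ) / n)) := by
  simp only [hη.sq_norm_fderiv_radialProfile hW hn ha]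
  rw [← integral_const_mul, ← integral_comp_volumeCoord (by lia) ha]

lemma integral_sq_norm_fderiv_radialProfile_le (hη : TransitionProfile W η) (hW : QuadraticWells W)
    (hn : 2 ≤ n) {b M : ℝ} (hb : 0 < b) (hM : b⁻¹ ≤ M) (τ : ℝ) :
    ∫ x, ‖fderiv ℝ (radialProfile n η (ballVol n * M) (τ - b⁻¹)) x‖ ^ 2
      ≤ isoConst n ^ 2 * (b⁻¹ * (1 + (2 - (2 : ℝ) / n) * b * (∫ s, (s - τ) * W (η s))
        + b ^ 2 * ∫ s, (s - τ) * ((s - τ) * W (η s)))) := by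
  have h_bounds := gradExponent_bounds hn
  have hω := ballVol_pos n
  have hM_pos : 0 < M := (inv_pos.2 hb).trans_le hM
  have hJ : 0 ≤ ∫ s in Ioi (τ - b⁻¹), W (η s) * (s - (τ - b⁻¹)) ^ (2 - (2 : ℝ) / n) :=
    setIntegral_nonneg measurableSet_Ioi fun s hs =>
      mul_nonneg (hW.nonneg (hη.mem_Icc s)) (rpow_nonneg (sub_nonneg.2 (le_of_lt hs)) _)
  have h_le := inv_mul_rpow_mul_le hb hM hJ h_bounds.1
    (hη.setIntegral_Ioi_comp_mul_rpow_le hW hb h_bounds.1 h_bounds.2 τ)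
  rw [sub_sub_cancel] at h_le
  rw [hη.integral_sq_norm_fderiv_radialProfile hW hn (mul_pos hω hM_pos), isoConst_sq,
    mul_rpow hω.le hM_pos.le]
  refine Eq.trans_le ?_ (mul_le_mul_of_nonneg_left h_le (by positivity))
  field_simp

lemma AC_radialProfile_le (hη : TransitionProfile W η) (hW : QuadraticWells W) (hn : 2 ≤ n)
    {ε M : ℝ} (hε : 0 < ε) (hM : (isoConst n * ε)⁻¹ ≤ M) (τ : ℝ) :
    AC n W ε (radialProfile n η (ballVol n * M) (τ - (isoConst n * ε)⁻¹))
      ≤ isoConst n * (2 + (2 - (2 : ℝ) / n) * (isoConst n * ε) * (∫ s, (s - τ) * W (η s))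
        + (isoConst n * ε) ^ 2 * ∫ s, (s - τ) * ((s - τ) * W (η s))) := by
  have hω := ballVol_pos n
  have hc := isoConst_pos (n := n) (by lia)
  have hb : 0 < isoConst n * ε := mul_pos hc hε
  have hM_pos : 0 < M := (inv_pos.2 hb).trans_le hM
  have h_grad := hη.integral_sq_norm_fderiv_radialProfile_le hW hn hb hM τ
  have h_well := hη.integral_comp_radialProfile_le hW (n := n) (by lia)
    (mul_pos hω hM_pos) (τ - (isoConst n * ε)⁻¹)
  have h_inv : ballVol n * (ballVol n * M)⁻¹ ≤ isoConst n * ε := by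
    rw [mul_inv, mul_inv_cancel_left₀ hω.ne']
    exact inv_le_of_inv_le₀ hb hM
  rw [AC]
  refine (add_le_add (mul_le_mul_of_nonneg_left h_grad hε.le)
    (mul_le_mul_of_nonneg_left (h_well.trans h_inv) (inv_nonneg.2 hε.le))).trans_eq ?_
  field_simp
  ring

lemma exists_AC_le (hη : TransitionProfile W η) (hW : QuadraticWells W) (hn : 2 ≤ n) :
    ∃ C, ∀ ε > 0, ∃ u, H1Box n u ∧ ∫ x, Vpot n W (u x) = 1 ∧ AC n W ε u ≤ 2 * isoConst n
      * (1 + (1 - 1 / n) * isoConst n * curvatureCoeff W η (conjExponent n) * ε) + C * ε ^ 2 := by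
  set τ := volumeCentre W η (conjExponent n)
  refine ⟨isoConst n ^ 3 * ∫ s, (s - τ) * ((s - τ) * W (η s)), fun ε hε => ?_⟩
  have hω := ballVol_pos n
  have hb : 0 < isoConst n * ε := mul_pos (isoConst_pos (by lia)) hε
  set s₀ := τ - (isoConst n * ε)⁻¹ with hs₀
  have hM := hη.volumeCentre_sub_le_setIntegral_Ioi hW (one_lt_conjExponent hn).le s₀
  rw [hs₀, sub_sub_cancel, ← hs₀] at hM
  set M := ∫ s in Ioi s₀, wellCdf W (η s) ^ conjExponent n with hM_def
  have hM_pos : 0 < M := (inv_pos.2 hb).trans_le hM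
  refine ⟨radialProfile n η (ballVol n * M) s₀, hη.h1Box_radialProfile hW hn (by positivity) _, ?_,
    (hη.AC_radialProfile_le hW hn hε hM τ).trans_eq (by rw [← curvatureCoeff]; ring)⟩
  rw [hη.integral_Vpot_radialProfile (by lia) (by positivity), ← hM_def]
  field_simp

end TransitionProfile

lemma QuadraticWells.AC_nonneg (hW : QuadraticWells W) {ε : ℝ} (hε : 0 ≤ ε) {u : En n → ℝ}
    (hu : ∀ x, u x ∈ Icc (0 : ℝ) 1) : 0 ≤ AC n W ε u :=
  add_nonneg (mul_nonneg hε (integral_nonneg fun _ => by positivity))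
    (mul_nonneg (inv_nonneg.2 hε) (integral_nonneg fun x => hW.nonneg (hu x)))

lemma QuadraticWells.Psi_le_AC (hW : QuadraticWells W) {ε m : ℝ} (hε : 0 ≤ ε) {u : En n → ℝ}
    (hu : H1Box n u) (hm : ∫ x, Vpot n W (u x) = m) : Psi n W ε m ≤ AC n W ε u :=
  csInf_le ⟨0, by rintro _ ⟨v, ⟨hv, -⟩, rfl⟩; exact hW.AC_nonneg hε hv.mem_Icc⟩ ⟨u, ⟨hu, hm⟩, rfl⟩

lemma TransitionProfile.exists_Psi_le (hη : TransitionProfile W η) (hW : QuadraticWells W)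
    (hn : 2 ≤ n) :
    ∃ C, ∀ ε > 0, Psi n W ε 1 ≤ 2 * isoConst n
      * (1 + (1 - 1 / n) * isoConst n * curvatureCoeff W η (conjExponent n) * ε) + C * ε ^ 2 := by
  obtain ⟨C, h_competitor⟩ := hη.exists_AC_le hW hn
  refine ⟨C, fun ε hε => ?_⟩
  obtain ⟨u, hu, h_vol, h_le⟩ := h_competitor ε hε
  exact (hW.Psi_le_AC hε.le hu h_vol).trans h_le

end UpperBound

/-! ### Integral inequalities for double integrals -/

section DoubleIntegral

variable {α β : Type*} [MeasurableSpace α] [MeasurableSpace β]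

-- Minkowski's integral inequality, before dividing by the possibly infinite first factor.
lemma lintegral_lintegral_rpow_le {μ : Measure α} {ν : Measure β} [SFinite μ] [SFinite ν]
    {q q' : ℝ} (hq : q.HolderConjugate q') {k : α → β → ℝ≥0∞}
    (hk : Measurable (Function.uncurry k)) :
    ∫⁻ y, (∫⁻ t, k t y ∂μ) ^ q ∂ν
      ≤ (∫⁻ y, (∫⁻ t, k t y ∂μ) ^ q ∂ν) ^ (1 / q')
        * ∫⁻ t, (∫⁻ y, k t y ^ q ∂ν) ^ (1 / q) ∂μ := by
  set F : β → ℝ≥0∞ := fun y => ∫⁻ t, k t y ∂μ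
  have hF : Measurable F := hk.lintegral_prod_left
  have hF_pow : Measurable fun y => F y ^ (q - 1) := hF.pow_const _
  have h_pow (y : β) : (F y ^ (q - 1)) ^ q' = F y ^ q := by
    rw [← ENNReal.rpow_mul, hq.sub_one_mul_conj]
  have h_split (y : β) : F y ^ q = ∫⁻ t, k t y * F y ^ (q - 1) ∂μ := by
    rw [lintegral_mul_const _ hk.of_uncurry_right]
    nth_rw 1 [← add_sub_cancel 1 q,
      ENNReal.rpow_add_of_nonneg _ _ zero_le_one hq.sub_one_pos.le, ENNReal.rpow_one]
  calc ∫⁻ y, F y ^ q ∂ν = ∫⁻ t, ∫⁻ y, k t y * F y ^ (q - 1) ∂ν ∂μ := by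
        simp only [h_split]
        exact lintegral_lintegral_swap
          ((hk.comp measurable_swap).mul (hF_pow.comp measurable_fst)).aemeasurable
    _ ≤ ∫⁻ t, (∫⁻ y, k t y ^ q ∂ν) ^ (1 / q) * (∫⁻ y, F y ^ q ∂ν) ^ (1 / q') ∂μ :=
        lintegral_mono fun t => by
          simpa only [Pi.mul_apply, h_pow] using ENNReal.lintegral_mul_le_Lp_mul_Lq ν hq
            hk.of_uncurry_left.aemeasurable hF_pow.aemeasurable
    _ = _ := by
        rw [lintegral_mul_const _ ((hk.pow_const q).lintegral_prod_right.pow_const _), mul_comm]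

lemma sq_measure_le_two_mul_setLIntegral {ν : Measure α} [SFinite ν] {S : Set α}
    (hS : MeasurableSet S) {r : Set (α × α)} (hr : MeasurableSet r)
    (h_total : ∀ x ∈ S, ∀ y ∈ S, (x, y) ∈ r ∨ (y, x) ∈ r) :
    ν S * ν S ≤ 2 * ∫⁻ x in S, ν (S ∩ {y | (x, y) ∈ r}) ∂ν := by
  have h_ind : Measurable (r.indicator (1 : α × α → ℝ≥0∞)) := measurable_one.indicator hr
  have h_slice (x : α) : ν (S ∩ {y | (x, y) ∈ r}) = ∫⁻ y in S, r.indicator 1 (x, y) ∂ν := by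
    have h_meas : MeasurableSet {y | (x, y) ∈ r} := measurable_prodMk_left hr
    rw [inter_comm, ← Measure.restrict_apply h_meas, ← lintegral_indicator_one h_meas]
    rfl
  calc ν S * ν S = ∫⁻ _ in S, ∫⁻ _ in S, 1 ∂ν ∂ν := by simp
    _ ≤ ∫⁻ x in S, ∫⁻ y in S, (r.indicator 1 (x, y) + r.indicator 1 (y, x)) ∂ν ∂ν :=
        setLIntegral_mono' hS fun x hx => setLIntegral_mono' hS fun y hy => by
          rcases h_total x hx y hy with h | h <;> simp [indicator_of_mem h]
    _ = ∫⁻ x in S, (∫⁻ y in S, r.indicator 1 (x, y) ∂ν) + ∫⁻ y in S, r.indicator 1 (y, x) ∂ν ∂ν :=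
        lintegral_congr fun x => lintegral_add_left (h_ind.comp measurable_prodMk_left) _
    _ = 2 * ∫⁻ x in S, ν (S ∩ {y | (x, y) ∈ r}) ∂ν := by
        have h_swap := lintegral_lintegral_swap (μ := ν.restrict S) (ν := ν.restrict S)
          (f := fun x y => r.indicator 1 (x, y)) h_ind.aemeasurable
        rw [lintegral_add_left h_ind.lintegral_prod_right', ← h_swap, two_mul]
        simp only [h_slice]

end DoubleIntegral

section Between

variable {ν : Measure ℝ} {a t : ℝ}

lemma measurableSet_setOf_mem_uIcc (a : ℝ) : MeasurableSet {z : ℝ × ℝ | z.2 ∈ uIcc a z.1} :=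
  ((isClosed_le (continuous_const.min continuous_fst) continuous_snd).inter
    (isClosed_le continuous_snd (continuous_const.max continuous_fst))).measurableSet

lemma measure_Ioi_le_measure_Ioi_add (ν : Measure ℝ) (s t : ℝ) :
    ν (Ioi s) ≤ ν (Ioi t) + ν (uIcc s t) := by
  refine (measure_mono fun y hy => ?_).trans (measure_union_le (Ioi t) (uIcc s t))
  rcases lt_or_ge t y with h | h
  · exact Or.inl h
  · exact Or.inr (mem_uIcc_of_le (le_of_lt hy) h)

lemma measurable_measure_uIcc [SFinite ν] (a : ℝ) : Measurable fun t => ν (uIcc a t) :=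
  measurable_measure_prodMk_left (measurableSet_setOf_mem_uIcc a)

lemma measure_uIcc_mul_min_le [SFinite ν] (h_fin : ν (uIcc a t) ≠ ⊤) :
    ν (uIcc a t) * min 1 (ν (uIcc a t)) ≤ 2 * ∫⁻ y in uIcc a t, min 1 (ν (uIcc a y)) ∂ν := by
  set S := uIcc a t
  have h_max : max 1 (ν S) ≠ ⊤ := by simp [h_fin]
  have h_total (x) (hx : x ∈ S) (y) (hy : y ∈ S) : y ∈ uIcc a x ∨ x ∈ uIcc a y := by
    simp only [S, mem_uIcc] at hx hy ⊢
    grind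
  rw [← ENNReal.mul_le_mul_iff_left (zero_lt_one.trans_le (le_max_left 1 (ν S))).ne' h_max,
    mul_assoc, min_mul_max, one_mul, mul_assoc, ← lintegral_mul_const' _ _ h_max]
  refine (sq_measure_le_two_mul_setLIntegral measurableSet_uIcc (measurableSet_setOf_mem_uIcc a)
    h_total).trans (mul_le_mul_right (lintegral_mono fun x => ?_) 2)
  have h_le : ν (S ∩ uIcc a x) ≤ ν (uIcc a x) := measure_mono inter_subset_right
  rcases le_total 1 (ν (uIcc a x)) with h | h
  · rw [min_eq_left h, one_mul]
    exact (measure_mono inter_subset_left).trans (le_max_right _ _)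
  · rw [min_eq_right h]
    exact h_le.trans (le_mul_of_one_le_right' (le_max_left _ _))

lemma volume_setOf_mem_uIcc_le (y : ℝ) :
    volume ({t | y ∈ uIcc (1 / 2) t} ∩ Ioo 0 1) ≤ ENNReal.ofReal (4 * (y * (1 - y))) := by
  rcases lt_trichotomy y (1 / 2) with h | rfl | h
  · calc volume ({t | y ∈ uIcc (1 / 2) t} ∩ Ioo 0 1)
      _ ≤ volume (Ioc 0 y) := measure_mono fun t ⟨h_mem, ht⟩ => by
          simp only [mem_ofPred_eq, mem_uIcc] at h_mem
          exact ⟨ht.1, by grind⟩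
      _ ≤ _ := by
          rw [Real.volume_Ioc]
          rcases le_total y 0 with hy | hy
          · rw [ENNReal.ofReal_of_nonpos (by linarith)]
            exact zero_le
          · exact ENNReal.ofReal_le_ofReal (by nlinarith)
  · calc _ ≤ volume (Ioo (0 : ℝ) 1) := measure_mono inter_subset_right
      _ = _ := by rw [Real.volume_Ioo]; norm_num
  · calc volume ({t | y ∈ uIcc (1 / 2) t} ∩ Ioo 0 1)
      _ ≤ volume (Ico y 1) := measure_mono fun t ⟨h_mem, ht⟩ => by
          simp only [mem_ofPred_eq, mem_uIcc] at h_mem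
          exact ⟨by grind, ht.2⟩
      _ ≤ _ := by
          rw [Real.volume_Ico]
          rcases le_total 1 y with hy | hy
          · rw [ENNReal.ofReal_of_nonpos (by linarith)]
            exact zero_le
          · exact ENNReal.ofReal_le_ofReal (by nlinarith)

lemma lintegral_setLIntegral_uIcc_le [SFinite ν] {h : ℝ → ℝ≥0∞} (hh : Measurable h) :
    ∫⁻ t in Ioo 0 1, ∫⁻ y in uIcc (1 / 2) t, h y ∂ν
      ≤ ∫⁻ y, h y * ENNReal.ofReal (4 * (y * (1 - y))) ∂ν := by
  have h_ind : Measurable ({z : ℝ × ℝ | z.2 ∈ uIcc (1 / 2) z.1}.indicator fun z => h z.2) :=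
    (hh.comp measurable_snd).indicator (measurableSet_setOf_mem_uIcc _)
  have h_set (y : ℝ) : MeasurableSet {t : ℝ | y ∈ uIcc (1 / 2) t} :=
    measurable_prodMk_right (measurableSet_setOf_mem_uIcc _)
  calc ∫⁻ t in Ioo 0 1, ∫⁻ y in uIcc (1 / 2) t, h y ∂ν
      = ∫⁻ t in Ioo 0 1, ∫⁻ y,
          {z : ℝ × ℝ | z.2 ∈ uIcc (1 / 2) z.1}.indicator (fun z => h z.2) (t, y) ∂ν :=
        lintegral_congr fun t => (lintegral_indicator measurableSet_uIcc h).symm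
    _ = ∫⁻ y, (∫⁻ t in Ioo 0 1,
          {z : ℝ × ℝ | z.2 ∈ uIcc (1 / 2) z.1}.indicator (fun z => h z.2) (t, y)) ∂ν :=
        lintegral_lintegral_swap h_ind.aemeasurable
    _ = ∫⁻ y, h y * volume ({t | y ∈ uIcc (1 / 2) t} ∩ Ioo 0 1) ∂ν :=
        lintegral_congr fun y => by
          rw [← Measure.restrict_apply (h_set y), ← setLIntegral_const,
            ← lintegral_indicator (h_set y)]
          rfl
    _ ≤ _ := lintegral_mono fun y => mul_le_mul_right (volume_setOf_mem_uIcc_le y) _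

end Between

/-! ### Quantitative concavity -/

section Concavity

variable {p x y : ℝ}

lemma one_sub_abs_le_rpow (hp : 0 < p) (hp' : p ≤ 1) (hx : 0 ≤ x) : 1 - |x - 1| ≤ x ^ p := by
  rcases le_total x 1 with h | h
  · rw [abs_of_nonpos (by linarith)]
    linarith [self_le_rpow_of_le_one hx h hp']
  · linarith [one_le_rpow h hp.le, abs_nonneg (x - 1)]

-- The bound is multiplied by `x ^ (1 - p) ≤ 1 + (1 - p) * (x - 1)` (Bernoulli).
lemma one_add_mul_sub_sq_le_rpow (hp : 0 < p) (hp' : p ≤ 1) (hx : 0 ≤ x) :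
    1 + p * (x - 1) - (x - 1) ^ 2 ≤ x ^ p := by
  rcases hx.eq_or_lt with rfl | hx
  · rw [zero_rpow hp.ne']
    linarith
  have h_bernoulli : x ^ (1 - p) ≤ 1 + (1 - p) * (x - 1) := by
    simpa using rpow_one_add_le_one_add_mul_self (s := x - 1) (p := 1 - p) (by linarith)
      (by linarith) (by linarith)
  have h_pos : 0 < 1 + (1 - p) * (x - 1) := (rpow_pos_of_pos hx _).trans_le h_bernoulli
  refine le_of_mul_le_mul_right (a := 1 + (1 - p) * (x - 1)) ?_ h_pos
  calc (1 + p * (x - 1) - (x - 1) ^ 2) * (1 + (1 - p) * (x - 1)) ≤ x := by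
        have h_nonneg : 0 ≤ (x - 1) ^ 2 * (p * p + (1 - p) * x) := by
          have := mul_nonneg (sub_nonneg.2 hp') hx.le
          positivity
        nlinarith
    _ = x ^ p * x ^ (1 - p) := by rw [← rpow_add hx, add_sub_cancel, rpow_one]
    _ ≤ x ^ p * (1 + (1 - p) * (x - 1)) := by gcongr

lemma one_add_mul_sub_min_le_rpow (hp : 0 < p) (hp' : p ≤ 1) (hx : 0 ≤ x) :
    1 + p * (x - 1) - min |x - 1| ((x - 1) ^ 2) ≤ x ^ p := by
  rcases min_choice |x - 1| ((x - 1) ^ 2) with h | h <;> rw [h]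
  · rcases le_total x 1 with hx' | hx'
    · linarith [one_sub_abs_le_rpow hp hp' hx, mul_nonneg hp.le (sub_nonneg.2 hx')]
    · rw [abs_of_nonneg (by linarith)]
      nlinarith [one_le_rpow hx' hp.le]
  · exact one_add_mul_sub_sq_le_rpow hp hp' hx

lemma min_self_sq_le {d b : ℝ} (hx : 0 ≤ x) (hd : 0 ≤ d) (hb : 0 ≤ b) (h : x ≤ d + b) :
    min x (x ^ 2) ≤ 4 * (d * min 1 d) + 4 * b ^ 2 := by
  have h_nonneg : 0 ≤ d * min 1 d := mul_nonneg hd (le_min zero_le_one hd)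
  rcases le_total b d with hbd | hbd
  · rcases le_total 1 d with h1 | h1
    · rw [min_eq_left h1]
      linarith [min_le_left x (x ^ 2), sq_nonneg b]
    · rw [min_eq_right h1]
      nlinarith [min_le_right x (x ^ 2)]
  · nlinarith [min_le_right x (x ^ 2)]

variable {α : Type*} [MeasurableSpace α] {P : Measure α} [IsProbabilityMeasure P]
  {M D ρ : α → ℝ} {m B : ℝ}

lemma abs_sub_one_le_of_integral_mul_eq_one (hM : Integrable M P) (hD : Integrable D P)
    (hMD : ∀ᵐ t ∂P, |M t - m| ≤ D t) (hρ_meas : AEStronglyMeasurable ρ P)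
    (hρ : ∀ᵐ t ∂P, ρ t ∈ Icc 0 B) (hρ_int : ∫ t, ρ t ∂P = 1) (hρM : ∫ t, ρ t * M t ∂P = 1) :
    |m - 1| ≤ B * ∫ t, D t ∂P := by
  have hρ_norm : ∀ᵐ t ∂P, ‖ρ t‖ ≤ B := hρ.mono fun t ht => by
    rw [norm_of_nonneg ht.1]
    exact ht.2
  have hρ_integrable : Integrable ρ P := .of_bound hρ_meas B hρ_norm
  have hρM_integrable : Integrable (fun t => ρ t * M t) P := hM.bdd_mul hρ_meas hρ_norm
  have h_eq : 1 - m = ∫ t, ρ t * (M t - m) ∂P := by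
    simp only [mul_sub]
    rw [integral_sub hρM_integrable (hρ_integrable.mul_const m), integral_mul_const, hρM, hρ_int,
      one_mul]
  rw [abs_sub_comm, h_eq, ← integral_const_mul, ← norm_eq_abs]
  refine norm_integral_le_of_norm_le (hD.const_mul B) ?_
  filter_upwards [hMD, hρ_norm] with t ht hρt
  rw [norm_mul]
  exact mul_le_mul hρt ht (norm_nonneg _) ((norm_nonneg _).trans hρt)

lemma integral_abs_sub_one_le (hM : Integrable M P) (hD : Integrable D P)
    (hMD : ∀ᵐ t ∂P, |M t - m| ≤ D t) :
    ∫ t, |M t - 1| ∂P ≤ (∫ t, D t ∂P) + |m - 1| := by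
  calc ∫ t, |M t - 1| ∂P ≤ ∫ t, (D t + |m - 1|) ∂P := by
        refine integral_mono_ae (hM.sub (integrable_const 1)).abs (hD.add (integrable_const _)) ?_
        filter_upwards [hMD] with t ht
        linarith [abs_sub_le (M t) m 1]
    _ = (∫ t, D t ∂P) + |m - 1| := by
        rw [integral_add hD (integrable_const _), integral_const]
        simp

lemma integrable_rpow_of_le_one (hp : 0 < p) (hp' : p ≤ 1) (hM : Integrable M P)
    (hM_nonneg : 0 ≤ᵐ[P] M) : Integrable (fun t => M t ^ p) P := by
  refine ((integrable_const 1).add hM).mono'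
    (hM.1.aemeasurable.pow_const p).aestronglyMeasurable ?_
  filter_upwards [hM_nonneg] with t ht
  rw [norm_of_nonneg (rpow_nonneg ht p)]
  have := rpow_one_add_le_one_add_mul_self (s := M t - 1) (by linarith [show 0 ≤ M t from ht])
    hp.le hp'
  rw [add_sub_cancel] at this
  simp only [Pi.add_apply]
  nlinarith [show 0 ≤ M t from ht]

lemma le_integral_rpow (hp : 0 < p) (hp' : p ≤ 1) (hM : Integrable M P) (hM_nonneg : 0 ≤ᵐ[P] M)
    (hD : Integrable D P) (hMD : ∀ᵐ t ∂P, |M t - m| ≤ D t) :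
    1 + p * ((∫ t, M t ∂P) - 1) - 4 * (∫ t, D t * min 1 (D t) ∂P) - 4 * |m - 1| ^ 2
      ≤ ∫ t, M t ^ p ∂P := by
  have h_min : Integrable (fun t => D t * min 1 (D t)) P := by
    refine hD.mono (hD.1.mul (aestronglyMeasurable_const.inf hD.1)) ?_
    filter_upwards [hMD] with t ht
    have hDt := (abs_nonneg _).trans ht
    rw [norm_mul, norm_of_nonneg (le_min zero_le_one hDt)]
    exact mul_le_of_le_one_right (norm_nonneg _) (min_le_left _ _)
  have h_slope : Integrable (fun t => p * (M t - 1)) P :=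
    (hM.sub (integrable_const 1)).const_mul p
  have h_lin : Integrable (fun t => 1 + p * (M t - 1)) P := (integrable_const 1).add h_slope
  have h_lin_sub : Integrable (fun t => 1 + p * (M t - 1) - 4 * (D t * min 1 (D t))) P :=
    h_lin.sub (h_min.const_mul 4)
  calc 1 + p * ((∫ t, M t ∂P) - 1) - 4 * (∫ t, D t * min 1 (D t) ∂P) - 4 * |m - 1| ^ 2
      = ∫ t, (1 + p * (M t - 1) - 4 * (D t * min 1 (D t)) - 4 * |m - 1| ^ 2) ∂P := by
        rw [integral_sub h_lin_sub (integrable_const _),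
          integral_sub h_lin (h_min.const_mul 4),
          integral_add (integrable_const 1) h_slope, integral_const_mul, integral_const_mul,
          integral_sub hM (integrable_const 1)]
        simp
    _ ≤ ∫ t, M t ^ p ∂P := by
        refine integral_mono_ae (h_lin_sub.sub (integrable_const _))
          (integrable_rpow_of_le_one hp hp' hM hM_nonneg) ?_
        filter_upwards [hM_nonneg, hMD] with t hMt ht
        have h_split := min_self_sq_le (abs_nonneg (M t - 1)) ((abs_nonneg _).trans ht)
          (abs_nonneg (m - 1)) (by linarith [abs_sub_le (M t) m 1])
        rw [sq_abs (M t - 1)] at h_split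
        linarith [one_add_mul_sub_min_le_rpow hp hp' hMt]

lemma le_integral_mul_rpow {γ : α → ℝ} (hp : 0 < p) (hp' : p ≤ 1) (hM : Integrable M P)
    (hM_nonneg : 0 ≤ᵐ[P] M) (hγ_meas : AEStronglyMeasurable γ P) (hγ : ∀ᵐ t ∂P, γ t ∈ Icc 0 B) :
    (∫ t, γ t ∂P) - B * ∫ t, |M t - 1| ∂P ≤ ∫ t, γ t * M t ^ p ∂P := by
  have hγ_norm : ∀ᵐ t ∂P, ‖γ t‖ ≤ B := hγ.mono fun t ht => by
    rw [norm_of_nonneg ht.1]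
    exact ht.2
  have hγ_int : Integrable γ P := .of_bound hγ_meas B hγ_norm
  have h_abs : Integrable (fun t => B * |M t - 1|) P :=
    (hM.sub (integrable_const 1)).abs.const_mul B
  rw [← integral_const_mul, ← integral_sub hγ_int h_abs]
  refine integral_mono_ae (hγ_int.sub h_abs)
    ((integrable_rpow_of_le_one hp hp' hM hM_nonneg).bdd_mul hγ_meas hγ_norm) ?_
  filter_upwards [hM_nonneg, hγ] with t hMt hγt
  have h_le := mul_le_mul_of_nonneg_left (one_sub_abs_le_rpow hp hp' hMt) hγt.1
  have h_B := mul_le_mul_of_nonneg_right hγt.2 (abs_nonneg (M t - 1))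
  linarith

lemma le_integral_one_add_mul_rpow {γ : α → ℝ} {ε : ℝ} (hp : 0 < p) (hp' : p ≤ 1)
    (hM : Integrable M P) (hM_nonneg : 0 ≤ᵐ[P] M) (hD : Integrable D P)
    (hMD : ∀ᵐ t ∂P, |M t - m| ≤ D t) (hε : 0 ≤ ε) (hγ_meas : AEStronglyMeasurable γ P)
    (hγ : ∀ᵐ t ∂P, γ t ∈ Icc 0 B) :
    1 + ε * (∫ t, γ t ∂P) + p * ((∫ t, M t ∂P) - 1) - 4 * (∫ t, D t * min 1 (D t) ∂P)
        - 4 * |m - 1| ^ 2 - ε * B * ∫ t, |M t - 1| ∂P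
      ≤ ∫ t, (1 + ε * γ t) * M t ^ p ∂P := by
  have h_int := integrable_rpow_of_le_one hp hp' hM hM_nonneg
  have h_int' : Integrable (fun t => γ t * M t ^ p) P :=
    h_int.bdd_mul hγ_meas (c := B) (hγ.mono fun t ht => by
      rw [norm_of_nonneg ht.1]
      exact ht.2)
  have h_split : ∫ t, (1 + ε * γ t) * M t ^ p ∂P
      = (∫ t, M t ^ p ∂P) + ε * ∫ t, γ t * M t ^ p ∂P := by
    rw [← integral_const_mul, ← integral_add h_int (h_int'.const_mul ε)]
    simp only [add_mul, one_mul, mul_assoc]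
  have h_flat := le_integral_rpow hp hp' hM hM_nonneg hD hMD
  have h_tilt := mul_le_mul_of_nonneg_left
    (le_integral_mul_rpow hp hp' hM hM_nonneg hγ_meas hγ) hε
  rw [h_split]
  linarith

end Concavity

/-! ### The one-dimensional lower bound -/

section LevelEnergy

/-- `ν` is the distribution of the values of a competitor after they have been rescaled to be
uniformly spaced along the transition, so that the constraint reads `∫ y ^ q ∂ν = 1`, and `ω` is the
potential in the rescaled variable. All that is retained of the energy `E` of the competitor is the
family of lower bounds obtained, for every slope `β ≥ 0`, from Young's inequality and the
isoperimetric inequality (with constant `c`) for the superlevel sets `Ioi t`. The term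
`∫ ω ∂ν` stands on the left so that no subtraction occurs. -/
structure LevelEnergyBound (ω : ℝ → ℝ) (q c ε E : ℝ) (ν : Measure ℝ) : Prop where
  ae_mem : ∀ᵐ y ∂ν, y ∈ Icc (0 : ℝ) 1
  lintegral_rpow : ∫⁻ y, ENNReal.ofReal (y ^ q) ∂ν = 1
  energy_le : ∀ β : ℝ → ℝ≥0∞, Measurable β →
    ENNReal.ofReal (2 * c) * (∫⁻ t in Ioo 0 1, β t * ν (Ioi t) ^ q⁻¹)
        + ENNReal.ofReal ε⁻¹ * ∫⁻ y, ENNReal.ofReal (ω y) ∂ν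
      ≤ ENNReal.ofReal E + ENNReal.ofReal ε⁻¹ * ∫⁻ y, β y ^ 2 * ENNReal.ofReal (ω y) ∂ν

instance isProbabilityMeasure_restrict_Ioo_zero_one :
    IsProbabilityMeasure (volume.restrict (Ioo (0 : ℝ) 1)) := ⟨by simp⟩

lemma ennreal_rpow_le_one_add {p : ℝ} (hp : 0 ≤ p) (hp' : p ≤ 1) (x : ℝ≥0∞) :
    x ^ p ≤ 1 + x := by
  rcases le_total x 1 with hx | hx
  · exact (ENNReal.rpow_le_one hx hp).trans le_self_add
  · calc x ^ p ≤ x ^ (1 : ℝ) := ENNReal.rpow_le_rpow_of_exponent_le hx hp'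
      _ ≤ 1 + x := by rw [ENNReal.rpow_one]; exact le_add_self

lemma lintegral_mul_add_lintegral_one_sub_mul {α : Type*} [MeasurableSpace α] {μ : Measure α}
    {a f : α → ℝ≥0∞} (ha : Measurable a) (ha_le : ∀ y, a y ≤ 1) (hf : Measurable f) :
    ∫⁻ y, a y * f y ∂μ + ∫⁻ y, (1 - a y) * f y ∂μ = ∫⁻ y, f y ∂μ := by
  rw [← lintegral_add_left (by fun_prop)]
  refine lintegral_congr fun y => ?_
  rw [← add_mul, add_tsub_cancel_of_le (ha_le y), one_mul]

lemma le_ofReal_mul_of_ofReal_inv_mul_le {ε x : ℝ} (hε : 0 < ε) {I : ℝ≥0∞}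
    (h : ENNReal.ofReal ε⁻¹ * I ≤ ENNReal.ofReal x) : I ≤ ENNReal.ofReal (ε * x) := by
  rw [ENNReal.ofReal_inv_of_pos hε, mul_comm, ← div_eq_mul_inv,
    ENNReal.div_le_iff (by simpa using hε) ENNReal.ofReal_ne_top] at h
  rwa [mul_comm, ENNReal.ofReal_mul' hε.le]

namespace LevelEnergyBound

variable {ω : ℝ → ℝ} {q c ε E C : ℝ} {ν : Measure ℝ}

lemma measure_Ioi_of_one_le (h : LevelEnergyBound ω q c ε E ν) {t : ℝ} (ht : 1 ≤ t) :
    ν (Ioi t) = 0 :=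
  measure_mono_null (fun y (hy : t < y) (h_mem : y ∈ Icc 0 1) => (ht.trans_lt hy).not_ge h_mem.2)
    (ae_iff.1 h.ae_mem)

lemma lintegral_Ioi_zero_eq (h : LevelEnergyBound ω q c ε E ν) (g : ℝ → ℝ≥0∞) :
    ∫⁻ t in Ioi 0, ν (Ioi t) * g t = ∫⁻ t in Ioo 0 1, ν (Ioi t) * g t := by
  rw [← Ioo_union_Ici_eq_Ioi zero_lt_one, lintegral_union measurableSet_Ici
    (disjoint_left.2 fun t ht ht' => ht.2.not_ge ht'), setLIntegral_eq_zero measurableSet_Ici,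
    add_zero]
  intro t ht
  simp [h.measure_Ioi_of_one_le ht]

lemma lintegral_measure_Ioi (h : LevelEnergyBound ω q c ε E ν) :
    ∫⁻ t in Ioo 0 1, ν (Ioi t) = ∫⁻ y, ENNReal.ofReal y ∂ν := by
  have h_nonneg : 0 ≤ᵐ[ν] id := h.ae_mem.mono fun y hy => hy.1
  have h_cake := lintegral_eq_lintegral_meas_lt ν h_nonneg aemeasurable_id
  have h_restrict := h.lintegral_Ioi_zero_eq 1
  simp only [Pi.one_apply, mul_one] at h_restrict
  exact (h_cake.trans h_restrict).symm

lemma lintegral_mul_measure_Ioi (h : LevelEnergyBound ω q c ε E ν) (hq : 1 ≤ q) :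
    ∫⁻ t in Ioo 0 1, ENNReal.ofReal (q * t ^ (q - 1)) * ν (Ioi t) = 1 := by
  have hq_pos : 0 < q := by linarith
  have h_nonneg : 0 ≤ᵐ[ν] id := h.ae_mem.mono fun y hy => hy.1
  have h_cake := lintegral_rpow_eq_lintegral_meas_lt_mul ν h_nonneg aemeasurable_id hq_pos
  rw [← h.lintegral_rpow]
  refine Eq.trans ?_ h_cake.symm
  rw [show (∫⁻ t in Ioi 0, ν {a | t < id a} * ENNReal.ofReal (t ^ (q - 1))) = _ from
    h.lintegral_Ioi_zero_eq fun t => ENNReal.ofReal (t ^ (q - 1)),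
    ← lintegral_const_mul' _ _ ENNReal.ofReal_ne_top]
  exact lintegral_congr fun t => by rw [ENNReal.ofReal_mul hq_pos.le, mul_assoc, mul_comm (ν _)]

lemma measure_Ioi_le (h : LevelEnergyBound ω q c ε E ν) (hq : 0 ≤ q) {t : ℝ}
    (ht : 0 < t) : ν (Ioi t) ≤ ENNReal.ofReal (t ^ (-q)) := by
  have h_pos : 0 < t ^ q := rpow_pos_of_pos ht q
  have h_markov : ENNReal.ofReal (t ^ q) * ν (Ioi t) ≤ 1 := by
    rw [← h.lintegral_rpow]
    refine le_trans ?_ (mul_meas_ge_le_lintegral₀ (by fun_prop) (ENNReal.ofReal (t ^ q)))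
    gcongr
    exact fun y hy => ENNReal.ofReal_le_ofReal (rpow_le_rpow ht.le (le_of_lt hy) hq)
  rw [rpow_neg ht.le, ENNReal.ofReal_inv_of_pos h_pos]
  exact ENNReal.le_inv_iff_mul_le.2 (by rwa [mul_comm])

lemma measure_Ioi_ne_top (h : LevelEnergyBound ω q c ε E ν) (hq : 0 ≤ q) {t : ℝ}
    (ht : 0 < t) : ν (Ioi t) ≠ ⊤ :=
  ne_top_of_le_ne_top ENNReal.ofReal_ne_top (h.measure_Ioi_le hq ht)

lemma measure_uIcc_ne_top (h : LevelEnergyBound ω q c ε E ν) (hq : 0 ≤ q) {t : ℝ}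
    (ht : 0 < t) : ν (uIcc (1 / 2) t) ≠ ⊤ := by
  have h_pos : 0 < min (1 / 2) t / 2 := by positivity
  exact measure_ne_top_of_subset (fun y hy => (half_lt_self (by positivity)).trans_le hy.1)
    (h.measure_Ioi_ne_top hq h_pos)

lemma one_le_lintegral [SFinite ν] (h : LevelEnergyBound ω q c ε E ν) (hq : 1 < q) :
    1 ≤ ∫⁻ t in Ioo 0 1, ν (Ioi t) ^ q⁻¹ := by
  have h_meas : Measurable (Function.uncurry fun t y : ℝ => (Ioi t).indicator (1 : ℝ → ℝ≥0∞) y) :=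
    (measurable_one.indicator (measurableSet_lt measurable_fst measurable_snd) :
      Measurable ({z : ℝ × ℝ | z.1 < z.2}.indicator (1 : ℝ × ℝ → ℝ≥0∞)))
  have h_inner : ∀ᵐ y ∂ν, (∫⁻ t in Ioo 0 1, (Ioi t).indicator (1 : ℝ → ℝ≥0∞) y) ^ q
      = ENNReal.ofReal (y ^ q) := h.ae_mem.mono fun y hy => by
    have h_set : Iio y ∩ Ioo 0 1 = Ioo 0 y := by
      ext t
      simp only [mem_inter_iff, mem_Iio, mem_Ioo]
      grind
    have h_eq : ∫⁻ t in Ioo 0 1, (Ioi t).indicator (1 : ℝ → ℝ≥0∞) y = ENNReal.ofReal y := by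
      calc _ = ∫⁻ t in Ioo 0 1, (Iio y).indicator 1 t := rfl
        _ = volume (Iio y ∩ Ioo 0 1) := by
            rw [lintegral_indicator_one measurableSet_Iio, Measure.restrict_apply measurableSet_Iio]
        _ = ENNReal.ofReal y := by rw [h_set, Real.volume_Ioo, sub_zero]
    rw [h_eq, ENNReal.ofReal_rpow_of_nonneg hy.1 (by linarith)]
  have h_outer (t : ℝ) : ∫⁻ y, (Ioi t).indicator (1 : ℝ → ℝ≥0∞) y ^ q ∂ν = ν (Ioi t) := by
    rw [← lintegral_indicator_one measurableSet_Ioi]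
    refine lintegral_congr fun y => ?_
    by_cases hy : y ∈ Ioi t <;> simp [hy, zero_lt_one.trans hq]
  have h_minkowski := lintegral_lintegral_rpow_le (μ := volume.restrict (Ioo (0 : ℝ) 1)) (ν := ν)
    (HolderConjugate.conjExponent hq) h_meas
  rw [lintegral_congr_ae h_inner, h.lintegral_rpow, ENNReal.one_rpow, one_mul] at h_minkowski
  simpa only [h_outer, one_div] using h_minkowski

lemma lintegral_potential_le (h : LevelEnergyBound ω q c ε E ν) (hε : 0 < ε) :
    ∫⁻ y, ENNReal.ofReal (ω y) ∂ν ≤ ENNReal.ofReal (ε * E) := by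
  have h_zero := h.energy_le 0 measurable_zero
  simp only [Pi.zero_apply, zero_mul, lintegral_zero, mul_zero, zero_add, ne_eq,
    OfNat.ofNat_ne_zero, not_false_eq_true, zero_pow, add_zero] at h_zero
  exact le_ofReal_mul_of_ofReal_inv_mul_le hε h_zero

lemma two_mul_add_le [SFinite ν] (h : LevelEnergyBound ω q c ε E ν) (hq : 1 < q) (hε : 0 < ε)
    {a : ℝ → ℝ≥0∞} (ha : Measurable a) (ha_le : ∀ y, a y ≤ 1) (hω : Measurable ω) :
    ENNReal.ofReal (2 * c) + ENNReal.ofReal ε⁻¹ * ∫⁻ y, a y * ENNReal.ofReal (ω y) ∂ν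
      ≤ ENNReal.ofReal E + ENNReal.ofReal (2 * c) * ∫⁻ t in Ioo 0 1, a t * ν (Ioi t) ^ q⁻¹ := by
  set w : ℝ → ℝ≥0∞ := fun y => ENNReal.ofReal (ω y)
  set M : ℝ → ℝ≥0∞ := fun t => ν (Ioi t) ^ q⁻¹
  have hw : Measurable w := hω.ennreal_ofReal
  have hM : Measurable M :=
    (Antitone.measurable fun s t hst => measure_mono (Ioi_subset_Ioi hst)).pow_const _
  have h_one_sub : Measurable fun y => 1 - a y := measurable_const.sub ha
  have h_sq : ∫⁻ y, (1 - a y) ^ 2 * w y ∂ν ≤ ∫⁻ y, (1 - a y) * w y ∂ν :=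
    lintegral_mono fun y => mul_le_mul_left
      (pow_le_of_le_one zero_le tsub_le_self two_ne_zero) _
  have h_fin : ENNReal.ofReal ε⁻¹ * ∫⁻ y, (1 - a y) * w y ∂ν ≠ ⊤ :=
    ENNReal.mul_ne_top ENNReal.ofReal_ne_top <| ne_top_of_le_ne_top ENNReal.ofReal_ne_top <|
      (lintegral_mono fun y => mul_le_of_le_one_left' tsub_le_self).trans
        (h.lintegral_potential_le hε)
  have h_energy := h.energy_le _ h_one_sub
  rw [← ENNReal.add_le_add_iff_right h_fin]
  calc ENNReal.ofReal (2 * c) + ENNReal.ofReal ε⁻¹ * ∫⁻ y, a y * w y ∂ν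
        + ENNReal.ofReal ε⁻¹ * ∫⁻ y, (1 - a y) * w y ∂ν
      ≤ ENNReal.ofReal (2 * c) * ((∫⁻ t in Ioo 0 1, a t * M t)
          + ∫⁻ t in Ioo 0 1, (1 - a t) * M t) + ENNReal.ofReal ε⁻¹ * ∫⁻ y, w y ∂ν := by
        rw [add_assoc, ← mul_add, lintegral_mul_add_lintegral_one_sub_mul ha ha_le hw,
          lintegral_mul_add_lintegral_one_sub_mul ha ha_le hM]
        gcongr
        exact le_mul_of_one_le_right' (h.one_le_lintegral hq)
    _ = ENNReal.ofReal (2 * c) * (∫⁻ t in Ioo 0 1, a t * M t)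
          + (ENNReal.ofReal (2 * c) * (∫⁻ t in Ioo 0 1, (1 - a t) * M t)
            + ENNReal.ofReal ε⁻¹ * ∫⁻ y, w y ∂ν) := by ring
    _ ≤ ENNReal.ofReal (2 * c) * (∫⁻ t in Ioo 0 1, a t * M t)
          + (ENNReal.ofReal E + ENNReal.ofReal ε⁻¹ * ∫⁻ y, (1 - a y) * w y ∂ν) := by
        refine add_le_add_right (h_energy.trans ?_) _
        gcongr
    _ = _ := by ring

lemma lintegral_setLIntegral_uIcc_le_potential [SFinite ν] (h : LevelEnergyBound ω q c ε E ν)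
    (hC : 0 ≤ C) (hCω : ∀ y ∈ Icc (0 : ℝ) 1, y * (1 - y) ≤ C * ω y) {g : ℝ → ℝ≥0∞}
    (hg : Measurable g) :
    ∫⁻ t in Ioo 0 1, ∫⁻ y in uIcc (1 / 2) t, g y ∂ν
      ≤ ENNReal.ofReal (4 * C) * ∫⁻ y, g y * ENNReal.ofReal (ω y) ∂ν := by
  refine (lintegral_setLIntegral_uIcc_le hg).trans ?_
  rw [← lintegral_const_mul' _ _ ENNReal.ofReal_ne_top]
  refine lintegral_mono_ae (h.ae_mem.mono fun y hy => ?_)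
  rw [mul_left_comm (ENNReal.ofReal _), ← ENNReal.ofReal_mul (by positivity)]
  refine mul_le_mul_right (ENNReal.ofReal_le_ofReal ?_) _
  linarith [hCω y hy]

lemma lintegral_measure_uIcc_le [SFinite ν] (h : LevelEnergyBound ω q c ε E ν) (hε : 0 < ε)
    (hC : 0 ≤ C) (hCω : ∀ y ∈ Icc (0 : ℝ) 1, y * (1 - y) ≤ C * ω y) :
    ∫⁻ t in Ioo 0 1, ν (uIcc (1 / 2) t) ≤ ENNReal.ofReal (4 * C * (ε * E)) := by
  have h_le := h.lintegral_setLIntegral_uIcc_le_potential hC hCω measurable_one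
  simp only [Pi.one_apply, setLIntegral_one, one_mul] at h_le
  refine h_le.trans ?_
  rw [ENNReal.ofReal_mul (q := ε * E) (by positivity)]
  exact mul_le_mul_right (h.lintegral_potential_le hε) _

lemma lintegral_measure_uIcc_mul_min_le [SFinite ν] (h : LevelEnergyBound ω q c ε E ν)
    (hq : 0 ≤ q) (hC : 0 ≤ C) (hCω : ∀ y ∈ Icc (0 : ℝ) 1, y * (1 - y) ≤ C * ω y) :
    ∫⁻ t in Ioo 0 1, ν (uIcc (1 / 2) t) * min 1 (ν (uIcc (1 / 2) t))
      ≤ ENNReal.ofReal (8 * C)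
        * ∫⁻ y, min 1 (ν (uIcc (1 / 2) y)) * ENNReal.ofReal (ω y) ∂ν := by
  have h_meas := measurable_const (a := (1 : ℝ≥0∞)).min (measurable_measure_uIcc (ν := ν) (1 / 2))
  calc _ ≤ ∫⁻ t in Ioo 0 1, 2 * ∫⁻ y in uIcc (1 / 2) t, min 1 (ν (uIcc (1 / 2) y)) ∂ν :=
        setLIntegral_mono' measurableSet_Ioo fun t ht =>
          measure_uIcc_mul_min_le (h.measure_uIcc_ne_top hq ht.1)
    _ = 2 * ∫⁻ t in Ioo 0 1, ∫⁻ y in uIcc (1 / 2) t, min 1 (ν (uIcc (1 / 2) y)) ∂ν :=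
        lintegral_const_mul' _ _ ENNReal.ofNat_ne_top
    _ ≤ 2 * (ENNReal.ofReal (4 * C)
          * ∫⁻ y, min 1 (ν (uIcc (1 / 2) y)) * ENNReal.ofReal (ω y) ∂ν) := by
        gcongr
        exact h.lintegral_setLIntegral_uIcc_le_potential hC hCω h_meas
    _ = _ := by
        rw [← mul_assoc, ← ENNReal.ofReal_ofNat 2, ← ENNReal.ofReal_mul zero_le_two]
        ring_nf

lemma min_mul_measure_Ioi_rpow_le (h : LevelEnergyBound ω q c ε E ν) (hq : 1 ≤ q) (hq' : q ≤ 2)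
    (t : ℝ) :
    min 1 (ν (uIcc (1 / 2) t)) * ν (Ioi t) ^ q⁻¹ ≤ 6 * ν (uIcc (1 / 2) t) := by
  have h_half : ν (Ioi (1 / 2)) ≤ 4 := by
    refine (h.measure_Ioi_le (by linarith) one_half_pos).trans ?_
    rw [← ENNReal.ofReal_ofNat 4]
    refine ENNReal.ofReal_le_ofReal ?_
    rw [rpow_neg (by norm_num), ← inv_rpow (by norm_num)]
    calc ((1 / 2 : ℝ)⁻¹) ^ q ≤ (1 / 2 : ℝ)⁻¹ ^ (2 : ℝ) :=
          rpow_le_rpow_of_exponent_le (by norm_num) hq'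
      _ = 4 := by norm_num
  have h_Ioi : ν (Ioi t) ≤ 4 + ν (uIcc (1 / 2) t) := by
    rw [uIcc_comm]
    exact (measure_Ioi_le_measure_Ioi_add ν t (1 / 2)).trans (by gcongr)
  set d := ν (uIcc (1 / 2) t)
  calc min 1 d * ν (Ioi t) ^ q⁻¹ ≤ min 1 d * (1 + ν (Ioi t)) := by
        gcongr
        exact ennreal_rpow_le_one_add (by positivity) (inv_le_one_of_one_le₀ hq) _
    _ ≤ min 1 d * (1 + (4 + d)) := by gcongr
    _ = 5 * min 1 d + min 1 d * d := by ring
    _ ≤ 5 * d + 1 * d := by gcongr <;> simp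
    _ = 6 * d := by ring

lemma lintegral_min_mul_potential_le [SFinite ν] (h : LevelEnergyBound ω q c ε E ν) (hq : 1 < q)
    (hq' : q ≤ 2) (hc : 0 ≤ c) (hε : 0 < ε) (hE : 0 ≤ E) (hω : Measurable ω)
    (hC : 0 ≤ C) (hCω : ∀ y ∈ Icc (0 : ℝ) 1, y * (1 - y) ≤ C * ω y) :
    ∫⁻ y, min 1 (ν (uIcc (1 / 2) y)) * ENNReal.ofReal (ω y) ∂ν
      ≤ ENNReal.ofReal (ε * (E - 2 * c + 48 * c * C * (ε * E))) := by
  have h_rhs : ENNReal.ofReal (2 * c)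
      * (∫⁻ t in Ioo 0 1, min 1 (ν (uIcc (1 / 2) t)) * ν (Ioi t) ^ q⁻¹)
      ≤ ENNReal.ofReal (48 * c * C * (ε * E)) := by
    calc _ ≤ ENNReal.ofReal (2 * c) * (6 * ∫⁻ t in Ioo 0 1, ν (uIcc (1 / 2) t)) := by
          rw [← lintegral_const_mul' _ _ ENNReal.ofNat_ne_top]
          exact mul_le_mul_right
            (lintegral_mono fun t => h.min_mul_measure_Ioi_rpow_le hq.le hq' t) _
      _ ≤ ENNReal.ofReal (2 * c) * (6 * ENNReal.ofReal (4 * C * (ε * E))) := by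
          gcongr
          exact h.lintegral_measure_uIcc_le hε hC hCω
      _ = _ := by
          rw [← ENNReal.ofReal_ofNat 6, ← ENNReal.ofReal_mul (by norm_num),
            ← ENNReal.ofReal_mul (by positivity)]
          ring_nf
  have h_main := (h.two_mul_add_le hq hε
    (measurable_const.min (measurable_measure_uIcc (1 / 2))) (fun _ => min_le_left _ _) hω).trans
      (add_le_add_right h_rhs _)
  rw [← ENNReal.ofReal_add hE (by positivity)] at h_main
  refine le_ofReal_mul_of_ofReal_inv_mul_le hε ?_
  calc _ ≤ ENNReal.ofReal (E + 48 * c * C * (ε * E)) - ENNReal.ofReal (2 * c) :=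
        ENNReal.le_sub_of_add_le_left ENNReal.ofReal_ne_top h_main
    _ = _ := by
        rw [← ENNReal.ofReal_sub _ (by positivity)]
        ring_nf

end LevelEnergyBound

end LevelEnergy

section TiltedEnergy

lemma one_add_mul_sq_mul_le {ε g w b B : ℝ} (hε : 0 ≤ ε) (hg : g ∈ Icc 0 B) (hb : 0 ≤ b)
    (hgw : g * w ≤ b) : (1 + ε * g) ^ 2 * w ≤ w + ε * ((2 + ε * B) * b) := by
  have hg_nonneg := hg.1
  calc (1 + ε * g) ^ 2 * w = w + ε * ((2 + ε * g) * (g * w)) := by ring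
    _ ≤ w + ε * ((2 + ε * g) * b) := by gcongr
    _ ≤ w + ε * ((2 + ε * B) * b) := by
        gcongr
        exact hg.2

lemma setIntegral_Ioo_mul_rpow_sub_one {q : ℝ} (hq : 0 < q) :
    ∫ t in Ioo (0 : ℝ) 1, q * t ^ (q - 1) = 1 := by
  rw [← integral_Ioc_eq_integral_Ioo, ← intervalIntegral.integral_of_le zero_le_one,
    intervalIntegral.integral_const_mul, integral_rpow (Or.inl (by linarith)), sub_add_cancel,
    one_rpow, zero_rpow hq.ne', sub_zero, mul_one_div_cancel hq.ne']

lemma mul_rpow_sub_one_mem_Icc {q t : ℝ} (hq : 1 ≤ q) (hq' : q ≤ 2) (ht : t ∈ Icc (0 : ℝ) 1) :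
    q * t ^ (q - 1) ∈ Icc 0 2 := by
  have h_pow := rpow_le_one ht.1 ht.2 (sub_nonneg.2 hq)
  have h_nonneg := rpow_nonneg ht.1 (q - 1)
  exact ⟨by positivity, by nlinarith⟩

namespace LevelEnergyBound

variable {ω γ : ℝ → ℝ} {q c ε E B C : ℝ} {ν : Measure ℝ}

lemma lintegral_sub_rpow_add_one (h : LevelEnergyBound ω q c ε E ν) (hq : 1 ≤ q) (hq' : q ≤ 2) :
    ∫⁻ y, ENNReal.ofReal (y - y ^ q) ∂ν + 1 = ∫⁻ t in Ioo 0 1, ν (Ioi t) := by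
  rw [h.lintegral_measure_Ioi, ← h.lintegral_rpow, ← lintegral_add_left (by fun_prop)]
  refine lintegral_congr_ae (h.ae_mem.mono fun y hy => ?_)
  simp only
  rw [← ENNReal.ofReal_add (sub_rpow_mem_Icc hy hq hq').1 (rpow_nonneg hy.1 q), sub_add_cancel]

-- The slope `1 + ε * γ` is the first-order correction of the profile slope forced by curvature.
lemma two_mul_lintegral_tilt_le (h : LevelEnergyBound ω q c ε E ν) (hq : 1 ≤ q) (hq' : q ≤ 2)
    (hc : 0 ≤ c) (hε : 0 < ε) (hω : Measurable ω) (hγ : Measurable γ)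
    (hγ_mem : ∀ y ∈ Icc (0 : ℝ) 1, γ y ∈ Icc 0 B)
    (hγω : ∀ y ∈ Icc (0 : ℝ) 1, γ y * ω y ≤ c / q * (y - y ^ q)) :
    ENNReal.ofReal (2 * c)
        * ∫⁻ t in Ioo 0 1, ENNReal.ofReal (1 + ε * γ t) * ν (Ioi t) ^ q⁻¹
      ≤ ENNReal.ofReal E
        + ENNReal.ofReal ((2 + ε * B) * (c / q)) * ∫⁻ y, ENNReal.ofReal (y - y ^ q) ∂ν := by
  set K := (2 + ε * B) * (c / q)
  have hB : 0 ≤ B := (hγ_mem 0 ⟨le_rfl, zero_le_one⟩).1.trans (hγ_mem 0 ⟨le_rfl, zero_le_one⟩).2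
  have h_fin : ENNReal.ofReal ε⁻¹ * ∫⁻ y, ENNReal.ofReal (ω y) ∂ν ≠ ⊤ :=
    ENNReal.mul_ne_top ENNReal.ofReal_ne_top
      (ne_top_of_le_ne_top ENNReal.ofReal_ne_top (h.lintegral_potential_le hε))
  have h_sq : ∀ᵐ y ∂ν, ENNReal.ofReal (1 + ε * γ y) ^ 2 * ENNReal.ofReal (ω y)
      ≤ ENNReal.ofReal (ω y) + ENNReal.ofReal (ε * K) * ENNReal.ofReal (y - y ^ q) := by
    filter_upwards [h.ae_mem] with y hy
    have h_excess := (sub_rpow_mem_Icc hy hq hq').1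
    have hγ_nonneg := (hγ_mem y hy).1
    rw [← ENNReal.ofReal_pow (by positivity), ← ENNReal.ofReal_mul (by positivity),
      ← ENNReal.ofReal_mul (by positivity)]
    refine (ENNReal.ofReal_le_ofReal ?_).trans ENNReal.ofReal_add_le
    exact (one_add_mul_sq_mul_le hε.le (hγ_mem y hy) (by positivity) (hγω y hy)).trans_eq (by ring)
  rw [← ENNReal.add_le_add_iff_right h_fin]
  calc _ ≤ ENNReal.ofReal E + ENNReal.ofReal ε⁻¹
          * ∫⁻ y, ENNReal.ofReal (1 + ε * γ y) ^ 2 * ENNReal.ofReal (ω y) ∂ν :=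
        h.energy_le _ (by fun_prop)
    _ ≤ ENNReal.ofReal E + ENNReal.ofReal ε⁻¹ * ∫⁻ y, (ENNReal.ofReal (ω y)
          + ENNReal.ofReal (ε * K) * ENNReal.ofReal (y - y ^ q)) ∂ν :=
        add_le_add_right (mul_le_mul_right (lintegral_mono_ae h_sq) _) _
    _ = _ := by
        rw [lintegral_add_left hω.ennreal_ofReal, lintegral_const_mul' _ _ ENNReal.ofReal_ne_top,
          mul_add, ← mul_assoc (ENNReal.ofReal ε⁻¹) (ENNReal.ofReal (ε * K)),
          ← ENNReal.ofReal_mul (by positivity), inv_mul_cancel_left₀ hε.ne']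
        ring

lemma two_mul_le_energy [SFinite ν] (h : LevelEnergyBound ω q c ε E ν) (hq : 1 < q) (hc : 0 < c)
    (hε : 0 < ε) (hω : Measurable ω) : 2 * c ≤ E := by
  have h_zero := h.two_mul_add_le hq hε measurable_zero (fun _ => zero_le) hω
  simp only [Pi.zero_apply, zero_mul, lintegral_zero, mul_zero, add_zero] at h_zero
  exact (ENNReal.ofReal_le_ofReal_iff'.1 h_zero).resolve_right (by linarith)

lemma integrable_measureReal_uIcc [SFinite ν] (h : LevelEnergyBound ω q c ε E ν) (hε : 0 < ε)
    (hC : 0 ≤ C) (hCω : ∀ y ∈ Icc (0 : ℝ) 1, y * (1 - y) ≤ C * ω y) :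
    IntegrableOn (fun t => ν.real (uIcc (1 / 2) t)) (Ioo 0 1) :=
  integrable_toReal_of_lintegral_ne_top (measurable_measure_uIcc _).aemeasurable
    (ne_top_of_le_ne_top ENNReal.ofReal_ne_top (h.lintegral_measure_uIcc_le hε hC hCω))

lemma integral_measureReal_uIcc_le [SFinite ν] (h : LevelEnergyBound ω q c ε E ν) (hq : 0 ≤ q)
    (hε : 0 < ε) (hE : 0 ≤ E) (hC : 0 ≤ C)
    (hCω : ∀ y ∈ Icc (0 : ℝ) 1, y * (1 - y) ≤ C * ω y) :
    ∫ t in Ioo 0 1, ν.real (uIcc (1 / 2) t) ≤ 4 * C * (ε * E) := by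
  refine (integral_toReal (measurable_measure_uIcc _).aemeasurable ?_).le.trans
    (ENNReal.toReal_le_of_le_ofReal (by positivity) (h.lintegral_measure_uIcc_le hε hC hCω))
  exact ae_restrict_of_forall_mem measurableSet_Ioo
    fun t ht => (h.measure_uIcc_ne_top hq ht.1).lt_top

lemma integral_measureReal_uIcc_mul_min_le [SFinite ν] (h : LevelEnergyBound ω q c ε E ν)
    (hq : 1 < q) (hq' : q ≤ 2) (hc : 0 ≤ c) (hε : 0 < ε) (hE : 2 * c ≤ E) (hω : Measurable ω)
    (hC : 0 ≤ C) (hCω : ∀ y ∈ Icc (0 : ℝ) 1, y * (1 - y) ≤ C * ω y) :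
    ∫ t in Ioo 0 1, ν.real (uIcc (1 / 2) t) * min 1 (ν.real (uIcc (1 / 2) t))
      ≤ 8 * C * (ε * (E - 2 * c + 48 * c * C * (ε * E))) := by
  have hE' : 0 ≤ E := by linarith
  have hd := measurable_measure_uIcc (ν := ν) (1 / 2)
  have h_meas : Measurable fun t => ν (uIcc (1 / 2) t) * min 1 (ν (uIcc (1 / 2) t)) :=
    hd.mul (measurable_const.min hd)
  have h_fin (t) (ht : t ∈ Ioo (0 : ℝ) 1) := h.measure_uIcc_ne_top (by linarith) ht.1
  have h_toReal : ∫ t in Ioo 0 1, ν.real (uIcc (1 / 2) t) * min 1 (ν.real (uIcc (1 / 2) t))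
      = ∫ t in Ioo 0 1, (ν (uIcc (1 / 2) t) * min 1 (ν (uIcc (1 / 2) t))).toReal := by
    refine setIntegral_congr_fun measurableSet_Ioo fun t ht => ?_
    simp only [Measure.real, ENNReal.toReal_mul,
      ENNReal.toReal_min ENNReal.one_ne_top (h_fin t ht), ENNReal.toReal_one]
  rw [h_toReal, integral_toReal h_meas.aemeasurable]
  · refine ENNReal.toReal_le_of_le_ofReal (by positivity)
      ((h.lintegral_measure_uIcc_mul_min_le (by linarith) hC hCω).trans ?_)
    rw [ENNReal.ofReal_mul (p := 8 * C) (by positivity)]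
    exact mul_le_mul_right (h.lintegral_min_mul_potential_le hq hq' hc hε hE' hω hC hCω) _
  · refine ae_restrict_of_forall_mem measurableSet_Ioo fun t ht => ?_
    exact ENNReal.mul_lt_top (h_fin t ht).lt_top (min_lt_of_left_lt ENNReal.one_lt_top)

lemma abs_measureReal_Ioi_sub_le (h : LevelEnergyBound ω q c ε E ν) (hq : 0 ≤ q) {t : ℝ}
    (ht : 0 < t) : |ν.real (Ioi t) - ν.real (Ioi (1 / 2))| ≤ ν.real (uIcc (1 / 2) t) := by
  have h_Ioi := h.measure_Ioi_ne_top hq ht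
  have h_half := h.measure_Ioi_ne_top hq one_half_pos
  have h_uIcc := h.measure_uIcc_ne_top hq ht
  have h_le := measure_Ioi_le_measure_Ioi_add ν t (1 / 2)
  have h_ge := measure_Ioi_le_measure_Ioi_add ν (1 / 2) t
  rw [uIcc_comm, ← ENNReal.toReal_le_toReal h_Ioi (ENNReal.add_ne_top.2 ⟨h_half, h_uIcc⟩),
    ENNReal.toReal_add h_half h_uIcc] at h_le
  rw [← ENNReal.toReal_le_toReal h_half (ENNReal.add_ne_top.2 ⟨h_Ioi, h_uIcc⟩),
    ENNReal.toReal_add h_Ioi h_uIcc] at h_ge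
  exact abs_le.2 ⟨by simp only [Measure.real]; linarith, by simp only [Measure.real]; linarith⟩

lemma lintegral_measure_Ioi_ne_top [SFinite ν] (h : LevelEnergyBound ω q c ε E ν) (hq : 0 ≤ q)
    (hε : 0 < ε) (hC : 0 ≤ C) (hCω : ∀ y ∈ Icc (0 : ℝ) 1, y * (1 - y) ≤ C * ω y) :
    ∫⁻ t in Ioo 0 1, ν (Ioi t) ≠ ⊤ := by
  have h_le : ∫⁻ t in Ioo 0 1, ν (Ioi t)
      ≤ ∫⁻ t in Ioo 0 1, (ν (Ioi (1 / 2)) + ν (uIcc (1 / 2) t)) :=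
    lintegral_mono fun t => by
      simpa only [uIcc_comm] using measure_Ioi_le_measure_Ioi_add ν t (1 / 2)
  refine ne_top_of_le_ne_top ?_ h_le
  rw [lintegral_add_left measurable_const, setLIntegral_const]
  exact ENNReal.add_ne_top.2
    ⟨ENNReal.mul_ne_top (h.measure_Ioi_ne_top hq one_half_pos) measure_Ioo_lt_top.ne,
      ne_top_of_le_ne_top ENNReal.ofReal_ne_top (h.lintegral_measure_uIcc_le hε hC hCω)⟩

lemma integrable_measureReal_Ioi [SFinite ν] (h : LevelEnergyBound ω q c ε E ν) (hq : 0 ≤ q)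
    (hε : 0 < ε) (hC : 0 ≤ C) (hCω : ∀ y ∈ Icc (0 : ℝ) 1, y * (1 - y) ≤ C * ω y) :
    IntegrableOn (fun t => ν.real (Ioi t)) (Ioo 0 1) :=
  integrable_toReal_of_lintegral_ne_top
    (Antitone.measurable fun _ _ hst => measure_mono (Ioi_subset_Ioi hst)).aemeasurable
    (h.lintegral_measure_Ioi_ne_top hq hε hC hCω)

lemma integral_mul_measureReal_Ioi (h : LevelEnergyBound ω q c ε E ν) (hq : 1 ≤ q) :
    ∫ t in Ioo 0 1, q * t ^ (q - 1) * ν.real (Ioi t) = 1 := by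
  have h_nonneg (t) (ht : t ∈ Ioo (0 : ℝ) 1) : 0 ≤ q * t ^ (q - 1) :=
    mul_nonneg (by linarith) (rpow_nonneg ht.1.le _)
  have h_meas : Measurable fun t : ℝ => ENNReal.ofReal (q * t ^ (q - 1)) * ν (Ioi t) :=
    Measurable.mul (by fun_prop)
      (Antitone.measurable fun _ _ hst => measure_mono (Ioi_subset_Ioi hst))
  have h_toReal : ∫ t in Ioo 0 1, q * t ^ (q - 1) * ν.real (Ioi t)
      = ∫ t in Ioo 0 1, (ENNReal.ofReal (q * t ^ (q - 1)) * ν (Ioi t)).toReal := by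
    refine setIntegral_congr_fun measurableSet_Ioo fun t ht => ?_
    simp only [Measure.real, ENNReal.toReal_mul, ENNReal.toReal_ofReal (h_nonneg t ht)]
  rw [h_toReal, integral_toReal h_meas.aemeasurable, h.lintegral_mul_measure_Ioi hq,
    ENNReal.toReal_one]
  exact ae_restrict_of_forall_mem measurableSet_Ioo fun t ht =>
    ENNReal.mul_lt_top ENNReal.ofReal_lt_top (h.measure_Ioi_ne_top (by linarith) ht.1).lt_top

lemma lintegral_sub_rpow_ne_top [SFinite ν] (h : LevelEnergyBound ω q c ε E ν) (hq : 1 ≤ q)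
    (hq' : q ≤ 2) (hε : 0 < ε) (hC : 0 ≤ C)
    (hCω : ∀ y ∈ Icc (0 : ℝ) 1, y * (1 - y) ≤ C * ω y) :
    ∫⁻ y, ENNReal.ofReal (y - y ^ q) ∂ν ≠ ⊤ := by
  refine ne_top_of_le_ne_top (h.lintegral_measure_Ioi_ne_top (by linarith) hε hC hCω) ?_
  rw [← h.lintegral_sub_rpow_add_one hq hq']
  exact le_self_add

lemma toReal_lintegral_sub_rpow [SFinite ν] (h : LevelEnergyBound ω q c ε E ν) (hq : 1 ≤ q)
    (hq' : q ≤ 2) (hε : 0 < ε) (hC : 0 ≤ C)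
    (hCω : ∀ y ∈ Icc (0 : ℝ) 1, y * (1 - y) ≤ C * ω y) :
    (∫⁻ y, ENNReal.ofReal (y - y ^ q) ∂ν).toReal = (∫ t in Ioo 0 1, ν.real (Ioi t)) - 1 := by
  have h_toReal : ∫ t in Ioo 0 1, ν.real (Ioi t) = (∫⁻ t in Ioo 0 1, ν (Ioi t)).toReal :=
    integral_toReal
      (Antitone.measurable fun _ _ hst => measure_mono (Ioi_subset_Ioi hst)).aemeasurable <|
      ae_restrict_of_forall_mem measurableSet_Ioo
        fun t ht => (h.measure_Ioi_ne_top (by linarith) ht.1).lt_top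
  rw [h_toReal, ← h.lintegral_sub_rpow_add_one hq hq', ENNReal.toReal_add
    (h.lintegral_sub_rpow_ne_top hq hq' hε hC hCω) ENNReal.one_ne_top, ENNReal.toReal_one,
    add_sub_cancel_right]

lemma two_mul_integral_tilt_le [SFinite ν] (h : LevelEnergyBound ω q c ε E ν) (hq : 1 ≤ q)
    (hq' : q ≤ 2) (hc : 0 ≤ c) (hε : 0 < ε) (hE : 0 ≤ E) (hω : Measurable ω) (hC : 0 ≤ C)
    (hCω : ∀ y ∈ Icc (0 : ℝ) 1, y * (1 - y) ≤ C * ω y) (hγ : Measurable γ)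
    (hγ_mem : ∀ y ∈ Icc (0 : ℝ) 1, γ y ∈ Icc 0 B)
    (hγω : ∀ y ∈ Icc (0 : ℝ) 1, γ y * ω y ≤ c / q * (y - y ^ q)) :
    2 * c * ∫ t in Ioo 0 1, (1 + ε * γ t) * ν.real (Ioi t) ^ q⁻¹
      ≤ E + (2 + ε * B) * (c / q) * ((∫ t in Ioo 0 1, ν.real (Ioi t)) - 1) := by
  have hB : 0 ≤ B := (hγ_mem 0 ⟨le_rfl, zero_le_one⟩).1.trans (hγ_mem 0 ⟨le_rfl, zero_le_one⟩).2
  have h_nonneg (t) (ht : t ∈ Ioo (0 : ℝ) 1) : 0 ≤ 1 + ε * γ t :=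
    add_nonneg zero_le_one (mul_nonneg hε.le (hγ_mem t (Ioo_subset_Icc_self ht)).1)
  have h_tilt := h.two_mul_lintegral_tilt_le hq hq' hc hε hω hγ hγ_mem hγω
  have h_fin := ENNReal.mul_ne_top (ENNReal.ofReal_ne_top (r := (2 + ε * B) * (c / q)))
    (h.lintegral_sub_rpow_ne_top hq hq' hε hC hCω)
  have h_toReal : ∫ t in Ioo 0 1, (1 + ε * γ t) * ν.real (Ioi t) ^ q⁻¹
      = ∫ t in Ioo 0 1, (ENNReal.ofReal (1 + ε * γ t) * ν (Ioi t) ^ q⁻¹).toReal := by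
    refine setIntegral_congr_fun measurableSet_Ioo fun t ht => ?_
    simp only [Measure.real, ENNReal.toReal_mul, ENNReal.toReal_rpow,
      ENNReal.toReal_ofReal (h_nonneg t ht)]
  have h_meas : Measurable fun t => ENNReal.ofReal (1 + ε * γ t) * ν (Ioi t) ^ q⁻¹ :=
    Measurable.mul (by fun_prop)
      ((Antitone.measurable fun _ _ hst => measure_mono (Ioi_subset_Ioi hst)).pow_const _)
  rw [h_toReal, integral_toReal h_meas.aemeasurable]
  · have h_real := ENNReal.toReal_mono
      (ENNReal.add_ne_top.2 ⟨ENNReal.ofReal_ne_top, h_fin⟩) h_tilt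
    rwa [ENNReal.toReal_add ENNReal.ofReal_ne_top h_fin, ENNReal.toReal_mul, ENNReal.toReal_mul,
      ENNReal.toReal_ofReal hE, ENNReal.toReal_ofReal (by positivity),
      ENNReal.toReal_ofReal (by positivity),
      h.toReal_lintegral_sub_rpow hq hq' hε hC hCω] at h_real
  · refine ae_restrict_of_forall_mem measurableSet_Ioo fun t ht => ?_
    exact ENNReal.mul_lt_top ENNReal.ofReal_lt_top (ENNReal.rpow_lt_top_of_nonneg (by positivity)
      (h.measure_Ioi_ne_top (by linarith) ht.1))

lemma abs_measureReal_Ioi_half_sub_one_le [SFinite ν] (h : LevelEnergyBound ω q c ε E ν)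
    (hq : 1 ≤ q) (hq' : q ≤ 2) (hε : 0 < ε) (hC : 0 ≤ C)
    (hCω : ∀ y ∈ Icc (0 : ℝ) 1, y * (1 - y) ≤ C * ω y) :
    |ν.real (Ioi (1 / 2)) - 1| ≤ 2 * ∫ t in Ioo 0 1, ν.real (uIcc (1 / 2) t) :=
  abs_sub_one_le_of_integral_mul_eq_one
    (h.integrable_measureReal_Ioi (by linarith) hε hC hCω)
    (h.integrable_measureReal_uIcc hε hC hCω)
    (ae_restrict_of_forall_mem measurableSet_Ioo fun t ht =>
      h.abs_measureReal_Ioi_sub_le (by linarith) ht.1)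
    (by fun_prop)
    (ae_restrict_of_forall_mem measurableSet_Ioo fun t ht =>
      mul_rpow_sub_one_mem_Icc hq hq' (Ioo_subset_Icc_self ht))
    (setIntegral_Ioo_mul_rpow_sub_one (by linarith)) (h.integral_mul_measureReal_Ioi hq)

lemma integral_abs_measureReal_Ioi_sub_one_le [SFinite ν] (h : LevelEnergyBound ω q c ε E ν)
    (hq : 1 ≤ q) (hq' : q ≤ 2) (hε : 0 < ε) (hC : 0 ≤ C)
    (hCω : ∀ y ∈ Icc (0 : ℝ) 1, y * (1 - y) ≤ C * ω y) :
    ∫ t in Ioo 0 1, |ν.real (Ioi t) - 1| ≤ 3 * ∫ t in Ioo 0 1, ν.real (uIcc (1 / 2) t) := by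
  have h_abs := integral_abs_sub_one_le
    (h.integrable_measureReal_Ioi (by linarith) hε hC hCω)
    (h.integrable_measureReal_uIcc hε hC hCω)
    (ae_restrict_of_forall_mem measurableSet_Ioo fun t ht =>
      h.abs_measureReal_Ioi_sub_le (by linarith) ht.1)
  linarith [h.abs_measureReal_Ioi_half_sub_one_le hq hq' hε hC hCω]

lemma integral_measureReal_Ioi_sub_one_le [SFinite ν] (h : LevelEnergyBound ω q c ε E ν)
    (hq : 1 ≤ q) (hq' : q ≤ 2) (hε : 0 < ε) (hC : 0 ≤ C)
    (hCω : ∀ y ∈ Icc (0 : ℝ) 1, y * (1 - y) ≤ C * ω y) :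
    (∫ t in Ioo 0 1, ν.real (Ioi t)) - 1 ≤ 3 * ∫ t in Ioo 0 1, ν.real (uIcc (1 / 2) t) := by
  have hM := h.integrable_measureReal_Ioi (by linarith) hε hC hCω
  calc (∫ t in Ioo 0 1, ν.real (Ioi t)) - 1 = ∫ t in Ioo 0 1, (ν.real (Ioi t) - 1) := by
        rw [integral_sub hM (integrable_const 1), integral_const, probReal_univ, one_smul]
    _ ≤ ∫ t in Ioo 0 1, |ν.real (Ioi t) - 1| :=
        integral_mono (hM.sub (integrable_const 1)) (hM.sub (integrable_const 1)).abs
          fun t => le_abs_self _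
    _ ≤ _ := h.integral_abs_measureReal_Ioi_sub_one_le hq hq' hε hC hCω

-- The mean excess `∫ ν (Ioi t) - 1` enters both the concavity bound and the constraint with the
-- same coefficient `2 * c / q` and cancels to first order.
lemma two_mul_one_add_sub_le [SFinite ν] (h : LevelEnergyBound ω q c ε E ν) (hq : 1 < q)
    (hq' : q ≤ 2) (hc : 0 < c) (hε : 0 < ε) (hω : Measurable ω) (hC : 0 ≤ C)
    (hCω : ∀ y ∈ Icc (0 : ℝ) 1, y * (1 - y) ≤ C * ω y) (hγ : Measurable γ)
    (hγ_mem : ∀ y ∈ Icc (0 : ℝ) 1, γ y ∈ Icc 0 B)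
    (hγω : ∀ y ∈ Icc (0 : ℝ) 1, γ y * ω y ≤ c / q * (y - y ^ q)) :
    2 * c * (1 + ε * ∫ t in Ioo 0 1, γ t)
        - 8 * c * (∫ t in Ioo 0 1, ν.real (uIcc (1 / 2) t) * min 1 (ν.real (uIcc (1 / 2) t)))
        - 32 * c * (∫ t in Ioo 0 1, ν.real (uIcc (1 / 2) t)) ^ 2
        - 9 * c * B * ε * (∫ t in Ioo 0 1, ν.real (uIcc (1 / 2) t)) ≤ E := by
  have hB : 0 ≤ B := (hγ_mem 0 ⟨le_rfl, zero_le_one⟩).1.trans (hγ_mem 0 ⟨le_rfl, zero_le_one⟩).2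
  have hp : 0 < q⁻¹ := inv_pos.2 (by linarith)
  have hp' : q⁻¹ ≤ 1 := inv_le_one_of_one_le₀ hq.le
  have h_mid := h.abs_measureReal_Ioi_half_sub_one_le hq.le hq' hε hC hCω
  have h_abs := h.integral_abs_measureReal_Ioi_sub_one_le hq.le hq' hε hC hCω
  have h_mean := h.integral_measureReal_Ioi_sub_one_le hq.le hq' hε hC hCω
  have h_concave := le_integral_one_add_mul_rpow hp hp'
    (h.integrable_measureReal_Ioi (by linarith) hε hC hCω)
    (.of_forall fun t => measureReal_nonneg) (h.integrable_measureReal_uIcc hε hC hCω)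
    (ae_restrict_of_forall_mem measurableSet_Ioo fun t ht =>
      h.abs_measureReal_Ioi_sub_le (by linarith) ht.1) hε.le hγ.aestronglyMeasurable
    (ae_restrict_of_forall_mem measurableSet_Ioo fun t ht => hγ_mem t (Ioo_subset_Icc_self ht))
  have h_energy := h.two_mul_integral_tilt_le hq.le hq' hc.le hε
    (by linarith [h.two_mul_le_energy hq hc hε hω]) hω hC hCω hγ hγ_mem hγω
  set I := ∫ t in Ioo 0 1, ν.real (uIcc (1 / 2) t)
  have hI : 0 ≤ I := integral_nonneg fun t => measureReal_nonneg
  have h_sq := pow_le_pow_left₀ (abs_nonneg _) h_mid 2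
  have h_mean' : q⁻¹ * ((∫ t in Ioo 0 1, ν.real (Ioi t)) - 1) ≤ 3 * I :=
    (mul_le_mul_of_nonneg_left h_mean hp.le).trans (mul_le_of_le_one_left (by positivity) hp')
  have h_εB : 0 ≤ ε * B * c := by positivity
  rw [div_eq_mul_inv] at h_energy
  linarith [mul_le_mul_of_nonneg_left h_concave (by linarith : 0 ≤ 2 * c),
    mul_le_mul_of_nonneg_left h_sq hc.le, mul_le_mul_of_nonneg_left h_abs h_εB,
    mul_le_mul_of_nonneg_left h_mean' h_εB]

theorem exists_le_energy (hq : 1 < q) (hq' : q ≤ 2) (hc : 0 < c) (hω : Measurable ω) (hC : 0 ≤ C)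
    (hCω : ∀ y ∈ Icc (0 : ℝ) 1, y * (1 - y) ≤ C * ω y) (hγ : Measurable γ)
    (hγ_mem : ∀ y ∈ Icc (0 : ℝ) 1, γ y ∈ Icc 0 B)
    (hγω : ∀ y ∈ Icc (0 : ℝ) 1, γ y * ω y ≤ c / q * (y - y ^ q)) :
    ∃ K, ∀ ε, 0 < ε → ε ≤ 1 → ∀ E (ν : Measure ℝ), SFinite ν → LevelEnergyBound ω q c ε E ν →
      2 * c * (1 + ε * ∫ t in Ioo 0 1, γ t) - K * ε ^ 2 ≤ E := by
  set G := ∫ t in Ioo 0 1, γ t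
  have hB : 0 ≤ B := (hγ_mem 0 ⟨le_rfl, zero_le_one⟩).1.trans (hγ_mem 0 ⟨le_rfl, zero_le_one⟩).2
  have hG : 0 ≤ G := setIntegral_nonneg measurableSet_Ioo fun t ht =>
    (hγ_mem t (Ioo_subset_Icc_self ht)).1
  set E₀ := 2 * c * (1 + G)
  refine ⟨64 * c * C * (2 * c * G + 48 * c * C * E₀) + 32 * c * (4 * C * E₀) ^ 2
    + 36 * c * B * C * E₀, fun ε hε hε' E ν _ h => ?_⟩
  rcases le_total (2 * c * (1 + ε * G)) E with h_large | h_small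
  · exact (sub_le_self _ (by positivity)).trans h_large
  have hE := h.two_mul_le_energy hq hc hε hω
  have hEE₀ : E ≤ E₀ := h_small.trans <| mul_le_mul_of_nonneg_left
    (add_le_add_right (mul_le_of_le_one_left hG hε') 1) (by positivity)
  have hI : ∫ t in Ioo 0 1, ν.real (uIcc (1 / 2) t) ≤ 4 * C * E₀ * ε :=
    (h.integral_measureReal_uIcc_le (by linarith) hε (by linarith) hC hCω).trans
      (by rw [mul_comm ε, ← mul_assoc]; gcongr)
  have hQ : ∫ t in Ioo 0 1, ν.real (uIcc (1 / 2) t) * min 1 (ν.real (uIcc (1 / 2) t))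
      ≤ 8 * C * (2 * c * G + 48 * c * C * E₀) * ε ^ 2 := by
    calc _ ≤ 8 * C * (ε * (E - 2 * c + 48 * c * C * (ε * E))) :=
          h.integral_measureReal_uIcc_mul_min_le hq hq' hc.le hε hE hω hC hCω
      _ ≤ 8 * C * (ε * (2 * c * G * ε + 48 * c * C * (ε * E₀))) := by
          gcongr
          linarith
      _ = _ := by ring
  have hI_sq := pow_le_pow_left₀ (integral_nonneg fun t => measureReal_nonneg) hI 2
  have h_cBε : 0 ≤ c * B * ε := by positivity
  linarith [h.two_mul_one_add_sub_le hq hq' hc hε hω hC hCω hγ hγ_mem hγω,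
    mul_le_mul_of_nonneg_left hQ hc.le, mul_le_mul_of_nonneg_left hI_sq hc.le,
    mul_le_mul_of_nonneg_left hI h_cBε]

end LevelEnergyBound

end TiltedEnergy

/-! ### The potential in the rescaled variable -/

section RescaledWell

/-- The inverse of `wellCdf W` on `[0, 1]`, written as a supremum so that it is monotone on `ℝ`. -/
def wellQuantile (W : ℝ → ℝ) (y : ℝ) : ℝ := sSup {t ∈ Icc (0 : ℝ) 1 | wellCdf W t ≤ y}

/-- The potential as a function of `y = wellCdf W t`. -/
def rescaledWell (W : ℝ → ℝ) (y : ℝ) : ℝ := wellDensity W (wellQuantile W y) ^ 2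

/-- The slope correction whose integral over `(0, 1)` is the curvature coefficient. It vanishes at
the wells, where the denominator does. -/
def slopeCorrection (W : ℝ → ℝ) (q y : ℝ) : ℝ := (y - y ^ q) / rescaledWell W y

variable {W η : ℝ → ℝ} {q t y : ℝ}

lemma monotone_wellQuantile (W : ℝ → ℝ) : Monotone (wellQuantile W) := by
  intro y z hyz
  have h_bdd : BddAbove {t ∈ Icc (0 : ℝ) 1 | wellCdf W t ≤ z} := ⟨1, fun t ht => ht.1.2⟩
  rcases eq_empty_or_nonempty {t ∈ Icc (0 : ℝ) 1 | wellCdf W t ≤ y} with h | h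
  · rw [wellQuantile, h, Real.sSup_empty]
    exact Real.sSup_nonneg fun t ht => ht.1.1
  · exact csSup_le_csSup h_bdd h fun t ht => ⟨ht.1, ht.2.trans hyz⟩

lemma rescaledWell_nonneg (W : ℝ → ℝ) (y : ℝ) : 0 ≤ rescaledWell W y := sq_nonneg _

namespace QuadraticWells

lemma wellQuantile_wellCdf (hW : QuadraticWells W) (ht : t ∈ Icc (0 : ℝ) 1) :
    wellQuantile W (wellCdf W t) = t := by
  have h_set : {s ∈ Icc (0 : ℝ) 1 | wellCdf W s ≤ wellCdf W t} = Icc 0 t := by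
    ext s
    refine ⟨fun hs => ⟨hs.1.1, (hW.strictMonoOn_wellCdf.le_iff_le hs.1 ht).1 hs.2⟩, fun hs => ?_⟩
    exact ⟨⟨hs.1, hs.2.trans ht.2⟩, hW.monotone_wellCdf hs.2⟩
  rw [wellQuantile, h_set, csSup_Icc ht.1]

lemma rescaledWell_wellCdf (hW : QuadraticWells W) (ht : t ∈ Icc (0 : ℝ) 1) :
    rescaledWell W (wellCdf W t) = W t := by
  rw [rescaledWell, hW.wellQuantile_wellCdf ht, hW.sq_wellDensity ht]

lemma measurable_rescaledWell (hW : QuadraticWells W) : Measurable (rescaledWell W) :=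
  (hW.continuous_wellDensity.measurable.comp (monotone_wellQuantile W).measurable).pow_const 2

lemma exists_mul_one_sub_le_rescaledWell (hW : QuadraticWells W) :
    ∃ C > 0, ∀ y ∈ Icc (0 : ℝ) 1, y * (1 - y) ≤ C * rescaledWell W y := by
  obtain ⟨C, hC, h_le⟩ := hW.exists_wellCdf_mul_one_sub_le
  refine ⟨C, hC, fun y hy => ?_⟩
  have h_ivt := intermediate_value_Icc zero_le_one hW.continuous_wellCdf.continuousOn
  rw [wellCdf_zero, hW.wellCdf_one] at h_ivt
  obtain ⟨t, ht, rfl⟩ := h_ivt hy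
  rw [hW.rescaledWell_wellCdf ht]
  exact h_le t ht

lemma measurable_slopeCorrection (hW : QuadraticWells W) (q : ℝ) :
    Measurable (slopeCorrection W q) :=
  Measurable.div (by fun_prop) hW.measurable_rescaledWell

end QuadraticWells

lemma slopeCorrection_mem_Icc {C : ℝ} (hq : 1 ≤ q) (hq' : q ≤ 2) (hC : 0 ≤ C)
    (hy : y ∈ Icc (0 : ℝ) 1) (hCω : y * (1 - y) ≤ C * rescaledWell W y) :
    slopeCorrection W q y ∈ Icc 0 C := by
  obtain ⟨h_nonneg, h_le⟩ := sub_rpow_mem_Icc hy hq hq'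
  exact ⟨div_nonneg h_nonneg (rescaledWell_nonneg W y),
    div_le_of_le_mul₀ (rescaledWell_nonneg W y) hC (h_le.trans hCω)⟩

lemma slopeCorrection_mul_rescaledWell_le (hq : 1 ≤ q) (hq' : q ≤ 2) (hy : y ∈ Icc (0 : ℝ) 1) :
    slopeCorrection W q y * rescaledWell W y ≤ y - y ^ q := by
  rcases eq_or_ne (rescaledWell W y) 0 with h | h
  · rw [h, mul_zero]
    exact (sub_rpow_mem_Icc hy hq hq').1
  · exact (div_mul_cancel₀ _ h).le

lemma TransitionProfile.setIntegral_slopeCorrection (hη : TransitionProfile W η)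
    (hW : QuadraticWells W) (hq : 1 ≤ q) (hq' : q ≤ 2) :
    ∫ y in Ioo 0 1, slopeCorrection W q y = curvatureCoeff W η q := by
  rw [hη.setIntegral_Ioo_eq_integral_mul hW, hη.curvatureCoeff_eq_integral hW hq hq']
  congr with s
  rw [slopeCorrection, hW.rescaledWell_wellCdf (hη.mem_Icc s)]
  exact mul_div_cancel₀ _ (hW.pos (hη.mem s)).ne'

theorem TransitionProfile.exists_le_of_levelEnergyBound (hη : TransitionProfile W η)
    (hW : QuadraticWells W) {c : ℝ} (hq : 1 < q) (hq' : q ≤ 2) (hc : 0 < c) :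
    ∃ K, ∀ ε, 0 < ε → ε ≤ 1 → ∀ E (ν : Measure ℝ), SFinite ν →
      LevelEnergyBound (rescaledWell W) q c ε E ν →
        2 * c * (1 + ε * (c / q * curvatureCoeff W η q)) - K * ε ^ 2 ≤ E := by
  obtain ⟨C, hC, hCω⟩ := hW.exists_mul_one_sub_le_rescaledWell
  have h_coeff : 0 ≤ c / q := div_nonneg hc.le (by linarith)
  obtain ⟨K, hK⟩ := LevelEnergyBound.exists_le_energy (B := c / q * C) hq hq' hc
    hW.measurable_rescaledWell hC.le hCω ((hW.measurable_slopeCorrection q).const_mul (c / q))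
    (fun y hy => by
      obtain ⟨h_nonneg, h_le⟩ := slopeCorrection_mem_Icc hq.le hq' hC.le hy (hCω y hy)
      exact ⟨by positivity, by gcongr⟩)
    (fun y hy => by
      rw [mul_assoc]
      exact mul_le_mul_of_nonneg_left (slopeCorrection_mul_rescaledWell_le hq.le hq' hy) h_coeff)
  refine ⟨K, ?_⟩
  rwa [integral_const_mul, hη.setIntegral_slopeCorrection hW hq.le hq'] at hK

end RescaledWell

/-! ### The lower bound -/

section LowerBound

open Module

variable {W η : ℝ → ℝ} {n : ℕ} {u : En n → ℝ} {ε : ℝ}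

lemma isoProfile_volume_euclideanSpace (n : ℕ) (v : ℝ≥0∞) :
    isoProfile (volume : Measure (En n)) v
      = ENNReal.ofReal (isoConst n) * v ^ (conjExponent n)⁻¹ := by
  rw [isoProfile, finrank_euclideanSpace_fin, conjExponent, inv_div, isoConst,
    ENNReal.ofReal_mul n.cast_nonneg, ENNReal.ofReal_natCast,
    ← ENNReal.ofReal_rpow_of_pos (ballVol_pos n), ballVol,
    ENNReal.ofReal_toReal measure_ball_lt_top.ne]

lemma ennreal_two_mul_le_add_sq (a b : ℝ≥0∞) : 2 * (a * b) ≤ a ^ 2 + b ^ 2 := by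
  induction a with
  | top => simp
  | coe a =>
    induction b with
    | top => simp
    | coe b => rw [← mul_assoc]; exact_mod_cast two_mul_le_add_sq a b

lemma ennreal_two_mul_le_ofReal_mul_sq_add (hε : 0 < ε) (a b : ℝ≥0∞) :
    2 * (a * b) ≤ ENNReal.ofReal ε * a ^ 2 + ENNReal.ofReal ε⁻¹ * b ^ 2 := by
  have h_sqrt : 0 < √ε := Real.sqrt_pos.2 hε
  have h_mul : ENNReal.ofReal √ε * ENNReal.ofReal (√ε)⁻¹ = 1 := by
    rw [← ENNReal.ofReal_mul h_sqrt.le, mul_inv_cancel₀ h_sqrt.ne', ENNReal.ofReal_one]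
  calc 2 * (a * b) = 2 * ((ENNReal.ofReal √ε * a) * (ENNReal.ofReal (√ε)⁻¹ * b)) := by
        rw [mul_mul_mul_comm, h_mul, one_mul]
    _ ≤ (ENNReal.ofReal √ε * a) ^ 2 + (ENNReal.ofReal (√ε)⁻¹ * b) ^ 2 :=
      ennreal_two_mul_le_add_sq _ _
    _ = ENNReal.ofReal ε * a ^ 2 + ENNReal.ofReal ε⁻¹ * b ^ 2 := by
      rw [mul_pow, mul_pow, ← ENNReal.ofReal_pow h_sqrt.le, ← ENNReal.ofReal_pow (by positivity),
        inv_pow, Real.sq_sqrt hε.le]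

namespace H1Box

lemma measurable (hu : H1Box n u) : Measurable u := hu.diff.continuous.measurable

lemma integrable_sq (hu : H1Box n u) : Integrable fun x => u x ^ 2 :=
  (memLp_two_iff_integrable_sq hu.measurable.aestronglyMeasurable).1 hu.memL2

lemma integrable_sq_norm_fderiv (hu : H1Box n u) : Integrable fun x => ‖fderiv ℝ u x‖ ^ 2 :=
  (memLp_two_iff_integrable_sq (measurable_fderiv ℝ u).norm.aestronglyMeasurable).1
    hu.grad_memL2.norm

lemma integrable_comp_of_le_sq (hu : H1Box n u) {F : ℝ → ℝ} {C : ℝ}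
    (hF : AEStronglyMeasurable fun x => F (u x)) (hF_nonneg : ∀ t ∈ Icc (0 : ℝ) 1, 0 ≤ F t)
    (hF_le : ∀ t ∈ Icc (0 : ℝ) 1, F t ≤ C * t ^ 2) : Integrable fun x => F (u x) :=
  (hu.integrable_sq.const_mul C).mono' hF <| ae_of_all _ fun x => by
    rw [Real.norm_of_nonneg (hF_nonneg _ (hu.mem_Icc x))]
    exact hF_le _ (hu.mem_Icc x)

lemma integrable_comp_well (hu : H1Box n u) (hW : QuadraticWells W) :
    Integrable fun x => W (u x) := by
  obtain ⟨C, hC, h_le⟩ := hW.exists_sqrt_le_mul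
  have h_meas : Measurable fun x => wellDensity W (u x) ^ 2 :=
    (hW.continuous_wellDensity.measurable.comp hu.measurable).pow_const 2
  simp only [hW.sq_wellDensity (hu.mem_Icc _)] at h_meas
  refine hu.integrable_comp_of_le_sq h_meas.aestronglyMeasurable (fun t ht => hW.nonneg ht)
    (C := C ^ 2) fun t ht => ?_
  rw [← Real.sq_sqrt (hW.nonneg ht), ← mul_pow]
  refine pow_le_pow_left₀ (Real.sqrt_nonneg _) ((h_le t ht).trans ?_) 2
  exact mul_le_mul_of_nonneg_left (mul_le_of_le_one_right ht.1 (by linarith [ht.1])) hC.le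

lemma measurable_wellCdf_comp (hu : H1Box n u) (hW : QuadraticWells W) :
    Measurable fun x => wellCdf W (u x) :=
  hW.continuous_wellCdf.measurable.comp hu.measurable

lemma integrable_wellCdf_comp (hu : H1Box n u) (hW : QuadraticWells W) :
    Integrable fun x => wellCdf W (u x) := by
  obtain ⟨C, -, h_le⟩ := hW.exists_wellCdf_le_sq
  exact hu.integrable_comp_of_le_sq (hu.measurable_wellCdf_comp hW).aestronglyMeasurable
    (fun t ht => (hW.wellCdf_mem_Icc ht).1) fun t ht => (h_le t ht).1

lemma hasFDerivAt_wellCdf_comp (hu : H1Box n u) (hW : QuadraticWells W) (x : En n) :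
    HasFDerivAt (fun x => wellCdf W (u x)) (wellDensity W (u x) • fderiv ℝ u x) x :=
  (hW.hasDerivAt_wellCdf (u x)).comp_hasFDerivAt x (hu.diff x).hasFDerivAt

lemma ofReal_AC (hu : H1Box n u) (hW : QuadraticWells W) (hε : 0 < ε) :
    ENNReal.ofReal (AC n W ε u) = ENNReal.ofReal ε * (∫⁻ x, ‖fderiv ℝ u x‖ₑ ^ 2)
      + ENNReal.ofReal ε⁻¹ * ∫⁻ x, ENNReal.ofReal (W (u x)) := by
  have h_well_nonneg (x : En n) : 0 ≤ W (u x) := hW.nonneg (hu.mem_Icc x)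
  rw [AC, ENNReal.ofReal_add (by positivity)
      (mul_nonneg (by positivity) (integral_nonneg h_well_nonneg)),
    ENNReal.ofReal_mul hε.le, ENNReal.ofReal_mul (by positivity),
    ofReal_integral_eq_lintegral_ofReal hu.integrable_sq_norm_fderiv
      (ae_of_all _ fun x => by positivity),
    ofReal_integral_eq_lintegral_ofReal (hu.integrable_comp_well hW)
      (ae_of_all _ h_well_nonneg)]
  simp_rw [ENNReal.ofReal_pow (norm_nonneg _), ofReal_norm]

lemma two_mul_lintegral_mul_enorm_fderiv_wellCdf_comp_le (hu : H1Box n u) (hW : QuadraticWells W)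
    (hε : 0 < ε) (β : En n → ℝ≥0∞) :
    2 * (∫⁻ x, β x * ‖fderiv ℝ (fun x => wellCdf W (u x)) x‖ₑ)
      ≤ ENNReal.ofReal ε * (∫⁻ x, ‖fderiv ℝ u x‖ₑ ^ 2)
        + ENNReal.ofReal ε⁻¹ * ∫⁻ x, β x ^ 2 * ENNReal.ofReal (W (u x)) := by
  rw [← lintegral_const_mul' _ _ ENNReal.ofNat_ne_top,
    ← lintegral_const_mul' _ _ ENNReal.ofReal_ne_top,
    ← lintegral_const_mul' _ _ ENNReal.ofReal_ne_top,
    ← lintegral_add_left (((measurable_enorm_fderiv u).pow_const 2).const_mul _)]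
  refine lintegral_mono fun x => ?_
  calc 2 * (β x * ‖fderiv ℝ (fun x => wellCdf W (u x)) x‖ₑ)
    _ = 2 * (‖fderiv ℝ u x‖ₑ * (β x * ENNReal.ofReal (wellDensity W (u x)))) := by
      rw [(hu.hasFDerivAt_wellCdf_comp hW x).fderiv, enorm_smul,
        Real.enorm_of_nonneg (wellDensity_nonneg W _)]
      ring
    _ ≤ _ := ennreal_two_mul_le_ofReal_mul_sq_add hε _ _
    _ = _ := by
      rw [mul_pow, ← ENNReal.ofReal_pow (wellDensity_nonneg W _), hW.sq_wellDensity (hu.mem_Icc x)]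

lemma lintegral_enorm_fderiv_wellCdf_comp_ne_top (hu : H1Box n u) (hW : QuadraticWells W) :
    ∫⁻ x, ‖fderiv ℝ (fun x => wellCdf W (u x)) x‖ₑ ≠ ⊤ := by
  have h_le := hu.two_mul_lintegral_mul_enorm_fderiv_wellCdf_comp_le hW one_pos 1
  simp only [Pi.one_apply, one_mul, one_pow] at h_le
  rw [← hu.ofReal_AC hW one_pos] at h_le
  refine ne_top_of_le_ne_top ENNReal.ofReal_ne_top (le_trans ?_ h_le)
  exact le_mul_of_one_le_left' one_le_two

lemma lintegral_mul_measure_rpow_le (hu : H1Box n u) (hW : QuadraticWells W) (hn : 2 ≤ n)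
    {β : ℝ → ℝ≥0∞} (hβ : Measurable β) :
    ENNReal.ofReal (isoConst n)
        * (∫⁻ t in Ioo 0 1, β t * volume {x | t < wellCdf W (u x)} ^ (conjExponent n)⁻¹)
      ≤ ∫⁻ x, β (wellCdf W (u x)) * ‖fderiv ℝ (fun x => wellCdf W (u x)) x‖ₑ := by
  rw [← lintegral_const_mul' _ _ ENNReal.ofReal_ne_top]
  simp_rw [mul_left_comm _ (β _), ← isoProfile_volume_euclideanSpace]
  refine (lintegral_mono_set Ioo_subset_Ioi_self).trans ?_
  exact lintegral_mul_isoProfile_le (by rwa [finrank_euclideanSpace_fin])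
    (isPrekopaLeindler_volume_euclideanSpace n)
    (fun x => (hu.hasFDerivAt_wellCdf_comp hW x).differentiableAt)
    (hu.integrable_wellCdf_comp hW).lintegral_lt_top.ne
    (hu.lintegral_enorm_fderiv_wellCdf_comp_ne_top hW) hβ

lemma lintegral_ofReal_wellCdf_comp_rpow (hu : H1Box n u) (hW : QuadraticWells W)
    (h_vol : ∫ x, Vpot n W (u x) = 1) :
    ∫⁻ x, ENNReal.ofReal (wellCdf W (u x) ^ conjExponent n) = 1 := by
  simp_rw [Vpot_eq_wellCdf_rpow n (hu.mem_Icc _)] at h_vol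
  rw [← ofReal_integral_eq_lintegral_ofReal (Integrable.of_integral_ne_zero (by simp [h_vol]))
    (ae_of_all _ fun x => rpow_nonneg (hW.wellCdf_mem_Icc (hu.mem_Icc x)).1 _), h_vol,
    ENNReal.ofReal_one]

theorem levelEnergyBound (hu : H1Box n u) (hW : QuadraticWells W)
    (hn : 2 ≤ n) (hε : 0 < ε) (h_vol : ∫ x, Vpot n W (u x) = 1) :
    LevelEnergyBound (rescaledWell W) (conjExponent n) (isoConst n) ε (AC n W ε u)
      (volume.map fun x => wellCdf W (u x)) := by
  have h_meas := hu.measurable_wellCdf_comp hW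
  have h_well_meas := hW.measurable_rescaledWell
  refine ⟨?_, ?_, fun β hβ => ?_⟩
  · exact (ae_map_iff h_meas.aemeasurable measurableSet_Icc).2
      (ae_of_all _ fun x => hW.wellCdf_mem_Icc (hu.mem_Icc x))
  · rw [lintegral_map (by fun_prop) h_meas]
    exact hu.lintegral_ofReal_wellCdf_comp_rpow hW h_vol
  · rw [lintegral_map (by fun_prop) h_meas, lintegral_map (by fun_prop) h_meas]
    simp_rw [Measure.map_apply h_meas measurableSet_Ioi, hW.rescaledWell_wellCdf (hu.mem_Icc _)]
    have h_level := mul_le_mul_right (hu.lintegral_mul_measure_rpow_le hW hn hβ) 2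
    have h_young := hu.two_mul_lintegral_mul_enorm_fderiv_wellCdf_comp_le hW hε
      fun x => β (wellCdf W (u x))
    rw [hu.ofReal_AC hW hε, add_right_comm, ENNReal.ofReal_mul zero_le_two,
      ENNReal.ofReal_ofNat, mul_assoc]
    exact add_le_add_left (h_level.trans h_young) _

end H1Box

theorem TransitionProfile.exists_le_Psi (hη : TransitionProfile W η) (hW : QuadraticWells W)
    (hn : 2 ≤ n) :
    ∃ C, ∀ ε, 0 < ε → ε ≤ 1 → 2 * isoConst n
      * (1 + (1 - 1 / n) * isoConst n * curvatureCoeff W η (conjExponent n) * ε) - C * ε ^ 2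
      ≤ Psi n W ε 1 := by
  obtain ⟨C, h_lower⟩ := hη.exists_le_of_levelEnergyBound hW (one_lt_conjExponent hn)
    (conjExponent_le_two hn) (isoConst_pos (n := n) (by lia))
  obtain ⟨_, h_competitor⟩ := hη.exists_AC_le hW hn
  have h_inv : (conjExponent n)⁻¹ = 1 - 1 / n := by
    rw [conjExponent, inv_div, sub_div, div_self (by positivity)]
  refine ⟨C, fun ε hε hε' => le_csInf ?_ ?_⟩
  · obtain ⟨u, hu, h_vol, -⟩ := h_competitor ε hε
    exact ⟨_, u, ⟨hu, h_vol⟩, rfl⟩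
  · rintro _ ⟨u, ⟨hu, h_vol⟩, rfl⟩
    refine Eq.trans_le ?_ (h_lower ε hε hε' _ _ inferInstance
      (hu.levelEnergyBound hW hn hε h_vol))
    rw [← h_inv]
    ring

end LowerBound

lemma two_mul_isoConst_mul_one_add (n : ℕ) (κ ε : ℝ) :
    2 * isoConst n * (1 + (1 - 1 / n) * isoConst n * κ * ε)
      = 2 * n * ballVol n ^ ((1 : ℝ) / n)
        + 2 * n * (n - 1) * ballVol n ^ ((2 : ℝ) / n) * κ * ε := by
  have h_coeff : (1 - 1 / n : ℝ) * n ^ 2 = n * (n - 1) := by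
    rcases eq_or_ne (n : ℝ) 0 with hn | hn
    · simp [hn]
    · field_simp
  calc _ = 2 * isoConst n + 2 * ((1 - 1 / n) * isoConst n ^ 2) * κ * ε := by ring
    _ = _ := by rw [isoConst_sq, ← mul_assoc (1 - 1 / (n : ℝ)), h_coeff, isoConst]; ring

theorem statement11_general {n : ℕ} (hn : 2 ≤ n) {W η : ℝ → ℝ} (hW : QuadraticWells W)
    (hη : TransitionProfile W η) :
    ∃ ε₀ > (0:ℝ), ∃ C > (0:ℝ), ∀ ε : ℝ, 0 < ε → ε < ε₀ →
      |Psi n W ε 1 - 2 * (n : ℝ) * ballVol n ^ ((1 : ℝ) / (n : ℝ))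
          - 2 * (n : ℝ) * ((n : ℝ) - 1) * ballVol n ^ ((2 : ℝ) / (n : ℝ)) *
            (∫ s : ℝ, (derivWithin (Vpot n W) (Icc 0 1) (η s) * deriv η s + W (η s)) * s) * ε|
        ≤ C * ε ^ 2 := by
  obtain ⟨C, h_lower⟩ := hη.exists_le_Psi hW hn
  obtain ⟨C', h_upper⟩ := hη.exists_Psi_le hW hn
  rw [hη.integral_derivWithin_Vpot_mul_deriv_add hW hn]
  refine ⟨1, one_pos, |C| + |C'| + 1, by positivity, fun ε hε hε' => ?_⟩
  rw [sub_sub, ← two_mul_isoConst_mul_one_add, abs_sub_le_iff]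
  have h_sq : 0 ≤ ε ^ 2 := sq_nonneg ε
  have hC : C * ε ^ 2 ≤ (|C| + |C'| + 1) * ε ^ 2 :=
    mul_le_mul_of_nonneg_right (by linarith [le_abs_self C, abs_nonneg C']) h_sq
  have hC' : C' * ε ^ 2 ≤ (|C| + |C'| + 1) * ε ^ 2 :=
    mul_le_mul_of_nonneg_right (by linarith [le_abs_self C', abs_nonneg C]) h_sq
  constructor
  · linarith [h_upper ε hε]
  · linarith [h_lower ε hε hε'.le]

theorem statement11 (n : ℕ) (hn : 2 ≤ n) (W : ℝ → ℝ) (hW : DoubleWell W)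
    (η : ℝ → ℝ) (hη : TransitionProfile W η) :
    ∃ ε₀ > (0:ℝ), ∃ C > (0:ℝ), ∀ ε : ℝ, 0 < ε → ε < ε₀ →
      |Psi n W ε 1 - 2 * (n : ℝ) * ballVol n ^ ((1 : ℝ) / (n : ℝ))
          - 2 * (n : ℝ) * ((n : ℝ) - 1) * ballVol n ^ ((2 : ℝ) / (n : ℝ)) *
            (∫ s : ℝ, (derivWithin (Vpot n W) (Icc 0 1) (η s) * deriv η s + W (η s)) * s) * ε|
        ≤ C * ε ^ 2 := by
  exact statement11_general hn (hW.quadraticWells hη) hη
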